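/- arXiv:2103.08027 — 4 statements merged into one kernel-verified Lean document; each statement's English description precedes it below -/
import Mathlib

section
/- Other generalized Faulhaber formula version: Let m ∈ ℂ with m ≠ −1, let x ∈ ℝ with x > 0, and let a ∈ ℕ₀. Then the series ∑_{k=1}^{∞} (−1)^k (∑_{l=1}^{k} C(m+1, l+a) S_k^{(1)}(l+a) B_{l+a}({x})) / ((x+1)(x+2)⋯(x+k)) converges absolutely, and ∑_{k=1}^{⌊x⌋} k^m = x^{m+1}/(m+1) + ζ(−m) + (1/(m+1)) ∑_{k=1}^{a} (−1)^k C(m+1, k) B_k({x}) x^{m−k+1} + (x^{m+1}/(m+1)) ∑_{k=1}^{∞} (−1)^k (∑_{l=1}^{k} C(m+1, l+a) S_k^{(1)}(l+a) B_{l+a}({x})) / ((x+1)(x+2)⋯(x+k)). -/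
open Finset in
/-- Unsigned Stirling numbers of the first kind, via the rising-factorial recurrence:
`z(z+1)⋯(z+k−1) = ∑ l, stirling1Unsigned k l * z^l`. -/
def stirling1Unsigned : ℕ → ℕ → ℕ
  | 0, 0 => 1
  | 0, _ + 1 => 0
  | k + 1, 0 => k * stirling1Unsigned k 0
  | k + 1, l + 1 => stirling1Unsigned k l + k * stirling1Unsigned k (l + 1)

/-- The Stirling numbers of the first kind `S_k^{(1)}(l)` of the paper, defined by
`z(z+1)⋯(z+k−1) = (−1)^k ∑_{l=0}^k (−1)^l S_k^{(1)}(l) z^l`, i.e.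
`S_k^{(1)}(l) = (−1)^{k−l}` times the coefficient of `z^l` in the rising factorial. -/
def S1 (k l : ℕ) : ℤ := (-1) ^ (k + l) * stirling1Unsigned k l

/-- The `n`-th Bernoulli polynomial `B_n(x) = ∑_{k=0}^n C(n,k) B_k x^{n−k}`,
with `B_1 = −1/2`. -/
noncomputable def bernPoly (n : ℕ) (x : ℝ) : ℝ :=
  ∑ k ∈ Finset.range (n + 1), (n.choose k : ℝ) * (bernoulli k : ℝ) * x ^ (n - k)

/-- The generalized binomial coefficient `C(w,k) = w(w−1)⋯(w−k+1)/k!`. -/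
noncomputable def cchoose (w : ℂ) (k : ℕ) : ℂ :=
  (∏ i ∈ Finset.range k, (w - i)) / (k.factorial : ℂ)

/-- The rising product `(z+1)(z+2)⋯(z+k)`. -/
noncomputable def risingProd (z : ℂ) (k : ℕ) : ℂ :=
  ∏ i ∈ Finset.range k, (z + i + 1)

/-- The rising product `(x+1)(x+2)⋯(x+k)` over the reals. -/
noncomputable def risingProdR (x : ℝ) (k : ℕ) : ℝ :=
  ∏ i ∈ Finset.range k, (x + i + 1)

/-- The digamma function `ψ(z) = Γ′(z)/Γ(z)`. -/
noncomputable def digamma (z : ℂ) : ℂ := deriv Complex.Gamma z / Complex.Gamma z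

section
open Finset Filter Topology

namespace GF

lemma c_eq_zero : ∀ (k j : ℕ), k < j → stirling1Unsigned k j = 0
  | 0, 0, h => by omega
  | 0, j + 1, _ => by simp [stirling1Unsigned]
  | k + 1, 0, h => by omega
  | k + 1, j + 1, h => by
      simp [stirling1Unsigned, c_eq_zero k j (by omega), c_eq_zero k (j + 1) (by omega)]

lemma c_succ_zero (k : ℕ) : stirling1Unsigned (k + 1) 0 = 0 := by
  induction k with
  | zero => simp [stirling1Unsigned]
  | succ n ih => rw [stirling1Unsigned, ih, mul_zero]

lemma k_mul_c_zero (k : ℕ) : k * stirling1Unsigned k 0 = 0 := by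
  cases k with
  | zero => simp
  | succ n => rw [c_succ_zero, mul_zero]

lemma c_succ_one (k : ℕ) : stirling1Unsigned (k + 1) 1 = k.factorial := by
  induction k with
  | zero => simp [stirling1Unsigned]
  | succ n ih =>
    rw [stirling1Unsigned, ih, c_succ_zero, zero_add, Nat.factorial_succ]

/-- truncated rising factorial -/
noncomputable def R (J k : ℕ) (y : ℂ) : ℂ :=
  ∑ j ∈ Ico J (k + 1), (stirling1Unsigned k j : ℂ) * y ^ j

lemma R_eq (J k M : ℕ) (hM : k + 1 ≤ M) (y : ℂ) :
    R J k y = ∑ j ∈ Ico J M, (stirling1Unsigned k j : ℂ) * y ^ j := by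
  unfold R
  apply Finset.sum_subset
  · exact Finset.Ico_subset_Ico_right hM
  · intro j hj hj'
    simp only [mem_Ico] at hj hj'
    rw [c_eq_zero k j (by omega)]; simp

lemma R_succ (J k : ℕ) (y : ℂ) :
    R (J + 1) (k + 1) y = y * R J k y + k * R (J + 1) k y := by
  rw [R_eq (J + 1) k (k + 2) (by omega), R_eq J k (k + 1) (by omega)]
  unfold R
  rw [← Finset.sum_Ico_add' _ J (k + 1) 1, ← Finset.sum_Ico_add' _ J (k + 1) 1, mul_sum, mul_sum,
    ← sum_add_distrib]
  apply Finset.sum_congr rfl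
  intro j _
  rw [stirling1Unsigned]; push_cast; ring

lemma R_one_eq (k : ℕ) (y : ℂ) : R 0 k y = stirling1Unsigned k 0 + R 1 k y := by
  unfold R
  rw [Finset.sum_eq_sum_Ico_succ_bot (by omega)]
  simp

lemma R_zero (k : ℕ) (y : ℂ) : R 0 k y = ∏ i ∈ range k, (y + i) := by
  induction k with
  | zero => simp [R, stirling1Unsigned]
  | succ n ih =>
    rw [prod_range_succ, ← ih, R_one_eq, R_succ, c_succ_zero, R_one_eq n y]
    have := k_mul_c_zero n
    have h : (n : ℂ) * stirling1Unsigned n 0 = 0 := by exact_mod_cast this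
    push_cast
    linear_combination -h

lemma prod_bound (β : ℝ) (k : ℕ) :
    ∏ i ∈ range k, (1 + β ^ 2 / ((i : ℝ) + 1) ^ 2) ≤ Real.exp (Real.pi * |β|) := by
  rcases eq_or_ne β 0 with rfl | hβ
  · simp
  have hpi := Real.pi_pos
  have hb : 0 < |β| := abs_pos.mpr hβ
  have h1 := Complex.tendsto_euler_sin_prod (Complex.I * |β|)
  have h2 := h1.norm
  have hmono : Monotone (fun n : ℕ => Real.pi * |β| * ∏ i ∈ range n, (1 + β ^ 2 / ((i : ℝ) + 1) ^ 2)) := by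
    apply monotone_nat_of_le_succ
    intro n
    rw [prod_range_succ]
    have : 0 ≤ ∏ i ∈ range n, (1 + β ^ 2 / ((i : ℝ) + 1) ^ 2) := prod_nonneg fun i _ => by positivity
    have h3 : (1:ℝ) ≤ 1 + β ^ 2 / ((n : ℝ) + 1) ^ 2 := by
      have : 0 ≤ β ^ 2 / ((n : ℝ) + 1) ^ 2 := by positivity
      linarith
    have := le_mul_of_one_le_right this h3
    gcongr
  have h4 : Tendsto (fun n : ℕ => Real.pi * |β| * ∏ i ∈ range n, (1 + β ^ 2 / ((i : ℝ) + 1) ^ 2)) atTop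
      (𝓝 (Real.sinh (Real.pi * |β|))) := by
    convert h2 using 1
    · ext n
      have : (Real.pi * (Complex.I * |β|) * ∏ j ∈ range n, ((1 : ℂ) - (Complex.I * |β|) ^ 2 / ((j : ℂ) + 1) ^ 2))
        = Complex.I * ((Real.pi * |β| * ∏ i ∈ range n, (1 + β ^ 2 / ((i : ℝ) + 1) ^ 2) : ℝ) : ℂ) := by
        push_cast
        have : ∀ j : ℕ, ((1 : ℂ) - (Complex.I * |β|) ^ 2 / ((j : ℂ) + 1) ^ 2) = 1 + (β:ℂ) ^ 2 / ((j : ℂ) + 1) ^ 2 := by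
          intro j
          rw [mul_pow, Complex.I_sq, ← Complex.ofReal_pow, sq_abs]; push_cast; ring
        simp_rw [this]
        ring
      have hp : 0 ≤ ∏ i ∈ range n, (1 + β ^ 2 / ((i : ℝ) + 1) ^ 2) := prod_nonneg fun i _ => by positivity
      rw [this, norm_mul, Complex.norm_I, one_mul, Complex.norm_real, Real.norm_of_nonneg (by positivity)]
    · congr 1
      have : (Real.pi * (Complex.I * |β|) : ℂ) = ((Real.pi * |β| : ℝ) : ℂ) * Complex.I := by push_cast; ring
      rw [this, Complex.sin_mul_I, norm_mul, Complex.norm_I, mul_one, ← Complex.ofReal_sinh, Complex.norm_real,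
        Real.norm_of_nonneg (Real.sinh_nonneg_iff.mpr (by positivity))]
  have h5 := hmono.ge_of_tendsto h4 k
  have h6 : Real.sinh (Real.pi * |β|) ≤ Real.pi * |β| * Real.exp (Real.pi * |β|) := by
    set u := Real.pi * |β| with hu
    have hu0 : 0 < u := by positivity
    rw [Real.sinh_eq]
    have h7 : 1 - 2 * u ≤ Real.exp (-(2*u)) := by
      have := Real.add_one_le_exp (-(2*u)); linarith
    have h8 : Real.exp (-u) = Real.exp u * Real.exp (-(2*u)) := by
      rw [← Real.exp_add]; ring_nf
    have := Real.exp_pos u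
    rw [h8]
    nlinarith
  exact le_of_mul_le_mul_left (h5.trans h6) (by positivity)

lemma R_bound (J k : ℕ) (hJ : 1 ≤ J) (β : ℝ) :
    ‖R J k (β * Complex.I)‖ ≤ |β| ^ J * stirling1Unsigned k J * Real.exp (Real.pi * |β| / 2) := by
  induction k generalizing J with
  | zero =>
    rw [R, Finset.Ico_eq_empty (by omega)]; simp; positivity
  | succ k ih =>
    obtain ⟨J, rfl⟩ : ∃ J', J = J' + 1 := ⟨J - 1, by omega⟩
    rcases Nat.eq_zero_or_pos J with rfl | hJ'
    · have h1 : R (0+1) (k+1) (β * Complex.I) = ∏ i ∈ range (k+1), ((β * Complex.I : ℂ) + i) := by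
        rw [← R_zero, R_one_eq (k+1), c_succ_zero]; simp
      rw [h1, prod_range_succ', norm_mul, norm_prod, c_succ_one]
      have h2 : ∏ i ∈ range k, ‖(β * Complex.I : ℂ) + (i + 1 : ℕ)‖ ≤ k.factorial * Real.exp (Real.pi * |β| / 2) := by
        have h3 : ∀ i : ℕ, ‖(β * Complex.I : ℂ) + (i + 1 : ℕ)‖ ^ 2 = ((i:ℝ)+1)^2 * (1 + β ^ 2 / ((i : ℝ) + 1) ^ 2) := by
          intro i
          rw [← Complex.normSq_eq_norm_sq, Complex.normSq_apply]
          have : (i:ℝ)+1 ≠ 0 := by positivity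
          simp
          field_simp
        apply le_of_sq_le_sq _ (by positivity)
        rw [← prod_pow, prod_congr rfl (fun i _ => h3 i), prod_mul_distrib, prod_pow]
        have h4 : ∏ i ∈ range k, ((i:ℝ)+1) = k.factorial := by
          rw [← prod_range_add_one_eq_factorial]; push_cast; rfl
        rw [h4, mul_pow, ← Real.exp_nat_mul]
        have := prod_bound β k
        have h5 : ((2:ℕ):ℝ) * (Real.pi * |β| / 2) = Real.pi * |β| := by push_cast; ring
        rw [h5]
        gcongr
      have : ‖(β * Complex.I : ℂ) + (0:ℕ)‖ = |β| := by simp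
      rw [this]
      calc _ ≤ (k.factorial * Real.exp (Real.pi * |β| / 2)) * |β| := by gcongr
        _ = _ := by ring
    · rw [R_succ, stirling1Unsigned]
      have a1 := ih J hJ'
      have a2 := ih (J + 1) (by omega)
      calc _ ≤ ‖(β * Complex.I : ℂ) * R J k (β * Complex.I)‖ + ‖(k:ℂ) * R (J+1) k (β * Complex.I)‖ := norm_add_le _ _
        _ = |β| * ‖R J k (β * Complex.I)‖ + k * ‖R (J+1) k (β * Complex.I)‖ := by simp
        _ ≤ |β| * (|β| ^ J * stirling1Unsigned k J * Real.exp (Real.pi * |β| / 2)) + k * (|β| ^ (J+1) * stirling1Unsigned k (J+1) * Real.exp (Real.pi * |β| / 2)) := by gcongr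
        _ = _ := by push_cast; ring

/-- telescoping lemma -/
lemma telescope {x : ℝ} (hx : 0 < x) (A B : ℕ → ℂ) (b : ℂ) (hA : Summable A)
    (hB : HasSum B b) (hrel : ∀ k : ℕ, ((x : ℂ) + k + 1) * A (k + 1) = B k + k * A k) :
    HasSum (fun k => A (k + 1)) (b / x) := by
  have hx0 : (x : ℂ) ≠ 0 := by exact_mod_cast hx.ne'
  have hA' : Summable (fun k => A (k + 1)) := (summable_nat_add_iff 1).mpr hA
  obtain ⟨s, hs⟩ := hA'
  have hps : ∀ K : ℕ, (K : ℂ) * A K = ∑ k ∈ range K, B k - x * ∑ k ∈ range K, A (k + 1) := by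
    intro K
    induction K with
    | zero => simp
    | succ K ih =>
      rw [sum_range_succ, sum_range_succ]
      push_cast
      linear_combination ih + hrel K
  have hlim : Tendsto (fun K : ℕ => (K : ℂ) * A K) atTop (𝓝 (b - x * s)) := by
    simp_rw [hps]
    exact hB.tendsto_sum_nat.sub (hs.tendsto_sum_nat.const_mul _)
  have hz : b - x * s = 0 := by
    by_contra hne
    have hpos : 0 < ‖b - x * s‖ := norm_pos_iff.mpr hne
    have hev := hlim.norm.eventually_const_lt (half_lt_self hpos)
    have hnot := Real.not_summable_one_div_natCast
    apply hnot
    have : Summable (fun n : ℕ => (2 / ‖b - x * s‖) * ‖A n‖) := hA.norm.mul_left _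
    apply this.of_norm_bounded_eventually_nat
    filter_upwards [hev, eventually_gt_atTop 0] with n hn hn0
    have hn0' : (0:ℝ) < n := by exact_mod_cast hn0
    rw [norm_mul, Complex.norm_natCast] at hn
    rw [Real.norm_eq_abs, abs_of_nonneg (by positivity), div_mul_eq_mul_div, div_le_div_iff₀ hn0' hpos]
    nlinarith
  have : s = b / x := by
    rw [eq_div_iff hx0]; linear_combination -hz
  rwa [this] at hs

lemma risingProd_succ (z : ℂ) (k : ℕ) : risingProd z (k + 1) = (z + k + 1) * risingProd z k := by
  unfold risingProd; rw [prod_range_succ, mul_comm]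

lemma risingProd_ofReal (x : ℝ) (k : ℕ) : risingProd (x : ℂ) k = (risingProdR x k : ℂ) := by
  unfold risingProd risingProdR; push_cast; rfl

lemma risingProdR_pos {x : ℝ} (hx : 0 < x) (k : ℕ) : 0 < risingProdR x k :=
  prod_pos fun i _ => by positivity

lemma risingProdR_succ (x : ℝ) (k : ℕ) : risingProdR x (k + 1) = (x + k + 1) * risingProdR x k := by
  unfold risingProdR; rw [prod_range_succ, mul_comm]

lemma risingProd_ne {x : ℝ} (hx : 0 < x) (k : ℕ) : risingProd (x : ℂ) k ≠ 0 := by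
  rw [risingProd_ofReal]; exact_mod_cast (risingProdR_pos hx k).ne'

lemma c_summable {x : ℝ} (hx : 0 < x) (j : ℕ) :
    Summable (fun k => (stirling1Unsigned k j : ℝ) / risingProdR x k) := by
  have hQ := risingProdR_pos hx
  induction j with
  | zero =>
    apply summable_of_ne_finset_zero (s := {0})
    intro k hk
    obtain ⟨n, rfl⟩ : ∃ n, k = n + 1 := ⟨k - 1, by simp at hk; omega⟩
    rw [c_succ_zero]; simp
  | succ j ih =>
    rw [← summable_nat_add_iff 1]
    have hrel : ∀ k : ℕ, x * ((stirling1Unsigned (k+1) (j+1) : ℝ) / risingProdR x (k+1)) =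
        (stirling1Unsigned k j : ℝ) / risingProdR x k + k * ((stirling1Unsigned k (j+1) : ℝ) / risingProdR x k)
          - (k + 1) * ((stirling1Unsigned (k+1) (j+1) : ℝ) / risingProdR x (k+1)) := by
      intro k
      rw [risingProdR_succ, stirling1Unsigned]
      have := hQ k
      have : x + k + 1 ≠ 0 := by positivity
      push_cast
      field_simp
      ring
    have hps : ∀ K : ℕ, x * ∑ k ∈ range K, ((stirling1Unsigned (k+1) (j+1) : ℝ) / risingProdR x (k+1)) =
        ∑ k ∈ range K, (stirling1Unsigned k j : ℝ) / risingProdR x k - K * ((stirling1Unsigned K (j+1) : ℝ) / risingProdR x K) := by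
      intro K
      induction K with
      | zero => simp
      | succ K ih' =>
        rw [sum_range_succ, sum_range_succ, mul_add, ih', hrel K]; push_cast; ring
    apply summable_of_sum_range_le (c := (∑' k, (stirling1Unsigned k j : ℝ) / risingProdR x k) / x)
    · intro n; have := hQ (n+1); positivity
    · intro n
      rw [le_div_iff₀ hx, mul_comm, hps]
      have h1 := ih.sum_le_tsum (range n) (fun i _ => by have := hQ i; positivity)
      have h2 : 0 ≤ n * ((stirling1Unsigned n (j+1) : ℝ) / risingProdR x n) := by
        have := hQ n; positivity
      linarith

lemma c_hasSum {x : ℝ} (hx : 0 < x) (j : ℕ) :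
    HasSum (fun k => (stirling1Unsigned k j : ℂ) / risingProd (x : ℂ) k) (1 / (x : ℂ) ^ j) := by
  have hx0 : (x : ℂ) ≠ 0 := by exact_mod_cast hx.ne'
  induction j with
  | zero =>
    have := hasSum_ite_eq (0:ℕ) (1:ℂ)
    convert this using 1
    · ext k
      rcases k with _ | k
      · simp [stirling1Unsigned, risingProd]
      · rw [c_succ_zero]; simp
    · simp
  | succ j ih =>
    have hsum : Summable (fun k => (stirling1Unsigned k (j+1) : ℂ) / risingProd (x : ℂ) k) := by
      have := Complex.ofRealCLM.summable (c_summable hx (j+1))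
      refine this.congr fun k => ?_
      rw [risingProd_ofReal]; simp
    have := telescope hx _ _ _ hsum ih (by
      intro k
      rw [risingProd_succ, stirling1Unsigned]
      have h1 := risingProd_ne hx k
      have h2 : (x:ℂ) + k + 1 ≠ 0 := by
        have : x + k + 1 ≠ 0 := by positivity
        exact_mod_cast this
      push_cast
      field_simp)
    refine (hasSum_nat_add_iff' (f := fun k => (stirling1Unsigned k (j+1) : ℂ) / risingProd (x : ℂ) k) 1).mp ?_
    convert this using 1
    · rfl
    · simp [stirling1Unsigned]; field_simp; ring

lemma R_summable {x : ℝ} (hx : 0 < x) (J : ℕ) (hJ : 1 ≤ J) (β : ℝ) :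
    Summable (fun k => R J k (β * Complex.I) / risingProd (x : ℂ) k) := by
  have := (c_summable hx J).mul_left (|β| ^ J * Real.exp (Real.pi * |β| / 2))
  apply this.of_norm_bounded
  intro k
  rw [norm_div, risingProd_ofReal, Complex.norm_real, Real.norm_eq_abs, abs_of_pos (risingProdR_pos hx k), ← mul_div_assoc]
  have := R_bound J k hJ β
  have h1 := risingProdR_pos hx k
  rw [div_le_div_iff_of_pos_right h1]
  linarith

lemma R2_hasSum {x : ℝ} (hx : 0 < x) (β : ℝ) :
    HasSum (fun k => R 2 k (β * Complex.I) / risingProd (x : ℂ) k)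
      ((β * Complex.I) ^ 2 / (x * (x - β * Complex.I))) := by
  have hx0 : (x : ℂ) ≠ 0 := by exact_mod_cast hx.ne'
  have hxb : (x : ℂ) - β * Complex.I ≠ 0 := by
    intro h
    have := congrArg Complex.re h
    simp at this
    exact hx.ne' this
  set y : ℂ := β * Complex.I with hy
  have hrelg : ∀ J k : ℕ, ((x : ℂ) + k + 1) * (R (J+1) (k+1) y / risingProd (x : ℂ) (k+1)) =
      y * (R J k y / risingProd (x : ℂ) k) + k * (R (J+1) k y / risingProd (x : ℂ) k) := by
    intro J k
    rw [risingProd_succ, R_succ]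
    have h1 := risingProd_ne hx k
    have h2 : (x:ℂ) + k + 1 ≠ 0 := by
      have : x + k + 1 ≠ 0 := by positivity
      exact_mod_cast this
    field_simp
  have hR0 : ∀ J, R (J + 1) 0 y = 0 := by
    intro J; rw [R, Finset.Ico_eq_empty (by omega)]; simp
  -- J = 1
  have hs1 := R_summable hx 1 le_rfl β
  obtain ⟨s1, hs1'⟩ := hs1
  have hs0 : HasSum (fun k => R 0 k y / risingProd (x : ℂ) k) (1 + s1) := by
    have := (c_hasSum hx 0).add hs1'
    convert this using 1
    · ext k; rw [R_one_eq]; ring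
    · simp
  have t1 := telescope hx _ _ _ hs1'.summable (hs0.mul_left y) (hrelg 0)
  have t1' := (hasSum_nat_add_iff' (f := fun k => R 1 k y / risingProd (x : ℂ) k) 1).mpr hs1'
  simp only [sum_range_one, hR0 0, zero_div, sub_zero] at t1'
  have e1 : y * (1 + s1) / x = s1 := t1.unique t1'
  have e1' : s1 = y / (x - y) := by
    rw [eq_div_iff hxb]
    field_simp at e1
    linear_combination -e1
  have t2 := telescope hx _ _ _ (R_summable hx 2 one_le_two β) (hs1'.mul_left y) (hrelg 1)
  refine (hasSum_nat_add_iff' (f := fun k => R 2 k y / risingProd (x : ℂ) k) 1).mp ?_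
  simp only [sum_range_one, hR0 1, zero_div, sub_zero]
  rw [e1'] at t2
  convert t2 using 1
  · rfl
  · field_simp

end GF
end

section
open Finset Filter Topology

namespace GF

lemma bernPoly_eq (n : ℕ) (x : ℝ) : bernPoly n x = bernoulliFun n x := by
  unfold bernPoly bernoulliFun
  rw [Polynomial.bernoulli, Polynomial.map_sum, Polynomial.eval_finsetSum]
  apply Finset.sum_congr rfl
  intro k _
  rw [Polynomial.map_monomial, Polynomial.eval_monomial]
  simp only [map_mul, eq_ratCast, map_natCast]
  push_cast
  ring

/-- `1/(2πin) = be n * I`. -/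
noncomputable def be (n : ℤ) : ℝ := -1 / (2 * Real.pi * n)

lemma be_I (n : ℤ) : ((be n : ℝ) : ℂ) * Complex.I = 1 / (2 * Real.pi * Complex.I * n) := by
  rcases eq_or_ne n 0 with rfl | hn
  · simp [be]
  have : (n : ℂ) ≠ 0 := by exact_mod_cast hn
  have hp : (Real.pi : ℂ) ≠ 0 := by exact_mod_cast Real.pi_ne_zero
  have hI := Complex.I_ne_zero
  unfold be; push_cast
  field_simp
  simp

lemma bern_fourier {j : ℕ} (hj : 2 ≤ j) {θ : ℝ} (hθ : θ ∈ Set.Icc (0:ℝ) 1) :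
    HasSum (fun n : ℤ => fourier n (θ : UnitAddCircle) * (be n * Complex.I) ^ j)
      (-(bernPoly j θ : ℂ) / (j.factorial : ℂ)) := by
  have h := (hasSum_one_div_pow_mul_fourier_mul_bernoulliFun hj hθ).mul_left (1 / (2 * Real.pi * Complex.I) ^ j)
  have h2 := Complex.two_pi_I_ne_zero
  convert! h using 1
  · ext n
    rw [be_I, div_pow, mul_pow _ (n:ℂ)]
    simp only [one_pow]
    rw [← one_div_mul_one_div]; ring
  · rw [bernPoly_eq]
    field_simp

lemma summable_be {J : ℕ} (hJ : 2 ≤ J) : Summable (fun n : ℤ => |be n| ^ J) := by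
  have h := (Real.summable_abs_int_rpow (b := (J:ℝ)) (by exact_mod_cast hJ)).mul_left ((1 / (2 * Real.pi)) ^ J)
  refine h.congr fun n => ?_
  unfold be
  rw [Real.rpow_neg (abs_nonneg _), Real.rpow_natCast, abs_div, abs_mul, abs_of_pos (by positivity : 0 < 2 * Real.pi)]
  simp only [abs_neg, abs_one, div_pow, mul_pow, one_pow]
  rw [← one_div, one_div_mul_one_div]

lemma abs_be_le (n : ℤ) : |be n| ≤ 1 / (2 * Real.pi) := by
  unfold be
  have hp := Real.pi_pos
  rcases eq_or_ne n 0 with rfl | hn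
  · simp; positivity
  rw [abs_div, abs_mul, abs_of_pos (by positivity : 0 < 2 * Real.pi), abs_neg, abs_one]
  have : (1:ℝ) ≤ |(n:ℝ)| := by exact_mod_cast Int.one_le_abs hn
  apply one_div_le_one_div_of_le (by positivity)
  nlinarith

lemma one_sub_ne (b l : ℝ) : (1:ℂ) - b * Complex.I * l ≠ 0 := by
  intro h
  have := congrArg Complex.re h
  simp at this

lemma exp_fourier {l : ℝ} (hl : 0 < l) {θ : ℝ} (hθ : θ ∈ Set.Ico (0:ℝ) 1) :
    HasSum (fun n : ℤ => fourier n (θ : UnitAddCircle) *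
        ((be n * Complex.I) ^ 2 * (l:ℂ) ^ 2 / (1 - be n * Complex.I * l)))
      (-((l * Real.exp (l * θ) / (Real.exp l - 1) - 1 - l * (θ - 1 / 2) : ℝ) : ℂ)) := by
  have he : 0 < Real.exp l - 1 := by have := Real.add_one_lt_exp hl.ne'; linarith
  set g : ℝ → ℝ := fun t => l * Real.exp (l * t) / (Real.exp l - 1) - 1 - l * (t - 1 / 2) with hg
  set f : ℝ → ℂ := fun t => (g t : ℂ) with hf
  have hder : ∀ t, HasDerivAt g (l * g t + l ^ 2 * bernoulliFun 1 t) t := by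
    intro t
    have h1 : HasDerivAt (fun t : ℝ => l * t) l t := by simpa using (hasDerivAt_id t).const_mul l
    have h2 := ((h1.exp.const_mul l).div_const (Real.exp l - 1)).sub_const 1
    have h3 := ((hasDerivAt_id t).sub_const (1/2)).const_mul l
    have h4 := h2.sub h3
    convert! h4 using 1
    rw [bernoulliFun_one]
    simp only [hg]
    ring
  have hderC : ∀ t, HasDerivAt f (l * f t + l ^ 2 * (bernoulliFun 1 t : ℂ)) t := by
    intro t
    have := (hder t).ofReal_comp
    convert! this using 1
    push_cast; rfl
  have hgc : Continuous g := by
    rw [continuous_iff_continuousAt]; exact fun t => (hder t).continuousAt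
  have hfc : Continuous f := Complex.continuous_ofReal.comp hgc
  have hBc : Continuous (fun t => (bernoulliFun 1 t : ℂ)) := by
    apply Complex.continuous_ofReal.comp
    have : bernoulliFun 1 = fun t => t - 1/2 := by ext t; exact bernoulliFun_one t
    rw [this]; fun_prop
  have h01 : g 1 = g 0 := by
    simp only [hg]; simp; field_simp; ring
  have hlC : (l : ℂ) ≠ 0 := by exact_mod_cast hl.ne'
  have hB1 : ∀ n, fourierCoeffOn zero_lt_one (fun x => (bernoulliFun 1 x : ℂ)) n = -(be n * Complex.I) := by
    intro n
    have := bernoulliFourierCoeff_eq one_ne_zero n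
    unfold bernoulliFourierCoeff at this
    rw [this, be_I]; simp only [Nat.factorial_one, Nat.cast_one, pow_one]; rw [neg_div]
  have hlin : ∀ n, fourierCoeffOn zero_lt_one (fun t => l * f t + l ^ 2 * (bernoulliFun 1 t : ℂ)) n
      = l * fourierCoeffOn zero_lt_one f n + l ^ 2 * -(be n * Complex.I) := by
    intro n
    rw [← hB1, fourierCoeffOn_eq_integral, fourierCoeffOn_eq_integral, fourierCoeffOn_eq_integral]
    simp only [sub_zero, div_one, one_smul, smul_eq_mul]
    rw [← intervalIntegral.integral_const_mul, ← intervalIntegral.integral_const_mul,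
      ← intervalIntegral.integral_add]
    · congr 1; ext t; ring
    · apply Continuous.intervalIntegrable
      refine continuous_const.mul (Continuous.mul ?_ hfc)
      exact (fourier (T := 1 - 0) (-n)).continuous.comp (AddCircle.continuous_mk' _)
    · apply Continuous.intervalIntegrable
      refine continuous_const.mul (Continuous.mul ?_ hBc)
      exact (fourier (T := 1 - 0) (-n)).continuous.comp (AddCircle.continuous_mk' _)
  have hcoef : ∀ n, fourierCoeffOn zero_lt_one f n = -((be n * Complex.I) ^ 2 * (l:ℂ) ^ 2 / (1 - be n * Complex.I * l)) := by
    intro n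
    rcases eq_or_ne n 0 with rfl | hn
    · have h1 := hlin 0
      have h2 : fourierCoeffOn zero_lt_one (fun t => l * f t + l ^ 2 * (bernoulliFun 1 t : ℂ)) 0 = 0 := by
        rw [fourierCoeffOn_eq_integral]
        simp only [neg_zero, fourier_zero, one_smul, sub_zero, div_one]
        rw [intervalIntegral.integral_eq_sub_of_hasDerivAt (fun t _ => hderC t)
          ((Continuous.add (continuous_const.mul hfc) (continuous_const.mul hBc)).intervalIntegrable _ _)]
        simp [hf, h01]
      rw [h2] at h1
      simp [be] at h1 ⊢
      exact h1.resolve_left hl.ne'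
    · have h1 := fourierCoeffOn_of_hasDerivAt zero_lt_one hn (fun t _ => hderC t)
          ((Continuous.add (continuous_const.mul hfc) (continuous_const.mul hBc)).intervalIntegrable _ _)
      rw [hlin n] at h1
      have h2 : f 1 - f 0 = 0 := by simp [hf, h01]
      rw [h2] at h1
      have h3 : (1:ℂ) / (-2 * Real.pi * Complex.I * n) = -(be n * Complex.I) := by
        rw [be_I]; ring
      rw [h3] at h1
      have h4 := one_sub_ne (be n) l
      rw [← neg_div, eq_div_iff h4]
      push_cast at h1
      linear_combination h1
  let F : C(UnitAddCircle, ℂ) := ⟨AddCircle.liftIco 1 0 f,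
    AddCircle.liftIco_zero_continuous (by simp [hf, h01]) hfc.continuousOn⟩
  have hF : ∀ n, fourierCoeff F n = -((be n * Complex.I) ^ 2 * (l:ℂ) ^ 2 / (1 - be n * Complex.I * l)) := by
    intro n
    have := fourierCoeff_liftIco_eq (T := 1) (a := 0) f n
    rw [← hcoef n]
    simpa only [zero_add] using! this
  have hsum : Summable (fourierCoeff F) := by
    have := (summable_be le_rfl).mul_right (l ^ 2)
    apply this.of_norm_bounded
    intro n
    rw [hF, norm_neg, norm_div]
    have : 1 ≤ ‖(1:ℂ) - be n * Complex.I * l‖ := by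
      refine le_trans ?_ (Complex.abs_re_le_norm _)
      simp
    apply (div_le_self (norm_nonneg _) this).trans
    simp
  have hfin := has_pointwise_sum_fourier_series_of_summable hsum (θ : UnitAddCircle)
  have hval : F (θ : UnitAddCircle) = f θ := by
    show AddCircle.liftIco 1 0 f _ = _
    exact AddCircle.liftIco_zero_coe_apply (f := f) hθ
  rw [hval] at hfin
  convert! hfin.neg using 1
  ext n
  rw [hF]
  simp only [smul_eq_mul]
  ring

end GF
end

section
open Finset Filter Topology MeasureTheory

namespace GF

noncomputable def rf (w : ℂ) (j : ℕ) : ℂ := ∏ i ∈ range j, (-w + i)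

lemma rf_succ (w : ℂ) (j : ℕ) : rf w (j+1) = rf w j * (-w + j) := by
  unfold rf; rw [prod_range_succ]

noncomputable def bT (θ : ℝ) (J k : ℕ) (w : ℂ) : ℂ :=
  ∑ j ∈ Ico J (k+1), rf w j / (j.factorial : ℂ) * (bernPoly j θ : ℂ) * (stirling1Unsigned k j : ℂ)

noncomputable def Dc (J : ℕ) (w : ℂ) : ℂ := rf w J / Complex.Gamma (J - w)

lemma Gamma_ne {J : ℕ} {w : ℂ} (hw : w.re < J) : Complex.Gamma (J - w) ≠ 0 := by
  apply Complex.Gamma_ne_zero_of_re_pos; simpa using hw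

lemma rf_eq {J : ℕ} {w : ℂ} (hw : w.re < J) {j : ℕ} (hj : J ≤ j) :
    rf w j = Dc J w * Complex.Gamma (j - w) := by
  induction j, hj using Nat.le_induction with
  | base => unfold Dc; rw [div_mul_cancel₀ _ (Gamma_ne hw)]
  | succ j hj ih =>
    rw [rf_succ, ih]
    have h0 : ((j:ℂ) - w) ≠ 0 := by
      intro h
      have := congrArg Complex.re h
      simp at this
      have h2 : (J:ℝ) ≤ j := by exact_mod_cast hj
      linarith
    have := Complex.Gamma_add_one _ h0
    push_cast
    rw [show (j:ℂ) + 1 - w = j - w + 1 by ring, this]; ring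

noncomputable def G (J k : ℕ) (w : ℂ) (n : ℤ) (s : ℝ) : ℂ :=
  (Real.exp (-s) : ℂ) * (s:ℂ) ^ (-w - 1) * R J k ((be n * s : ℝ) * Complex.I)

lemma G_eq (J k : ℕ) (w : ℂ) (n : ℤ) {s : ℝ} (hs : 0 < s) :
    G J k w n s = ∑ j ∈ Ico J (k+1), (stirling1Unsigned k j : ℂ) * (be n * Complex.I) ^ j *
      ((Real.exp (-s) : ℂ) * (s:ℂ) ^ ((j - w) - 1)) := by
  unfold G R
  rw [mul_sum]
  apply sum_congr rfl
  intro j _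
  have hs0 : (s:ℂ) ≠ 0 := by exact_mod_cast hs.ne'
  rw [show ((j:ℂ) - w - 1) = (-w - 1) + j by ring, Complex.cpow_add _ _ hs0, Complex.cpow_natCast]
  push_cast
  ring

lemma Gint {J j : ℕ} {w : ℂ} (hw : w.re < J) (hj : J ≤ j) :
    IntegrableOn (fun s : ℝ => (Real.exp (-s) : ℂ) * (s:ℂ) ^ ((j - w) - 1)) (Set.Ioi 0) := by
  apply Complex.GammaIntegral_convergent
  have h2 : (J:ℝ) ≤ j := by exact_mod_cast hj
  simp; linarith

lemma G_integrable {J : ℕ} (k : ℕ) {w : ℂ} (hw : w.re < J) (n : ℤ) :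
    IntegrableOn (G J k w n) (Set.Ioi 0) := by
  have : IntegrableOn (fun s : ℝ => ∑ j ∈ Ico J (k+1), (stirling1Unsigned k j : ℂ) * (be n * Complex.I) ^ j *
      ((Real.exp (-s) : ℂ) * (s:ℂ) ^ ((j - w) - 1))) (Set.Ioi 0) := by
    apply integrable_finsetSum
    intro j hj
    exact (Gint hw (mem_Ico.1 hj).1).const_mul _
  exact this.congr_fun (fun s hs => (G_eq J k w n hs).symm) measurableSet_Ioi

lemma G_integral {J : ℕ} (k : ℕ) {w : ℂ} (hw : w.re < J) (n : ℤ) :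
    ∫ s in Set.Ioi 0, G J k w n s =
      ∑ j ∈ Ico J (k+1), (stirling1Unsigned k j : ℂ) * (be n * Complex.I) ^ j * Complex.Gamma (j - w) := by
  rw [setIntegral_congr_fun measurableSet_Ioi (fun s hs => G_eq J k w n hs), integral_finsetSum]
  · apply sum_congr rfl
    intro j hj
    rw [integral_const_mul, Complex.Gamma_eq_integral]
    · rfl
    · have h2 : (J:ℝ) ≤ j := by exact_mod_cast (mem_Ico.1 hj).1
      simp; linarith
  · intro j hj
    exact (Gint hw (mem_Ico.1 hj).1).const_mul _

lemma G_bound {J : ℕ} (hJ : 1 ≤ J) (k : ℕ) (w : ℂ) (n : ℤ) {s : ℝ} (hs : 0 < s) :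
    ‖G J k w n s‖ ≤ |be n| ^ J * (stirling1Unsigned k J : ℝ) *
      (s ^ (J - w.re - 1) * Real.exp (-(3/4 * s))) := by
  unfold G
  rw [norm_mul, norm_mul, Complex.norm_real, Real.norm_of_nonneg (Real.exp_pos _).le,
    Complex.norm_cpow_eq_rpow_re_of_pos hs]
  have h1 := R_bound J k hJ (be n * s)
  have h2 : Real.exp (Real.pi * |be n * s| / 2) ≤ Real.exp (s / 4) := by
    apply Real.exp_le_exp.2
    rw [abs_mul, abs_of_pos hs]
    have h3 := abs_be_le n
    have hp := Real.pi_pos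
    have h4 : Real.pi * |be n| ≤ 1/2 := by
      calc _ ≤ Real.pi * (1 / (2 * Real.pi)) := by gcongr
        _ = 1/2 := by field_simp
    nlinarith
  have h5 : ‖R J k ((be n * s : ℝ) * Complex.I)‖ ≤ |be n| ^ J * s ^ J * (stirling1Unsigned k J : ℝ) * Real.exp (s/4) := by
    refine h1.trans ?_
    rw [abs_mul, abs_of_pos hs, mul_pow] at *
    gcongr
  have h6 : s ^ ((J:ℝ) - w.re - 1) = s ^ (-w - 1).re * s ^ J := by
    rw [← Real.rpow_natCast, ← Real.rpow_add hs]
    congr 1; simp; ring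
  have h7 : Real.exp (-(3/4 * s)) = Real.exp (-s) * Real.exp (s/4) := by
    rw [← Real.exp_add]; congr 1; ring
  rw [h6, h7]
  calc _ ≤ Real.exp (-s) * s ^ (-w - 1).re * (|be n| ^ J * s ^ J * (stirling1Unsigned k J : ℝ) * Real.exp (s/4)) := by
        gcongr
    _ = _ := by ring

noncomputable def Mc (J : ℕ) (w : ℂ) : ℝ := (1 / (3/4)) ^ (J - w.re) * Real.Gamma (J - w.re)

lemma M_int {J : ℕ} {w : ℂ} (hw : w.re < J) :
    ∫ s in Set.Ioi (0:ℝ), (s ^ (J - w.re - 1) * Real.exp (-(3/4 * s))) = Mc J w := by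
  rw [Real.integral_rpow_mul_exp_neg_mul_Ioi (by linarith) (by norm_num)]
  rfl

lemma M_integrable {J : ℕ} {w : ℂ} (hw : w.re < J) :
    IntegrableOn (fun s : ℝ => (s ^ (J - w.re - 1) * Real.exp (-(3/4 * s)))) (Set.Ioi 0) := by
  have := integrableOn_rpow_mul_exp_neg_mul_rpow (s := J - w.re - 1) (p := 1) (b := 3/4) (by linarith) one_pos (by norm_num)
  simpa [neg_mul] using this

lemma G_norm_int {J : ℕ} (hJ : 1 ≤ J) (k : ℕ) {w : ℂ} (hw : w.re < J) (n : ℤ) :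
    ∫ s in Set.Ioi 0, ‖G J k w n s‖ ≤ |be n| ^ J * (stirling1Unsigned k J : ℝ) * Mc J w := by
  rw [← M_int hw, ← integral_const_mul]
  apply setIntegral_mono_on (G_integrable k hw n).norm ((M_integrable hw).const_mul _) measurableSet_Ioi
  intro s hs
  exact G_bound hJ k w n hs

lemma bT_hasSum {θ : ℝ} (hθ : θ ∈ Set.Icc (0:ℝ) 1) {J : ℕ} (hJ : 2 ≤ J) (k : ℕ) {w : ℂ} (hw : w.re < J) :
    HasSum (fun n : ℤ => Dc J w * (fourier n (θ : UnitAddCircle) * ∫ s in Set.Ioi 0, G J k w n s))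
      (-(bT θ J k w)) := by
  have h : HasSum (fun n : ℤ => ∑ j ∈ Ico J (k+1), rf w j * (stirling1Unsigned k j : ℂ) *
      (fourier n (θ : UnitAddCircle) * (be n * Complex.I) ^ j))
      (∑ j ∈ Ico J (k+1), rf w j * (stirling1Unsigned k j : ℂ) * (-(bernPoly j θ : ℂ) / (j.factorial : ℂ))) := by
    apply hasSum_sum
    intro j hj
    exact (bern_fourier (hJ.trans (mem_Ico.1 hj).1) hθ).mul_left _
  convert! h using 1
  · ext n
    rw [G_integral k hw, mul_sum, mul_sum]
    apply sum_congr rfl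
    intro j hj
    rw [rf_eq hw (mem_Ico.1 hj).1]; ring
  · unfold bT
    rw [← sum_neg_distrib]
    apply sum_congr rfl
    intro j hj
    ring

lemma bT_bound {θ : ℝ} (hθ : θ ∈ Set.Icc (0:ℝ) 1) {J : ℕ} (hJ : 2 ≤ J) (k : ℕ) {w : ℂ} (hw : w.re < J) :
    ‖bT θ J k w‖ ≤ ‖Dc J w‖ * Mc J w * (∑' n : ℤ, |be n| ^ J) * (stirling1Unsigned k J : ℝ) := by
  have h := bT_hasSum hθ hJ k hw
  rw [← norm_neg, ← h.tsum_eq]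
  have hs := ((summable_be hJ).mul_left (‖Dc J w‖ * Mc J w * (stirling1Unsigned k J : ℝ)))
  rw [show ‖Dc J w‖ * Mc J w * (∑' n : ℤ, |be n| ^ J) * (stirling1Unsigned k J : ℝ) =
    (‖Dc J w‖ * Mc J w * (stirling1Unsigned k J : ℝ)) * (∑' n : ℤ, |be n| ^ J) by ring, ← tsum_mul_left]
  apply tsum_of_norm_bounded hs.hasSum
  intro n
  rw [norm_mul, norm_mul]
  have h1 : ‖fourier n (θ : UnitAddCircle)‖ = 1 := by
    rw [fourier_apply]; exact Circle.norm_coe _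
  have h2 := (norm_integral_le_integral_norm (μ := volume.restrict (Set.Ioi 0)) (G J k w n)).trans (G_norm_int (by omega) k hw n)
  rw [h1, one_mul]
  calc _ ≤ ‖Dc J w‖ * (|be n| ^ J * (stirling1Unsigned k J : ℝ) * Mc J w) := by gcongr
    _ = _ := by ring

end GF
end

section
open Finset Filter Topology MeasureTheory

namespace GF

lemma bT_eq (θ : ℝ) (J k M : ℕ) (hM : k + 1 ≤ M) (w : ℂ) :
    bT θ J k w = ∑ j ∈ Ico J M, rf w j / (j.factorial : ℂ) * (bernPoly j θ : ℂ) * (stirling1Unsigned k j : ℂ) := by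
  unfold bT
  apply Finset.sum_subset
  · intro j; simp only [mem_Ico]; omega
  · intro j h1 h2
    simp only [mem_Ico] at h1 h2
    rw [c_eq_zero k j (by omega)]; simp

lemma bT_split (θ : ℝ) {J J' : ℕ} (h : J ≤ J') (k : ℕ) (w : ℂ) :
    bT θ J k w = (∑ j ∈ Ico J J', rf w j / (j.factorial : ℂ) * (bernPoly j θ : ℂ) * (stirling1Unsigned k j : ℂ))
      + bT θ J' k w := by
  rw [bT_eq θ J k (max J' (k+1)) (le_max_right _ _), bT_eq θ J' k (max J' (k+1)) (le_max_right _ _),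
    Finset.sum_Ico_consecutive _ h (le_max_left _ _)]

noncomputable def Sig (θ x : ℝ) (J : ℕ) (w : ℂ) : ℂ := ∑' k, bT θ J k w / risingProd (x:ℂ) k

lemma norm_Q {x : ℝ} (hx : 0 < x) (k : ℕ) : ‖risingProd (x:ℂ) k‖ = risingProdR x k := by
  rw [risingProd_ofReal, Complex.norm_real, Real.norm_of_nonneg (risingProdR_pos hx k).le]

lemma bT_summable_tail {θ : ℝ} (hθ : θ ∈ Set.Icc (0:ℝ) 1) {x : ℝ} (hx : 0 < x) {J : ℕ} (hJ : 2 ≤ J) {w : ℂ}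
    (hw : w.re < J) : Summable (fun k => ‖bT θ J k w / risingProd (x:ℂ) k‖) := by
  refine Summable.of_nonneg_of_le (fun _ => norm_nonneg _) (fun k => ?_)
    ((c_summable hx J).mul_left (‖Dc J w‖ * Mc J w * (∑' n : ℤ, |be n| ^ J)))
  rw [norm_div, norm_Q hx, ← mul_div_assoc]
  have := risingProdR_pos hx k
  gcongr
  exact bT_bound hθ hJ k hw

lemma exists_J (J : ℕ) (r : ℝ) : ∃ J', J ≤ J' ∧ 2 ≤ J' ∧ r < J' := by
  obtain ⟨n, hn⟩ := exists_nat_gt r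
  refine ⟨max J (max 2 n), by simp, by simp, hn.trans_le ?_⟩
  exact_mod_cast (by simp : n ≤ max J (max 2 n))

lemma bT_summable {θ : ℝ} (hθ : θ ∈ Set.Icc (0:ℝ) 1) {x : ℝ} (hx : 0 < x) (J : ℕ) (w : ℂ) :
    Summable (fun k => ‖bT θ J k w / risingProd (x:ℂ) k‖) := by
  obtain ⟨J', h1, h2, h3⟩ := exists_J J w.re
  have hs : Summable (fun k => ‖∑ j ∈ Ico J J', rf w j / (j.factorial : ℂ) * (bernPoly j θ : ℂ) *
      ((stirling1Unsigned k j : ℂ) / risingProd (x:ℂ) k)‖) := by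
    apply Summable.norm
    apply summable_sum
    intro j _
    exact (c_hasSum hx j).summable.mul_left _
  refine Summable.of_nonneg_of_le (fun _ => norm_nonneg _) (fun k => ?_) (hs.add (bT_summable_tail hθ hx h2 h3))
  refine le_trans (le_of_eq ?_) (norm_add_le _ _)
  rw [bT_split θ h1 k w, add_div, sum_div]
  simp only [mul_div_assoc]

lemma Sig_split {θ : ℝ} (hθ : θ ∈ Set.Icc (0:ℝ) 1) {x : ℝ} (hx : 0 < x) {J J' : ℕ} (h : J ≤ J') (w : ℂ) :
    Sig θ x J w = (∑ j ∈ Ico J J', rf w j / (j.factorial : ℂ) * (bernPoly j θ : ℂ) * (1 / (x:ℂ) ^ j)) + Sig θ x J' w := by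
  have h1 : HasSum (fun k => ∑ j ∈ Ico J J', rf w j / (j.factorial : ℂ) * (bernPoly j θ : ℂ) *
      ((stirling1Unsigned k j : ℂ) / risingProd (x:ℂ) k)) (∑ j ∈ Ico J J', rf w j / (j.factorial : ℂ) * (bernPoly j θ : ℂ) * (1 / (x:ℂ) ^ j)) := by
    apply hasSum_sum
    intro j _
    exact (c_hasSum hx j).mul_left _
  have h2 := (bT_summable hθ hx J' w).of_norm.hasSum
  have h3 := h1.add h2
  unfold Sig
  rw [← h3.tsum_eq]
  congr 1
  ext k
  rw [bT_split θ h k w, add_div, sum_div]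
  simp only [mul_div_assoc]

lemma rf_diff (j : ℕ) : Differentiable ℂ (fun w => rf w j) := by
  unfold rf
  fun_prop

lemma bT_diff (θ : ℝ) (J k : ℕ) : Differentiable ℂ (fun w => bT θ J k w) := by
  unfold bT
  have := rf_diff
  fun_prop

lemma K_cont {J : ℕ} {w : ℂ} (hw : w.re < J) : ContinuousAt (fun w => ‖Dc J w‖ * Mc J w) w := by
  have h1 : ContinuousAt (fun w => Dc J w) w := by
    unfold Dc
    refine ContinuousAt.div (f := fun w => rf w J) (g := fun w : ℂ => Complex.Gamma (J - w)) (rf_diff J).continuous.continuousAt ?_ (Gamma_ne hw)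
    have : ContinuousAt Complex.Gamma (J - w) := by
      apply DifferentiableAt.continuousAt (𝕜 := ℂ)
      apply Complex.differentiableAt_Gamma
      intro m hm
      have := congrArg Complex.re hm
      simp at this
      have h2 : (0:ℝ) ≤ m := by positivity
      linarith
    exact ContinuousAt.comp (f := fun w : ℂ => (J:ℂ) - w) this (by fun_prop)
  have h2 : ContinuousAt (fun w => Mc J w) w := by
    unfold Mc
    apply ContinuousAt.mul
    · apply ContinuousAt.rpow (by fun_prop)
      · apply ContinuousAt.sub (by fun_prop) Complex.continuous_re.continuousAt
      · left; norm_num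
    have : ContinuousAt Real.Gamma (J - w.re) := by
      apply DifferentiableAt.continuousAt (𝕜 := ℝ)
      apply Real.differentiableAt_Gamma
      intro m hm
      have h2 : (0:ℝ) ≤ m := by positivity
      linarith
    exact ContinuousAt.comp (f := fun w : ℂ => (J:ℝ) - w.re) this (by fun_prop)
  exact h1.norm.mul h2

lemma Sig_diff {θ : ℝ} (hθ : θ ∈ Set.Icc (0:ℝ) 1) {x : ℝ} (hx : 0 < x) (J : ℕ) :
    Differentiable ℂ (Sig θ x J) := by
  intro w0
  obtain ⟨J', h1, h2, h3⟩ := exists_J J (w0.re + 2)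
  have hball : ∀ w ∈ Metric.closedBall w0 1, w.re < J' := by
    intro w hw
    rw [Metric.mem_closedBall, dist_eq_norm] at hw
    have := (Complex.abs_re_le_norm (w - w0)).trans hw
    rw [Complex.sub_re] at this
    have := (abs_le.1 this).2
    linarith
  obtain ⟨B, hB⟩ := (isCompact_closedBall w0 (1:ℝ)).exists_bound_of_continuousOn
    (f := fun w => ‖Dc J' w‖ * Mc J' w) (fun w hw => (K_cont (hball w hw)).continuousWithinAt)
  have htail : DifferentiableOn ℂ (Sig θ x J') (Metric.ball w0 1) := by
    unfold Sig
    apply Complex.differentiableOn_tsum_of_summable_norm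
      ((c_summable hx J').mul_left (B * (∑' n : ℤ, |be n| ^ J')))
    · intro k
      exact ((bT_diff θ J' k).div_const _).differentiableOn
    · exact Metric.isOpen_ball
    · intro k w hw
      have hw' := Metric.ball_subset_closedBall hw
      rw [norm_div, norm_Q hx, ← mul_div_assoc]
      have := risingProdR_pos hx k
      have hs : 0 ≤ ∑' n : ℤ, |be n| ^ J' := tsum_nonneg fun _ => by positivity
      have hb := (le_abs_self _).trans (hB w hw')
      refine div_le_div_of_nonneg_right ?_ this.le
      refine (bT_bound hθ h2 k (hball w hw')).trans ?_
      gcongr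
  have := htail.differentiableAt (Metric.ball_mem_nhds w0 one_pos)
  have he : Sig θ x J = fun w => (∑ j ∈ Ico J J', rf w j / (j.factorial : ℂ) * (bernPoly j θ : ℂ) * (1 / (x:ℂ) ^ j)) + Sig θ x J' w := by
    ext w; exact Sig_split hθ hx h1 w
  rw [he]
  apply DifferentiableAt.add _ this
  have := rf_diff
  fun_prop

end GF
end

section
open Finset Filter Topology MeasureTheory

namespace GF

noncomputable def gf (θ l : ℝ) : ℝ := l * Real.exp (l * θ) / (Real.exp l - 1) - 1 - l * (θ - 1 / 2)

lemma norm_fourier_one (n : ℤ) (θ : ℝ) : ‖fourier n (θ : UnitAddCircle)‖ = 1 := by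
  rw [fourier_apply]; exact Circle.norm_coe _

lemma Sig2_int {θ : ℝ} (hθ : θ ∈ Set.Ico (0:ℝ) 1) {x : ℝ} (hx : 0 < x) {w : ℂ} (hw : w.re < 2) :
    Sig θ x 2 w = Dc 2 w * ∫ s in Set.Ioi (0:ℝ), (Real.exp (-s) : ℂ) * (s:ℂ) ^ (-w - 1) * (gf θ (s / x) : ℂ) := by
  have hw' : w.re < (2:ℕ) := by exact_mod_cast hw
  have hθ' : θ ∈ Set.Icc (0:ℝ) 1 := ⟨hθ.1, hθ.2.le⟩
  set F : ℕ × ℤ → ℝ → ℂ := fun p s => fourier p.2 (θ : UnitAddCircle) * G 2 p.1 w p.2 s / risingProd (x:ℂ) p.1 with hF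
  have hFn : ∀ p s, ‖F p s‖ = ‖G 2 p.1 w p.2 s‖ / risingProdR x p.1 := by
    intro p s
    simp only [hF]
    rw [norm_div, norm_Q hx, norm_mul, norm_fourier_one, one_mul]
  have hFi : ∀ p, Integrable (F p) (volume.restrict (Set.Ioi 0)) := by
    intro p
    exact ((G_integrable p.1 hw' p.2).const_mul _).div_const _
  have hprod : Summable (fun p : ℕ × ℤ => (stirling1Unsigned p.1 2 : ℝ) / risingProdR x p.1 * |be p.2| ^ 2) := by
    apply Summable.mul_of_nonneg (c_summable hx 2) (summable_be le_rfl)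
    · intro k
      have := risingProdR_pos hx k
      positivity
    · intro n; positivity
  have hS : Summable (fun p => ∫ s in Set.Ioi 0, ‖F p s‖) := by
    refine Summable.of_nonneg_of_le (fun p => integral_nonneg fun _ => norm_nonneg _) (fun p => ?_)
      (hprod.mul_right (Mc 2 w))
    simp only [hFn]
    rw [integral_div]
    have h1 := G_norm_int (J := 2) (by norm_num) p.1 hw' p.2
    have := risingProdR_pos hx p.1
    calc _ ≤ (|be p.2| ^ 2 * (stirling1Unsigned p.1 2 : ℝ) * Mc 2 w) / risingProdR x p.1 := by gcongr
      _ = _ := by ring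
  have hmain := hasSum_integral_of_summable_integral_norm hFi hS
  -- left side
  have hL : HasSum (fun k => -(bT θ 2 k w / risingProd (x:ℂ) k)) (Dc 2 w * ∫ s in Set.Ioi 0, ∑' p, F p s) := by
    refine (hmain.mul_left (Dc 2 w)).prod_fiberwise fun k => ?_
    have := (bT_hasSum hθ' le_rfl k hw').div_const (risingProd (x:ℂ) k)
    convert! this using 1
    · ext n
      simp only [hF]
      rw [integral_div, integral_const_mul]; ring
    · ring
  have hL2 : Sig θ x 2 w = -(Dc 2 w * ∫ s in Set.Ioi 0, ∑' p, F p s) := by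
    rw [← hL.tsum_eq, tsum_neg, neg_neg]; rfl
  rw [hL2, ← mul_neg, ← integral_neg]
  congr 1
  apply setIntegral_congr_fun measurableSet_Ioi
  intro s hs
  have hs : 0 < s := hs
  simp only
  have hsum : Summable (fun p => F p s) := by
    refine Summable.of_norm_bounded (hprod.mul_right (s ^ ((2:ℕ) - w.re - 1) * Real.exp (-(3/4 * s)))) fun p => ?_
    rw [hFn]
    have h1 := G_bound (J := 2) (by norm_num) p.1 w p.2 hs
    have := risingProdR_pos hx p.1
    refine (div_le_div_of_nonneg_right h1 this.le).trans (le_of_eq ?_)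
    ring
  have hV := hsum.hasSum
  rw [← (Equiv.prodComm ℤ ℕ).hasSum_iff] at hV
  have hxs : (0:ℝ) < s / x := by positivity
  have hx0 : (x:ℂ) ≠ 0 := by exact_mod_cast hx.ne'
  have hV2 := hV.prod_fiberwise (g := fun n : ℤ => (Real.exp (-s) : ℂ) * (s:ℂ) ^ (-w - 1) *
    (fourier n (θ : UnitAddCircle) *
        ((be n * Complex.I) ^ 2 * ((s / x : ℝ):ℂ) ^ 2 / (1 - be n * Complex.I * ((s/x : ℝ) : ℂ))))) (by
    intro n
    have := (R2_hasSum hx (be n * s)).mul_left (fourier n (θ : UnitAddCircle) * ((Real.exp (-s) : ℂ) * (s:ℂ) ^ (-w - 1)))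
    convert! this using 1
    · ext k
      simp only [hF, Function.comp, Equiv.prodComm_apply, Prod.swap_prod_mk, G]
      ring
    · have h1 := one_sub_ne (be n) (s / x)
      have h2 : (x:ℂ) - (be n * s : ℝ) * Complex.I = x * (1 - be n * Complex.I * ((s/x:ℝ):ℂ)) := by
        push_cast; field_simp
      rw [h2]
      generalize (1:ℂ) - be n * Complex.I * ((s/x:ℝ):ℂ) = z at h1
      push_cast
      field_simp)
  have hE := (exp_fourier hxs hθ).mul_left ((Real.exp (-s) : ℂ) * (s:ℂ) ^ (-w - 1))
  have := hV2.unique hE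
  rw [this]
  unfold gf
  ring

/-- the integrand after removing the first Bernoulli terms -/
noncomputable def hh (θ x : ℝ) (w : ℂ) (s : ℝ) : ℂ :=
  (Real.exp (-s) : ℂ) * (s:ℂ) ^ (-w - 1) * ((s / x * Real.exp (s / x * θ) / (Real.exp (s / x) - 1) : ℝ) : ℂ)

lemma bose_le {l : ℝ} (hl : 0 < l) : l / (Real.exp l - 1) ≤ Real.exp (-(l / 2)) := by
  have he : 0 < Real.exp l - 1 := by have := Real.add_one_lt_exp hl.ne'; linarith
  rw [div_le_iff₀ he]
  have h1 : l / 2 ≤ Real.sinh (l / 2) := Real.self_le_sinh_iff.2 (by positivity)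
  rw [Real.sinh_eq] at h1
  have h2 : Real.exp (-(l/2)) * (Real.exp l - 1) = Real.exp (l/2) - Real.exp (-(l/2)) := by
    rw [mul_sub, ← Real.exp_add]; ring_nf
  rw [h2]; linarith

lemma hh_integrable {θ x : ℝ} (hx : 0 < x) (hθx : θ ≤ x) {w : ℂ} (hw : w.re < 0) :
    IntegrableOn (hh θ x w) (Set.Ioi 0) := by
  have hb := integrableOn_rpow_mul_exp_neg_mul_rpow (s := - w.re - 1) (p := 1) (b := 1 / (2 * x)) (by linarith) one_pos (by positivity)
  refine Integrable.mono' hb ?_ ?_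
  · apply ContinuousOn.aestronglyMeasurable _ measurableSet_Ioi
    unfold hh
    intro s hs
    have hs : 0 < s := hs
    apply ContinuousAt.continuousWithinAt
    have he : Real.exp (s/x) - 1 ≠ 0 := by
      have := Real.add_one_lt_exp (x := s/x) (by positivity)
      have h2 : 0 < s / x := by positivity
      intro h; linarith
    apply ContinuousAt.mul
    · apply ContinuousAt.mul
      · fun_prop
      · exact Complex.continuousAt_ofReal_cpow_const s _ (Or.inr hs.ne')
    · apply Complex.continuous_ofReal.continuousAt.comp
      refine ContinuousAt.div (f := fun s => s / x * Real.exp (s / x * θ)) (g := fun s => Real.exp (s / x) - 1) ?_ ?_ he <;> fun_prop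
  · refine (ae_restrict_iff' measurableSet_Ioi).2 (Eventually.of_forall fun s hs => ?_)
    have hs : 0 < s := hs
    have hl : 0 < s / x := by positivity
    have he : 0 < Real.exp (s/x) - 1 := by have := Real.add_one_lt_exp hl.ne'; linarith
    unfold hh
    rw [norm_mul, norm_mul, Complex.norm_real, Complex.norm_real, Real.norm_of_nonneg (Real.exp_pos _).le,
      Complex.norm_cpow_eq_rpow_re_of_pos hs, Real.norm_of_nonneg (by positivity)]
    have h1 := bose_le hl
    have h2 : Real.exp (-s) * Real.exp (s / x * θ) ≤ 1 := by
      rw [← Real.exp_add, Real.exp_le_one_iff]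
      have : s / x * θ ≤ s / x * x := by gcongr
      rw [div_mul_cancel₀ _ hx.ne'] at this
      linarith
    have h3 : (-w - 1).re = -w.re - 1 := by simp
    rw [h3, Real.rpow_one]
    calc _ = s ^ (-w.re - 1) * ((Real.exp (-s) * Real.exp (s / x * θ)) * (s / x / (Real.exp (s/x) - 1))) := by ring
      _ ≤ s ^ (-w.re - 1) * (1 * Real.exp (-(s / x / 2))) := by gcongr
      _ = _ := by rw [one_mul]; congr 2; field_simp

lemma Gamma_int {v : ℂ} (hv : 0 < v.re) :
    IntegrableOn (fun s : ℝ => (Real.exp (-s) : ℂ) * (s:ℂ) ^ (v - 1)) (Set.Ioi 0) ∧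
    ∫ s in Set.Ioi (0:ℝ), (Real.exp (-s) : ℂ) * (s:ℂ) ^ (v - 1) = Complex.Gamma v := by
  refine ⟨Complex.GammaIntegral_convergent hv, ?_⟩
  rw [Complex.Gamma_eq_integral hv]; rfl

lemma int_split {θ x : ℝ} (hx : 0 < x) (hθx : θ ≤ x) {w : ℂ} (hw : w.re < 0) :
    ∫ s in Set.Ioi (0:ℝ), (Real.exp (-s) : ℂ) * (s:ℂ) ^ (-w - 1) * (gf θ (s / x) : ℂ) =
      (∫ s in Set.Ioi (0:ℝ), hh θ x w s) - Complex.Gamma (-w) - (((θ - 1/2) / x : ℝ) : ℂ) * Complex.Gamma (-w + 1) := by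
  have h1 := Gamma_int (v := -w) (by simpa using hw)
  have h2 := Gamma_int (v := -w + 1) (by simp; linarith)
  rw [← h1.2, ← h2.2, ← integral_const_mul, ← integral_sub (hh_integrable hx hθx hw) h1.1, ← integral_sub]
  · apply setIntegral_congr_fun measurableSet_Ioi
    intro s hs
    have hs : 0 < s := hs
    have hs0 : (s:ℂ) ≠ 0 := by exact_mod_cast hs.ne'
    have hx0 : (x:ℂ) ≠ 0 := by exact_mod_cast hx.ne'
    simp only
    rw [show (-w + 1 - 1 : ℂ) = (-w - 1) + 1 by ring, Complex.cpow_add _ _ hs0, Complex.cpow_one]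
    unfold gf hh
    push_cast
    ring
  · exact (hh_integrable hx hθx hw).sub h1.1
  · exact h2.1.const_mul _

end GF
end

section
open Finset Filter Topology MeasureTheory

namespace GF

lemma hh_val {x : ℝ} (hx : 0 < x) {w : ℂ} (hw : w.re < 0) :
    ∫ s in Set.Ioi (0:ℝ), hh (Int.fract x) x w s =
      (x:ℂ) ^ (-w) * Complex.Gamma (-w + 1) * ∑' i : ℕ, 1 / ((⌊x⌋₊ + i + 1 : ℕ) : ℂ) ^ (1 - w) := by
  set N := ⌊x⌋₊ with hN
  have hfr : Int.fract x = x - N := by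
    rw [Int.fract, ← natCast_floor_eq_intCast_floor hx.le]
  have hx0 : (x:ℂ) ≠ 0 := by exact_mod_cast hx.ne'
  have hre : (-w + 1).re = 1 - w.re := by simp; ring
  have hm := hasSum_mellin (a := fun _ : ℕ => (1:ℂ)) (p := fun i : ℕ => ((N + i + 1 : ℕ) : ℝ) / x)
    (F := fun t : ℝ => ((Real.exp (-t * (N:ℝ) / x) / (Real.exp (t / x) - 1) : ℝ) : ℂ)) (s := -w + 1)
    (fun i => Or.inr (by positivity)) (by rw [hre]; linarith) (by
      intro t ht
      have ht : 0 < t := ht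
      have hl : 0 < t / x := by positivity
      have hq : Real.exp (-(t/x)) < 1 := by rw [Real.exp_lt_one_iff]; linarith
      have hg := (hasSum_geometric_of_lt_one (Real.exp_pos _).le hq).mul_left (Real.exp (-(((N:ℝ)+1) / x * t)))
      have he : 0 < Real.exp (t/x) - 1 := by have := Real.add_one_lt_exp hl.ne'; linarith
      have hg' := Complex.hasSum_ofReal.2 hg
      convert! hg' using 1
      · ext i
        rw [one_mul]
        congr 1
        rw [← Real.exp_nat_mul, ← Real.exp_add]
        congr 1
        push_cast
        field_simp
        ring
      · congr 1
        have hq' : 1 - Real.exp (-(t/x)) ≠ 0 := by linarith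
        rw [← div_eq_mul_inv, div_eq_div_iff he.ne' hq']
        have e1 : Real.exp (-(((N:ℝ)+1) / x * t)) = Real.exp (-t * N / x) * Real.exp (-(t/x)) := by
          rw [← Real.exp_add]; congr 1; field_simp; ring
        have e2 : Real.exp (-(t/x)) * Real.exp (t/x) = 1 := by rw [← Real.exp_add]; simp
        rw [e1]
        linear_combination (- Real.exp (-t * N / x)) * e2) (by
      have h1 : Summable (fun n : ℕ => 1 / (n:ℝ) ^ (1 - w.re)) := Real.summable_one_div_nat_rpow.2 (by linarith)
      have h2 := ((summable_nat_add_iff (N+1)).2 h1).mul_left (x ^ (1 - w.re))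
      refine h2.congr fun i => ?_
      rw [hre, Real.div_rpow (by positivity) hx.le, norm_one, one_div_div, show i + (N+1) = N + i + 1 by ring, mul_one_div])
  have hint : ∫ s in Set.Ioi (0:ℝ), hh (Int.fract x) x w s = 1 / x *
      mellin (fun t : ℝ => ((Real.exp (-t * (N:ℝ) / x) / (Real.exp (t / x) - 1) : ℝ) : ℂ)) (-w + 1) := by
    rw [mellin, ← integral_const_mul]
    apply setIntegral_congr_fun measurableSet_Ioi
    intro s hs
    have hs : 0 < s := hs
    have hs0 : (s:ℂ) ≠ 0 := by exact_mod_cast hs.ne'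
    simp only [smul_eq_mul]
    unfold hh
    rw [show (-w + 1 - 1 : ℂ) = (-w - 1) + 1 by ring, Complex.cpow_add _ _ hs0, Complex.cpow_one]
    have e1 : Real.exp (-s * N / x) = Real.exp (-s) * Real.exp (s / x * Int.fract x) := by
      rw [← Real.exp_add, hfr]; congr 1; field_simp; ring
    rw [e1]
    push_cast
    ring
  rw [hint, ← hm.tsum_eq, ← tsum_mul_left, ← tsum_mul_left]
  congr 1
  ext i
  have hp : (0:ℝ) ≤ ((N + i + 1 : ℕ) : ℝ) := by positivity
  have hc : ((((N + i + 1 : ℕ) : ℝ) / x : ℝ) : ℂ) ^ (-w + 1) = ((N + i + 1 : ℕ) : ℂ) ^ (1 - w) / (x:ℂ) ^ (-w + 1) := by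
    rw [div_eq_mul_inv, Complex.ofReal_mul, Complex.mul_cpow_ofReal_nonneg hp (by positivity), Complex.ofReal_inv,
      Complex.inv_cpow, ← div_eq_mul_inv]
    · congr 2; ring
    · rw [Complex.arg_ofReal_of_nonneg hx.le]; exact Real.pi_pos.ne
  rw [hc, Complex.cpow_add _ _ hx0, Complex.cpow_one]
  have h3 : (x:ℂ) ^ (-w) ≠ 0 := by simp [Complex.cpow_eq_zero_iff, hx0]
  field_simp

lemma zeta_split (N : ℕ) {w : ℂ} (hw : w.re < 0) :
    ∑' i : ℕ, 1 / ((N + i + 1 : ℕ) : ℂ) ^ (1 - w) = riemannZeta (1 - w) - ∑ k ∈ Icc 1 N, (k:ℂ) ^ (w - 1) := by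
  have hs : 1 < (1 - w).re := by
    rw [Complex.sub_re, Complex.one_re]; linarith
  have h1 : Summable (fun n : ℕ => 1 / (n:ℂ) ^ (1 - w)) := Complex.summable_one_div_nat_cpow.2 hs
  rw [zeta_eq_tsum_one_div_nat_cpow hs, ← h1.sum_add_tsum_nat_add (N+1)]
  have h2 : ∑ i ∈ range (N+1), 1 / (i:ℂ) ^ (1 - w) = ∑ k ∈ Icc 1 N, (k:ℂ) ^ (w - 1) := by
    rw [Finset.range_eq_Ico, Finset.sum_eq_sum_Ico_succ_bot (by omega)]
    have : (1 - w) ≠ 0 := by intro h; rw [h] at hs; simp at hs; linarith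
    simp only [Nat.cast_zero, Complex.zero_cpow this, div_zero, zero_add]
    apply sum_congr
    · rfl
    · intro k _
      rw [show w - 1 = -(1 - w) by ring, Complex.cpow_neg, one_div]
  rw [h2, add_sub_cancel_left]
  congr 1; ext i
  rw [show N + i + 1 = i + (N + 1) by ring]

lemma fract_mem (x : ℝ) : Int.fract x ∈ Set.Ico (0:ℝ) 1 := ⟨Int.fract_nonneg x, Int.fract_lt_one x⟩

lemma Sig0_neg {x : ℝ} (hx : 0 < x) {w : ℂ} (hw : w.re < 0) :
    (x:ℂ) ^ w * Sig (Int.fract x) x 0 w + w * (riemannZeta (1 - w) - ∑ k ∈ Icc 1 ⌊x⌋₊, (k:ℂ) ^ (w - 1)) = 0 := by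
  have hθ := fract_mem x
  have hθ' : Int.fract x ∈ Set.Icc (0:ℝ) 1 := ⟨hθ.1, hθ.2.le⟩
  have hx0 : (x:ℂ) ≠ 0 := by exact_mod_cast hx.ne'
  have hθx : Int.fract x ≤ x := by
    have : (0:ℝ) ≤ ⌊x⌋ := by exact_mod_cast Int.floor_nonneg.2 hx.le
    rw [Int.fract]; linarith
  have hw0 : -w ≠ 0 := by intro h; have := congrArg Complex.re h; simp at this; linarith
  have hG : Complex.Gamma (-w) ≠ 0 := Complex.Gamma_ne_zero_of_re_pos (by simpa using hw)
  have hD : Dc 2 w = 1 / Complex.Gamma (-w) := by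
    have h2 := rf_eq (J := 0) (w := w) (by simpa using hw) (j := 2) (by norm_num)
    have h0 : Dc 0 w = 1 / Complex.Gamma (-w) := by simp [Dc, rf]
    have hne : Complex.Gamma ((2:ℕ) - w) ≠ 0 := Gamma_ne (by push_cast; linarith)
    rw [← h0]
    conv_lhs => unfold Dc
    rw [h2, mul_div_cancel_right₀ _ hne]
  rw [Sig_split hθ' hx (by norm_num : 0 ≤ 2) w, Sig2_int hθ hx (by linarith), int_split hx hθx hw, hh_val hx hw, zeta_split _ hw, hD,
    Complex.Gamma_add_one _ hw0]
  have b0 : bernPoly 0 (Int.fract x) = 1 := by simp [bernPoly]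
  have b1 : bernPoly 1 (Int.fract x) = Int.fract x - 1/2 := by rw [bernPoly_eq, bernoulliFun_one]
  have r0 : rf w 0 = 1 := by simp [rf]
  have r1 : rf w 1 = -w := by simp [rf]
  have hsum : ∑ j ∈ Ico 0 2, rf w j / (j.factorial : ℂ) * (bernPoly j (Int.fract x) : ℂ) * (1 / (x:ℂ) ^ j) =
      1 + (-w) * (((Int.fract x - 1/2 : ℝ) : ℂ) / x) := by
    rw [← Finset.range_eq_Ico, sum_range_succ, sum_range_one, b0, b1, r0, r1]
    simp; ring
  rw [hsum]
  generalize riemannZeta (1 - w) - ∑ k ∈ Icc 1 ⌊x⌋₊, (k:ℂ) ^ (w - 1) = Z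
  have hxw : (x:ℂ) ^ w * (x:ℂ) ^ (-w) = 1 := by rw [← Complex.cpow_add _ _ hx0]; simp
  rw [Complex.ofReal_div]
  generalize (((Int.fract x - 1/2 : ℝ) : ℂ) / x) = B
  field_simp
  linear_combination (-w * Z) * hxw

lemma Sig0_all {x : ℝ} (hx : 0 < x) {w : ℂ} (hw : w ≠ 0) :
    (x:ℂ) ^ w * Sig (Int.fract x) x 0 w + w * (riemannZeta (1 - w) - ∑ k ∈ Icc 1 ⌊x⌋₊, (k:ℂ) ^ (w - 1)) = 0 := by
  have hθ := fract_mem x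
  have hθ' : Int.fract x ∈ Set.Icc (0:ℝ) 1 := ⟨hθ.1, hθ.2.le⟩
  have hx0 : (x:ℂ) ≠ 0 := by exact_mod_cast hx.ne'
  set f : ℂ → ℂ := fun w => (x:ℂ) ^ w * Sig (Int.fract x) x 0 w + w * (riemannZeta (1 - w) - ∑ k ∈ Icc 1 ⌊x⌋₊, (k:ℂ) ^ (w - 1)) with hf
  have hd : DifferentiableOn ℂ f {0}ᶜ := by
    intro z hz
    have hz : z ≠ 0 := hz
    apply DifferentiableAt.differentiableWithinAt
    apply DifferentiableAt.add
    · apply DifferentiableAt.mul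
      · exact differentiableAt_id.const_cpow (Or.inl hx0)
      · exact Sig_diff hθ' hx 0 z
    · apply differentiableAt_id.mul
      apply DifferentiableAt.sub
      · have : DifferentiableAt ℂ riemannZeta (1 - z) := differentiableAt_riemannZeta (by
          intro h; apply hz; linear_combination -h)
        exact DifferentiableAt.comp (f := fun z : ℂ => 1 - z) z this (by fun_prop)
      · apply DifferentiableAt.fun_sum
        intro k hk
        have : (k:ℂ) ≠ 0 := by
          have := (mem_Icc.1 hk).1
          exact_mod_cast (by omega : k ≠ 0)
        exact (differentiableAt_id.sub_const 1).const_cpow (Or.inl this)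
  have ha : AnalyticOnNhd ℂ f {0}ᶜ := hd.analyticOnNhd isOpen_compl_singleton
  have hc : IsPreconnected ({0}ᶜ : Set ℂ) :=
    (isConnected_compl_singleton_of_one_lt_rank (by rw [Complex.rank_real_complex]; exact Cardinal.one_lt_two) 0).isPreconnected
  have hev : f =ᶠ[𝓝 (-1)] 0 := by
    have : {z : ℂ | z.re < 0} ∈ 𝓝 (-1:ℂ) := (isOpen_lt Complex.continuous_re continuous_const).mem_nhds (by simp)
    filter_upwards [this] with z hz
    exact Sig0_neg hx hz
  have := ha.eqOn_zero_of_preconnected_of_eventuallyEq_zero hc (z₀ := -1) (by simp) hev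
  exact this (by simpa using hw)

end GF
end

section
open Finset Filter Topology MeasureTheory

namespace GF

lemma cchoose_rf (w : ℂ) (j : ℕ) : (-1:ℂ) ^ j * cchoose w j = rf w j / (j.factorial : ℂ) := by
  unfold cchoose rf
  rw [← mul_div_assoc]
  congr 1
  rw [← Finset.card_range j, ← Finset.prod_const, Finset.card_range, ← Finset.prod_mul_distrib]
  apply prod_congr rfl
  intro i _
  ring

lemma term_eq (θ : ℝ) (a k : ℕ) (w : ℂ) :
    (-1 : ℂ) ^ k * (∑ l ∈ Icc 1 k, cchoose w (l + a) * (S1 k (l + a) : ℂ) * (bernPoly (l + a) θ : ℂ))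
      = bT θ (a+1) k w := by
  rw [bT_eq θ (a+1) k (k+1+a) (by omega), mul_sum, show a + 1 = 1 + a by ring, ← Finset.sum_Ico_add']
  apply sum_congr
  · rfl
  intro l _
  rw [← cchoose_rf]
  unfold S1
  push_cast
  rw [pow_add (-1:ℂ) k (l+a)]
  have : (-1:ℂ) ^ k * (-1) ^ k = 1 := by rw [← mul_pow]; simp
  linear_combination (cchoose w (l+a) * (-1) ^ (l+a) * (stirling1Unsigned k (l+a) : ℂ) * (bernPoly (l + a) θ : ℂ)) * this

end GF
end

open Finset in
/-- Other generalized Faulhaber formula version (first formula of Theorem 5.3):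
shift parameter inside the Stirling number and outer factor `x^{m+1}`. -/
theorem other_generalized_faulhaber (m : ℂ) (hm : m ≠ -1)
    (x : ℝ) (hx : 0 < x) (a : ℕ) :
    Summable (fun k : ℕ =>
      ‖(-1 : ℂ) ^ (k + 1) *
          (∑ l ∈ Icc 1 (k + 1),
            cchoose (m + 1) (l + a) * (S1 (k + 1) (l + a) : ℂ) *
              (bernPoly (l + a) (Int.fract x) : ℂ)) /
        risingProd (x : ℂ) (k + 1)‖) ∧
    (∑ k ∈ Icc 1 ⌊x⌋₊, (k : ℂ) ^ m) =
      (x : ℂ) ^ (m + 1) / (m + 1) + riemannZeta (-m) +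
        1 / (m + 1) *
          ∑ k ∈ Icc 1 a,
            (-1 : ℂ) ^ k * cchoose (m + 1) k * (bernPoly k (Int.fract x) : ℂ) *
              (x : ℂ) ^ (m - k + 1) +
        (x : ℂ) ^ (m + 1) / (m + 1) *
          ∑' k : ℕ,
            (-1 : ℂ) ^ (k + 1) *
                (∑ l ∈ Icc 1 (k + 1),
                  cchoose (m + 1) (l + a) * (S1 (k + 1) (l + a) : ℂ) *
                    (bernPoly (l + a) (Int.fract x) : ℂ)) /
              risingProd (x : ℂ) (k + 1) := by
  have hθ := GF.fract_mem x
  have hθ' : Int.fract x ∈ Set.Icc (0:ℝ) 1 := ⟨hθ.1, hθ.2.le⟩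
  have hx0 : (x:ℂ) ≠ 0 := by exact_mod_cast hx.ne'
  have hw : m + 1 ≠ 0 := fun h => hm (by linear_combination h)
  simp only [GF.term_eq]
  have hs := GF.bT_summable hθ' hx (a+1) (m+1)
  refine ⟨(summable_nat_add_iff 1).2 hs, ?_⟩
  have h0 : GF.bT (Int.fract x) (a+1) 0 (m+1) = 0 := by
    unfold GF.bT; rw [Finset.Ico_eq_empty (by omega)]; simp
  have hS : GF.Sig (Int.fract x) x (a+1) (m+1) =
      ∑' k : ℕ, GF.bT (Int.fract x) (a+1) (k+1) (m+1) / risingProd (x:ℂ) (k+1) := by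
    unfold GF.Sig
    rw [hs.of_norm.tsum_eq_zero_add, h0, zero_div, zero_add]
  rw [← hS]
  have hmain := GF.Sig0_all hx hw
  rw [GF.Sig_split hθ' hx (Nat.zero_le (a+1)) (m+1), Finset.sum_eq_sum_Ico_succ_bot (by omega)] at hmain
  have hf : ∑ k ∈ Icc 1 a, (-1 : ℂ) ^ k * cchoose (m + 1) k * (bernPoly k (Int.fract x) : ℂ) * (x : ℂ) ^ (m - k + 1)
      = (x:ℂ) ^ (m+1) * ∑ j ∈ Ico (0+1) (a+1), GF.rf (m+1) j / (j.factorial : ℂ) * (bernPoly j (Int.fract x) : ℂ) * (1 / (x:ℂ) ^ j) := by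
    rw [mul_sum]
    apply sum_congr
    · rfl
    · intro k _
      rw [GF.cchoose_rf, show m - k + 1 = (m + 1) - k by ring, Complex.cpow_sub _ _ hx0, Complex.cpow_natCast]
      ring
  rw [hf]
  have b0 : bernPoly 0 (Int.fract x) = 1 := by simp [bernPoly]
  have r0 : GF.rf (m+1) 0 = 1 := by simp [GF.rf]
  rw [b0, r0, show 1 - (m + 1) = -m by ring, show m + 1 - 1 = m by ring] at hmain
  simp only [Nat.factorial_zero, Nat.cast_one, pow_zero, Complex.ofReal_one, div_one, mul_one] at hmain
  generalize (∑ j ∈ Ico (0+1) (a+1), GF.rf (m+1) j / (j.factorial : ℂ) * (bernPoly j (Int.fract x) : ℂ) * (1 / (x:ℂ) ^ j)) = T at hmain ⊢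
  field_simp
  linear_combination -hmain
end

section
/- Other harmonic sum version: Let x ∈ ℝ with x > 0 and let a ∈ ℕ₀. Then the series ∑_{k=1}^{∞} (−1)^{k+a+1} (∑_{l=1}^{k} ((−1)^l/(l+a)) S_k^{(1)}(l+a) B_{l+a}({x})) / ((x+1)(x+2)⋯(x+k)) converges absolutely, and ∑_{k=1}^{⌊x⌋} 1/k = log(x) + γ − ∑_{k=1}^{a} B_k({x})/(k x^k) + ∑_{k=1}^{∞} (−1)^{k+a+1} (∑_{l=1}^{k} ((−1)^l/(l+a)) S_k^{(1)}(l+a) B_{l+a}({x})) / ((x+1)(x+2)⋯(x+k)). -/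
open Filter Topology

lemma P_succ (x : ℝ) (k : ℕ) : risingProdR x (k + 1) = risingProdR x k * (x + k + 1) := by
  simp [risingProdR, Finset.prod_range_succ]

lemma P_zero (x : ℝ) : risingProdR x 0 = 1 := by simp [risingProdR]

lemma P_pos {x : ℝ} (hx : 0 < x) (k : ℕ) : 0 < risingProdR x k := by
  unfold risingProdR
  exact Finset.prod_pos fun i _ => by positivity

/-- The abstract telescoping step. -/
lemma tele_step {x : ℝ} (hx : 0 < x) (t b : ℕ → ℝ) (B : ℝ) (ht : ∀ k, 0 ≤ t k)
    (hb : ∀ k, 0 ≤ b k) (t0 : t 0 = 0)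
    (hr : ∀ k : ℕ, (x + k + 1) * t (k + 1) = b k + k * t k) (hB : HasSum b B) :
    HasSum t (B / x) ∧ Tendsto (fun k : ℕ => (k : ℝ) * t k) atTop (𝓝 0) := by
  have fin : ∀ K : ℕ, (K : ℝ) * t K + x * ∑ k ∈ Finset.range (K + 1), t k
      = ∑ k ∈ Finset.range K, b k := by
    intro K
    induction K with
    | zero => simp [t0]
    | succ n ih =>
      rw [Finset.sum_range_succ t (n + 1), Finset.sum_range_succ b, ← ih]
      have := hr n
      push_cast
      linarith
  have hs : Summable t := by
    refine summable_of_sum_range_le (c := B / x) ht fun n => ?_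
    rw [le_div_iff₀ hx]
    have h1 := fin n
    have h2 : ∑ k ∈ Finset.range n, b k ≤ B := sum_le_hasSum _ (fun i _ => hb i) hB
    have h3 : 0 ≤ (n : ℝ) * t n := mul_nonneg (by positivity) (ht n)
    rw [Finset.sum_range_succ] at h1
    have := mul_nonneg hx.le (ht n)
    linarith
  have hlim : Tendsto (fun k : ℕ => (k : ℝ) * t k) atTop (𝓝 (B - x * ∑' k, t k)) := by
    have h1 := hB.tendsto_sum_nat
    have h2 := ((tendsto_add_atTop_iff_nat 1).2 hs.hasSum.tendsto_sum_nat).const_mul x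
    refine (h1.sub h2).congr fun K => ?_
    have := fin K
    linarith
  set L := B - x * ∑' k, t k with hL
  have L0 : 0 ≤ L := ge_of_tendsto' hlim fun k => mul_nonneg (by positivity) (ht k)
  have L1 : L = 0 := by
    by_contra hne
    have Lp : 0 < L := lt_of_le_of_ne L0 (Ne.symm hne)
    have ev : ∀ᶠ k : ℕ in atTop, L / 2 ≤ (k : ℝ) * t k :=
      (hlim.eventually (lt_mem_nhds (half_lt_self Lp))).mono fun k hk => hk.le
    obtain ⟨N, hN⟩ := eventually_atTop.1 ev
    apply Real.not_summable_one_div_natCast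
    rw [← summable_nat_add_iff (N + 1)]
    refine Summable.of_nonneg_of_le (fun k => by positivity) (fun k => ?_)
      (((summable_nat_add_iff (N + 1)).2 hs).mul_left (2 / L))
    have := hN (k + (N + 1)) (by omega)
    have hp : (0 : ℝ) < ((k + (N + 1) : ℕ) : ℝ) := by positivity
    rw [div_le_iff₀ hp, div_mul_eq_mul_div, div_mul_eq_mul_div, le_div_iff₀ Lp]
    linarith
  constructor
  · have : B / x = ∑' k, t k := by
      rw [div_eq_iff hx.ne']; linarith
    rw [this]; exact hs.hasSum
  · rw [← L1]; exact hlim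

lemma u_zero_right (k : ℕ) : stirling1Unsigned (k + 1) 0 = 0 := by
  induction k with
  | zero => simp [stirling1Unsigned]
  | succ n ih => rw [stirling1Unsigned, ih, mul_zero]

lemma u_succ_succ (k l : ℕ) : stirling1Unsigned (k + 1) (l + 1) =
    stirling1Unsigned k l + k * stirling1Unsigned k (l + 1) := by rw [stirling1Unsigned]

lemma u_zero_succ (l : ℕ) : stirling1Unsigned 0 (l + 1) = 0 := by rw [stirling1Unsigned]

lemma u_gt : ∀ (k l : ℕ), k < l → stirling1Unsigned k l = 0 := by
  intro k
  induction k with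
  | zero => intro l hl; obtain ⟨m, rfl⟩ := Nat.exists_eq_succ_of_ne_zero (by omega : l ≠ 0)
            exact u_zero_succ m
  | succ n ih =>
    intro l hl
    obtain ⟨m, rfl⟩ := Nat.exists_eq_succ_of_ne_zero (by omega : l ≠ 0)
    rw [Nat.succ_eq_add_one, u_succ_succ, ih m (by omega), ih (m + 1) (by omega)]; simp

lemma u_one (k : ℕ) : stirling1Unsigned (k + 1) 1 = k.factorial := by
  induction k with
  | zero => simp [stirling1Unsigned]
  | succ n ih => rw [u_succ_succ, u_zero_right, zero_add, ih, Nat.factorial_succ]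

lemma stirling_rec {x : ℝ} (hx : 0 < x) (m k : ℕ) :
    (x + k + 1) * ((stirling1Unsigned (k + 1) (m + 1) : ℝ) / risingProdR x (k + 1)) =
    (stirling1Unsigned k m : ℝ) / risingProdR x k +
      k * ((stirling1Unsigned k (m + 1) : ℝ) / risingProdR x k) := by
  have := (P_pos hx k).ne'
  have h2 : x + k + 1 ≠ 0 := by positivity
  rw [P_succ, u_succ_succ]
  push_cast
  field_simp

lemma stirling_hasSum {x : ℝ} (hx : 0 < x) (m : ℕ) :
    HasSum (fun k => (stirling1Unsigned k m : ℝ) / risingProdR x k) (1 / x ^ m) := by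
  induction m with
  | zero =>
    have := hasSum_single (f := fun k => (stirling1Unsigned k 0 : ℝ) / risingProdR x k) 0
      (fun k hk => by
        obtain ⟨j, rfl⟩ := Nat.exists_eq_succ_of_ne_zero hk
        simp [u_zero_right])
    simpa [P_zero, stirling1Unsigned] using this
  | succ m ih =>
    have := (tele_step hx (fun k => (stirling1Unsigned k (m + 1) : ℝ) / risingProdR x k) _ _
      (fun k => div_nonneg (by positivity) (P_pos hx k).le)
      (fun k => div_nonneg (by positivity) (P_pos hx k).le)
      (by simp [u_zero_succ]) (fun k => stirling_rec hx m k) ih).1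
    convert this using 1
    rw [pow_succ]; field_simp

lemma stirling_hasSum' {x : ℝ} (hx : 0 < x) (m : ℕ) :
    HasSum (fun k => (stirling1Unsigned (k + 1) (m + 1) : ℝ) / risingProdR x (k + 1))
      (1 / x ^ (m + 1)) := by
  have := (hasSum_nat_add_iff' 1).2 (stirling_hasSum hx (m + 1))
  simpa [u_zero_succ] using this

lemma fact_hasSum {x : ℝ} (hx : 0 < x) :
    HasSum (fun k => (k.factorial : ℝ) / risingProdR x (k + 1)) (1 / x) := by
  have := stirling_hasSum' hx 0
  simpa [u_one] using this

lemma fact_tendsto {x : ℝ} (hx : 0 < x) :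
    Tendsto (fun k : ℕ => (k.factorial : ℝ) / risingProdR x k) atTop (𝓝 0) := by
  have := (tele_step hx (fun k => (stirling1Unsigned k (0 + 1) : ℝ) / risingProdR x k) _ _
      (fun k => div_nonneg (by positivity) (P_pos hx k).le)
      (fun k => div_nonneg (by positivity) (P_pos hx k).le)
      (by simp [u_zero_succ]) (fun k => stirling_rec hx 0 k) (stirling_hasSum hx 0)).2
  rw [← tendsto_add_atTop_iff_nat 1] at this ⊢
  refine this.congr fun k => ?_
  simp only [zero_add]
  rw [u_one, Nat.factorial_succ]
  push_cast
  ring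

/-- rising factorial -/
noncomputable def rf (s : ℝ) (k : ℕ) : ℝ := ∏ i ∈ Finset.range k, (s + i)

lemma rf_succ (s : ℝ) (k : ℕ) : rf s (k + 1) = rf s k * (s + k) := by
  simp [rf, Finset.prod_range_succ]

lemma rf_nonneg {s : ℝ} (hs : 0 ≤ s) (k : ℕ) : 0 ≤ rf s k :=
  Finset.prod_nonneg fun i _ => by positivity

lemma rf_le {s : ℝ} (hs : 0 ≤ s) (h1 : s ≤ 1) (k : ℕ) : rf s k ≤ k.factorial := by
  induction k with
  | zero => simp [rf]
  | succ n ih =>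
    rw [rf_succ, Nat.factorial_succ, mul_comm]
    push_cast
    exact mul_le_mul (by linarith) ih (rf_nonneg hs n) (by positivity)

lemma rf_cont (k : ℕ) : Continuous (fun s => rf s k) := by
  unfold rf; fun_prop

lemma rf_eq_sum (s : ℝ) (k : ℕ) :
    rf s k = ∑ m ∈ Finset.range (k + 1), (stirling1Unsigned k m : ℝ) * s ^ m := by
  induction k with
  | zero => simp [rf, stirling1Unsigned]
  | succ n ih =>
    rw [Finset.sum_range_succ', rf_succ, ih, u_zero_right]
    simp only [u_succ_succ]
    push_cast
    simp only [add_mul, Finset.sum_add_distrib]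
    rw [Finset.sum_range_succ (fun m => (n : ℝ) * (stirling1Unsigned n (m + 1) : ℝ) * s ^ (m + 1)),
      u_gt n (n + 1) (by omega), mul_add, Finset.sum_mul, Finset.sum_mul]
    have h0 : ∑ m ∈ Finset.range (n + 1), (stirling1Unsigned n m : ℝ) * s ^ m * n
       = ∑ m ∈ Finset.range n, (n : ℝ) * (stirling1Unsigned n (m + 1) : ℝ) * s ^ (m + 1) := by
      rw [Finset.sum_range_succ']
      have : (stirling1Unsigned n 0 : ℝ) * s ^ 0 * n = 0 := by
        cases n with
        | zero => simp
        | succ j => simp [u_zero_right]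
      rw [this, add_zero]
      exact Finset.sum_congr rfl fun m _ => by ring
    rw [h0]
    simp only [pow_succ, mul_assoc]
    simp

lemma bern_eq (n : ℕ) (x : ℝ) : bernPoly n x = bernoulliFun n x := by
  simp only [bernPoly, bernoulliFun, Polynomial.bernoulli, Polynomial.map_sum,
    Polynomial.map_monomial, Polynomial.eval_finsetSum, Polynomial.eval_monomial]
  refine Finset.sum_congr rfl fun k _ => ?_
  simp
  left; ring

lemma bern_shift (n : ℕ) (x : ℝ) :
    bernoulliFun n (1 + x) = bernoulliFun n x + n * x ^ (n - 1) := by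
  have := congrArg (fun p => Polynomial.eval x (p.map (algebraMap ℚ ℝ)))
    (Polynomial.bernoulli_comp_one_add_X n)
  simpa [bernoulliFun, Polynomial.map_comp] using this

lemma rf_shift (y : ℝ) (k : ℕ) : rf y (k + 1) = y * rf (1 + y) k := by
  simp only [rf, Finset.prod_range_succ']
  rw [mul_comm]
  congr 1
  · simp
  · exact Finset.prod_congr rfl fun i _ => by push_cast; ring

/-- the Bernoulli-Stirling sum -/
noncomputable def Tsum (k : ℕ) (y : ℝ) : ℝ :=
  ∑ m ∈ Finset.Icc 1 (k + 1), (stirling1Unsigned (k + 1) m : ℝ) / m * bernoulliFun m y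

lemma Tsum_shift (k : ℕ) {y : ℝ} (hy : y ≠ 0) : Tsum k (1 + y) - Tsum k y = rf (1 + y) k := by
  apply mul_left_cancel₀ hy
  rw [← rf_shift, rf_eq_sum, Tsum, Tsum, ← Finset.sum_sub_distrib, Finset.mul_sum,
    Finset.sum_range_succ', u_zero_right]
  rw [show Finset.Icc 1 (k + 1) = Finset.Ico (0 + 1) (k + 1 + 1) from by ext; simp,
    ← Finset.sum_Ico_add', ← Finset.range_eq_Ico]
  simp only [Nat.cast_zero, zero_mul, add_zero]
  refine Finset.sum_congr rfl fun m _ => ?_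
  rw [bern_shift]
  have : ((m + 1 : ℕ) : ℝ) ≠ 0 := by positivity
  simp only [Nat.add_sub_cancel]
  field_simp
  ring

lemma Tsum_cont (k : ℕ) : Continuous (Tsum k) := by
  unfold Tsum
  exact continuous_finsetSum _ fun m _ => continuous_const.mul (continuous_bernoulliFun m)

lemma Tsum_int (k : ℕ) : ∫ y in (0 : ℝ)..1, Tsum k y = 0 := by
  unfold Tsum
  rw [intervalIntegral.integral_finsetSum]
  · refine Finset.sum_eq_zero fun m hm => ?_
    rw [intervalIntegral.integral_const_mul, integral_bernoulliFun_eq_zero, mul_zero]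
    have := (Finset.mem_Icc.1 hm).1
    omega
  · intro m _
    exact (continuous_const.mul (continuous_bernoulliFun m)).intervalIntegrable _ _

lemma Tsum_const (k : ℕ) : ∃ c : ℝ, ∀ y, (k + 1 : ℝ) * Tsum k y - rf y (k + 1) = c := by
  let q : Polynomial ℝ := Polynomial.C (k + 1 : ℝ) * (∑ m ∈ Finset.Icc 1 (k + 1),
      Polynomial.C ((stirling1Unsigned (k + 1) m : ℝ) / m) *
        (Polynomial.bernoulli m).map (algebraMap ℚ ℝ)) -
      ∏ i ∈ Finset.range (k + 1), (Polynomial.X + Polynomial.C (i : ℝ))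
  have hq : ∀ y, q.eval y = (k + 1 : ℝ) * Tsum k y - rf y (k + 1) := by
    intro y
    simp only [q, Polynomial.eval_sub, Polynomial.eval_mul, Polynomial.eval_C,
      Polynomial.eval_finsetSum, Polynomial.eval_prod, Polynomial.eval_add, Polynomial.eval_X,
      Tsum, rf, bernoulliFun]
  have hn : ∀ n : ℕ, q.eval ((n : ℝ) + 1) = q.eval 1 := by
    intro n
    induction n with
    | zero => simp
    | succ n ih =>
      rw [← ih]
      have h0 : (n : ℝ) + 1 ≠ 0 := by positivity
      have h1 := Tsum_shift k h0
      have h2 := rf_shift ((n : ℝ) + 1) k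
      have h3 := rf_succ (1 + ((n : ℝ) + 1)) k
      rw [hq, hq]
      push_cast
      rw [show (n : ℝ) + 1 + 1 = 1 + (n + 1) by ring, h3, h2,
        show Tsum k (1 + ((n : ℝ) + 1)) = Tsum k ((n : ℝ) + 1) + rf (1 + ((n : ℝ) + 1)) k by
          linarith]
      ring
  have : q = Polynomial.C (q.eval 1) := by
    apply Polynomial.eq_of_infinite_eval_eq
    refine Set.Infinite.mono (s := Set.range fun n : ℕ => (n : ℝ) + 1) ?_
      (Set.infinite_range_of_injective fun a b h => by simpa using h)
    rintro _ ⟨n, rfl⟩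
    simpa using hn n
  refine ⟨q.eval 1, fun y => ?_⟩
  rw [← hq]
  conv_lhs => rw [this]
  simp

lemma Tsum_eq (k : ℕ) (y : ℝ) :
    Tsum k y = (rf y (k + 1) - ∫ s in (0 : ℝ)..1, rf s (k + 1)) / (k + 1) := by
  obtain ⟨c, hc⟩ := Tsum_const k
  have h : ∫ y in (0 : ℝ)..1, ((k + 1 : ℝ) * Tsum k y - rf y (k + 1)) = c := by
    simp [hc]
  rw [intervalIntegral.integral_sub, intervalIntegral.integral_const_mul, Tsum_int] at h
  · rw [eq_div_iff (by positivity)]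
    have := hc y
    linarith
  · exact (continuous_const.mul (Tsum_cont k)).intervalIntegrable _ _
  · exact (rf_cont _).intervalIntegrable _ _

lemma int_rf_bounds (k : ℕ) : 0 ≤ ∫ s in (0 : ℝ)..1, rf s k ∧
    ∫ s in (0 : ℝ)..1, rf s k ≤ k.factorial := by
  constructor
  · exact intervalIntegral.integral_nonneg (by norm_num) fun s hs => rf_nonneg hs.1 k
  · have := intervalIntegral.integral_mono_on (a := (0 : ℝ)) (b := 1) (by norm_num)
      (μ := MeasureTheory.volume) ((rf_cont k).intervalIntegrable _ _)
      (intervalIntegrable_const (c := (k.factorial : ℝ)))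
      (fun s hs => rf_le hs.1 hs.2 k)
    simpa using this

lemma Tsum_abs (k : ℕ) {y : ℝ} (h0 : 0 ≤ y) (h1 : y ≤ 1) : |Tsum k y| ≤ k.factorial := by
  have a1 := rf_nonneg h0 (k + 1)
  have a2 := rf_le h0 h1 (k + 1)
  obtain ⟨b1, b2⟩ := int_rf_bounds (k + 1)
  rw [Tsum_eq, abs_div, abs_of_pos (by positivity : (0 : ℝ) < k + 1), div_le_iff₀ (by positivity)]
  rw [Nat.factorial_succ] at a2 b2
  push_cast at a2 b2
  rw [abs_le]; constructor <;> linarith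

lemma V_summable {x y : ℝ} (hx : 0 < x) (h0 : 0 ≤ y) (h1 : y ≤ 1) :
    Summable (fun k => Tsum k y / risingProdR x (k + 1)) ∧
    |∑' k, Tsum k y / risingProdR x (k + 1)| ≤ 1 / x := by
  have hb : ∀ k, ‖Tsum k y / risingProdR x (k + 1)‖ ≤ (k.factorial : ℝ) / risingProdR x (k + 1) := by
    intro k
    rw [Real.norm_eq_abs, abs_div, abs_of_pos (P_pos hx (k + 1))]
    exact div_le_div_of_nonneg_right (Tsum_abs k h0 h1) (P_pos hx _).le
  exact ⟨Summable.of_norm_bounded (fact_hasSum hx).summable hb,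
    tsum_of_norm_bounded (fact_hasSum hx) hb⟩

lemma P_shift (x : ℝ) (k : ℕ) : risingProdR x (k + 1) = (x + 1) * risingProdR (x + 1) k := by
  simp only [risingProdR, Finset.prod_range_succ']
  rw [mul_comm]
  congr 1
  · simp
  · exact Finset.prod_congr rfl fun i _ => by push_cast; ring

lemma P_diff {x : ℝ} (hx : 0 < x) (k : ℕ) :
    1 / risingProdR x (k + 1) - 1 / risingProdR (x + 1) (k + 1) =
      (k + 1) / risingProdR x (k + 2) := by
  have h1 := P_shift x (k + 1)
  have h2 := P_succ x (k + 1)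
  have p1 := P_pos hx (k + 1)
  have p2 := P_pos (by linarith : 0 < x + 1) (k + 1)
  have h3 : risingProdR (x + 1) (k + 1) = risingProdR x (k + 1) * (x + k + 2) / (x + 1) := by
    rw [eq_div_iff (by positivity), mul_comm, ← h1, h2]; push_cast; ring
  rw [show k + 2 = k + 1 + 1 from rfl, h2, h3]
  have : x + k + 2 ≠ 0 := by positivity
  push_cast
  field_simp
  ring

lemma gauss_hasSum {x s : ℝ} (hx : 0 < x) (h0 : 0 ≤ s) (h1 : s ≤ 1) :
    HasSum (fun k => rf s (k + 1) / risingProdR x (k + 2)) (1 / (x + 1 - s) - 1 / (x + 1)) := by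
  have hp : 0 < x + 1 - s := by linarith
  have step : ∀ k, rf s (k + 1) / risingProdR x (k + 2) =
      (rf s (k + 1) / risingProdR x (k + 1) - rf s (k + 2) / risingProdR x (k + 2))
        / (x + 1 - s) := by
    intro k
    have p1 := P_pos hx (k + 1)
    rw [show k + 2 = k + 1 + 1 from rfl, P_succ x (k + 1), rf_succ s (k + 1)]
    have : x + (k + 1 : ℕ) + 1 ≠ 0 := by positivity
    push_cast at this ⊢
    field_simp
    ring
  have fin : ∀ K, ∑ k ∈ Finset.range K, rf s (k + 1) / risingProdR x (k + 2) =
      (s / (x + 1) - rf s (K + 1) / risingProdR x (K + 1)) / (x + 1 - s) := by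
    intro K
    induction K with
    | zero => simp [rf, risingProdR]
    | succ n ih =>
      rw [Finset.sum_range_succ, ih, step n]
      ring
  rw [hasSum_iff_tendsto_nat_of_nonneg
    (fun k => div_nonneg (rf_nonneg h0 _) (P_pos hx _).le)]
  have lim : Tendsto (fun K => rf s K / risingProdR x K) atTop (𝓝 0) :=
    squeeze_zero (fun k => div_nonneg (rf_nonneg h0 _) (P_pos hx _).le)
      (fun k => div_le_div_of_nonneg_right (rf_le h0 h1 k) (P_pos hx k).le) (fact_tendsto hx)
  have lim2 := (((tendsto_add_atTop_iff_nat 1).2 lim).const_sub (s / (x + 1))).div_const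
    (x + 1 - s)
  simp only [fin]
  convert lim2 using 2
  field_simp
  ring

lemma gauss_int {x : ℝ} (hx : 0 < x) :
    HasSum (fun k => (∫ s in (0 : ℝ)..1, rf s (k + 1)) / risingProdR x (k + 2))
      (Real.log ((x + 1) / x) - 1 / (x + 1)) := by
  have hb : Summable fun k : ℕ => ((k + 1).factorial : ℝ) / risingProdR x (k + 2) :=
    (summable_nat_add_iff (f := fun k : ℕ => (k.factorial : ℝ) / risingProdR x (k + 1)) 1).2
      (fact_hasSum hx).summable
  have h : HasSum (fun k => ∫ s in (0 : ℝ)..1, rf s (k + 1) / risingProdR x (k + 2))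
      (∫ s in (0 : ℝ)..1, (1 / (x + 1 - s) - 1 / (x + 1))) := by
    refine intervalIntegral.hasSum_integral_of_dominated_convergence
      (fun k _ => ((k + 1).factorial : ℝ) / risingProdR x (k + 2)) ?_ ?_ ?_ ?_ ?_
    · intro k
      exact ((rf_cont (k + 1)).div_const _).aestronglyMeasurable
    · intro k
      refine Eventually.of_forall fun s hs => ?_
      rw [Set.uIoc_of_le (by norm_num)] at hs
      rw [Real.norm_eq_abs, abs_of_nonneg (div_nonneg (rf_nonneg hs.1.le _) (P_pos hx _).le)]
      exact div_le_div_of_nonneg_right (rf_le hs.1.le hs.2 _) (P_pos hx _).le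
    · exact Eventually.of_forall fun s hs => hb
    · exact intervalIntegrable_const
    · refine Eventually.of_forall fun s hs => ?_
      rw [Set.uIoc_of_le (by norm_num)] at hs
      exact gauss_hasSum hx hs.1.le hs.2
  simp only [intervalIntegral.integral_div] at h
  convert h using 1
  rw [intervalIntegral.integral_sub, intervalIntegral.integral_comp_sub_left (fun t => 1 / t),
    integral_one_div_of_pos]
  · simp
  · linarith
  · linarith
  · apply ContinuousOn.intervalIntegrable
    intro s hs
    rw [Set.uIcc_of_le (by norm_num)] at hs
    have : x + 1 - s ≠ 0 := by linarith [hs.2]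
    exact ContinuousAt.continuousWithinAt (by fun_prop (disch := assumption))
  · exact intervalIntegrable_const

/-- the value of the `a = 0` series -/
noncomputable def V (x y : ℝ) : ℝ := ∑' k, Tsum k y / risingProdR x (k + 1)

lemma V_diff {x y : ℝ} (hx : 0 < x) (h0 : 0 ≤ y) (h1 : y ≤ 1) :
    V x y - V (x + 1) y = 1 / (x + 1 - y) - Real.log ((x + 1) / x) := by
  have hx1 : 0 < x + 1 := by linarith
  have a := (V_summable hx h0 h1).1.hasSum.sub (V_summable hx1 h0 h1).1.hasSum
  have b := (gauss_hasSum hx h0 h1).sub (gauss_int hx)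
  have e : (fun k => Tsum k y / risingProdR x (k + 1) - Tsum k y / risingProdR (x + 1) (k + 1))
      = fun k => rf y (k + 1) / risingProdR x (k + 2) -
        (∫ s in (0 : ℝ)..1, rf s (k + 1)) / risingProdR x (k + 2) := by
    funext k
    have := P_diff hx k
    rw [div_eq_mul_one_div, div_eq_mul_one_div (Tsum k y) (risingProdR (x + 1) (k + 1)), ← mul_sub,
      this, Tsum_eq]
    have hk : (k + 1 : ℝ) ≠ 0 := by positivity
    field_simp
  rw [e] at a
  have := a.unique b
  unfold V
  rw [this]; ring

lemma V_iter {x y : ℝ} (hx : 0 < x) (h0 : 0 ≤ y) (h1 : y ≤ 1) (N : ℕ) :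
    V x y = (∑ j ∈ Finset.range N, 1 / (x - y + j + 1)) - Real.log (x + N) + Real.log x
      + V (x + N) y := by
  induction N with
  | zero => simp
  | succ n ih =>
    have hp : 0 < x + n := by positivity
    have := V_diff hp h0 h1
    rw [Real.log_div (by positivity) (by positivity)] at this
    rw [ih, Finset.sum_range_succ]
    push_cast
    rw [← add_assoc x, show x - y + n + 1 = x + n + 1 - y by ring]
    linarith

lemma V_eq {x : ℝ} (hx : 0 < x) : V x (Int.fract x) =
    Real.log x + Real.eulerMascheroniConstant - ∑ k ∈ Finset.Icc 1 ⌊x⌋₊, (1 : ℝ) / k := by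
  set n := ⌊x⌋₊ with hn
  have hy0 := Int.fract_nonneg x
  have hy1 := (Int.fract_lt_one x).le
  have hxn : x - Int.fract x = n := by
    have h1 : ((⌊x⌋₊ : ℤ)) = ⌊x⌋ := Int.natCast_floor_eq_floor hx.le
    have h2 : (⌊x⌋ : ℝ) = n := by rw [← h1]; simp [hn]
    rw [← h2]; exact Int.self_sub_fract x
  have harm : ∀ N : ℕ, (∑ j ∈ Finset.range N, 1 / ((n : ℝ) + j + 1)) =
      (harmonic (n + N) : ℝ) - ∑ k ∈ Finset.Icc 1 n, (1 : ℝ) / k := by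
    intro N
    induction N with
    | zero => simp [harmonic_eq_sum_Icc]
    | succ m ih =>
      rw [Finset.sum_range_succ, ih, ← add_assoc n, harmonic_succ]
      push_cast
      simp
      ring
  have l1 : Tendsto (fun N : ℕ => ((harmonic (n + N) : ℚ) : ℝ) - Real.log ((n + N : ℕ) : ℝ)) atTop
      (𝓝 Real.eulerMascheroniConstant) := by
    have := (tendsto_add_atTop_iff_nat n).2 Real.tendsto_harmonic_sub_log
    simpa [add_comm] using this
  have top : Tendsto (fun N : ℕ => x + (N : ℝ)) atTop atTop :=
    tendsto_atTop_add_const_left _ _ tendsto_natCast_atTop_atTop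
  have inv : Tendsto (fun N : ℕ => 1 / (x + (N : ℝ))) atTop (𝓝 0) := by
    simp only [one_div]
    exact top.inv_tendsto_atTop
  have l2 : Tendsto (fun N : ℕ => V (x + N) (Int.fract x)) atTop (𝓝 0) :=
    squeeze_zero_norm (fun N => (V_summable (by positivity) hy0 hy1).2) inv
  have l3 : Tendsto (fun N : ℕ => Real.log ((n + N : ℕ) : ℝ) - Real.log (x + N)) atTop (𝓝 0) := by
    have h : Tendsto (fun N : ℕ => 1 - Int.fract x * (1 / (x + (N : ℝ)))) atTop (𝓝 1) := by
      simpa using (inv.const_mul (Int.fract x)).const_sub 1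
    have h2 := (Real.continuousAt_log one_ne_zero).tendsto.comp h
    rw [Real.log_one] at h2
    refine h2.congr' ?_
    filter_upwards [eventually_gt_atTop 0] with N hN
    have hp : 0 < x + (N : ℝ) := by positivity
    have hq : ((n + N : ℕ) : ℝ) ≠ 0 := by positivity
    rw [Function.comp, ← Real.log_div hq hp.ne']
    congr 1
    push_cast
    rw [← hxn]
    field_simp
    ring
  have tot := ((l1.add l3).add l2).add_const
    (Real.log x - ∑ k ∈ Finset.Icc 1 n, (1 : ℝ) / k)
  have hc : Tendsto (fun _ : ℕ => V x (Int.fract x)) atTop (𝓝 (V x (Int.fract x))) :=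
    tendsto_const_nhds
  have hlim := tendsto_nhds_unique hc (tot.congr fun N => by
    have h := V_iter hx hy0 hy1 N
    rw [hxn, harm] at h
    rw [h]; ring)
  rw [hlim]; ring

lemma term_eq (x y : ℝ) (a k : ℕ) :
    (-1 : ℝ) ^ (k + 1 + a + 1) *
          (∑ l ∈ Finset.Icc 1 (k + 1),
            (-1 : ℝ) ^ l / (l + a) * (S1 (k + 1) (l + a) : ℝ) * bernPoly (l + a) y) /
        risingProdR x (k + 1) =
    (∑ m ∈ Finset.Icc 1 a, bernPoly m y / m *
        ((stirling1Unsigned (k + 1) m : ℝ) / risingProdR x (k + 1)))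
      - Tsum k y / risingProdR x (k + 1) := by
  have h1 : (-1 : ℝ) ^ (k + 1 + a + 1) *
          (∑ l ∈ Finset.Icc 1 (k + 1),
            (-1 : ℝ) ^ l / (l + a) * (S1 (k + 1) (l + a) : ℝ) * bernPoly (l + a) y) =
      - ∑ l ∈ Finset.Icc 1 (k + 1),
        (stirling1Unsigned (k + 1) (l + a) : ℝ) / ((l + a : ℕ) : ℝ) * bernoulliFun (l + a) y := by
    rw [Finset.mul_sum, ← Finset.sum_neg_distrib]
    refine Finset.sum_congr rfl fun l _ => ?_
    rw [S1, bern_eq]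
    push_cast
    have : (-1 : ℝ) ^ (k + 1 + a + 1) * (-1) ^ l * (-1) ^ (k + 1 + (l + a)) = -1 := by
      rw [← pow_add, ← pow_add,
        show k + 1 + a + 1 + l + (k + 1 + (l + a)) = 2 * (k + 1 + a + l) + 1 by ring, pow_succ,
        pow_mul]
      simp
    linear_combination ((stirling1Unsigned (k + 1) (l + a) : ℝ) / (l + a) *
      bernoulliFun (l + a) y) * this
  have h2 : ∑ l ∈ Finset.Icc 1 (k + 1),
        (stirling1Unsigned (k + 1) (l + a) : ℝ) / ((l + a : ℕ) : ℝ) * bernoulliFun (l + a) y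
      = Tsum k y - ∑ m ∈ Finset.Icc 1 a,
        (stirling1Unsigned (k + 1) m : ℝ) / m * bernoulliFun m y := by
    rw [eq_sub_iff_add_eq, add_comm, Tsum]
    have e : ∀ n, Finset.Icc 1 n = Finset.Ico 1 (n + 1) := fun n => by ext; simp
    simp only [e]
    rw [Finset.sum_Ico_add' (fun m => (stirling1Unsigned (k + 1) m : ℝ) / (m : ℝ) *
      bernoulliFun m y), add_comm 1 a, Finset.sum_Ico_consecutive _ (by omega) (by omega)]
    symm
    apply Finset.sum_subset
    · intro m hm; simp only [Finset.mem_Ico] at hm ⊢; omega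
    · intro m hm hm'
      simp only [Finset.mem_Ico] at hm hm'
      rw [u_gt _ _ (by omega)]; simp
  rw [h1, h2, neg_sub, sub_div, Finset.sum_div]
  congr 1
  exact Finset.sum_congr rfl fun m _ => by rw [bern_eq]; ring

open Finset in
/-- Other harmonic sum version (the harmonic-sum formula of Theorem 5.3). -/
theorem other_harmonic_formula (x : ℝ) (hx : 0 < x) (a : ℕ) :
    Summable (fun k : ℕ =>
      |(-1 : ℝ) ^ (k + 1 + a + 1) *
          (∑ l ∈ Icc 1 (k + 1),
            (-1 : ℝ) ^ l / (l + a) * (S1 (k + 1) (l + a) : ℝ) *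
              bernPoly (l + a) (Int.fract x)) /
        risingProdR x (k + 1)|) ∧
    (∑ k ∈ Icc 1 ⌊x⌋₊, (1 : ℝ) / k) =
      Real.log x + Real.eulerMascheroniConstant -
        (∑ k ∈ Icc 1 a, bernPoly k (Int.fract x) / (k * x ^ k)) +
        ∑' k : ℕ,
          (-1 : ℝ) ^ (k + 1 + a + 1) *
              (∑ l ∈ Icc 1 (k + 1),
                (-1 : ℝ) ^ l / (l + a) * (S1 (k + 1) (l + a) : ℝ) *
                  bernPoly (l + a) (Int.fract x)) /
            risingProdR x (k + 1) := by
  have hy0 := Int.fract_nonneg x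
  have hy1 := (Int.fract_lt_one x).le
  have hV : HasSum (fun k => Tsum k (Int.fract x) / risingProdR x (k + 1)) (V x (Int.fract x)) :=
    (V_summable hx hy0 hy1).1.hasSum
  have hA : HasSum (fun k => ∑ m ∈ Icc 1 a, bernPoly m (Int.fract x) / m *
        ((stirling1Unsigned (k + 1) m : ℝ) / risingProdR x (k + 1)))
      (∑ m ∈ Icc 1 a, bernPoly m (Int.fract x) / m * (1 / x ^ m)) := by
    refine hasSum_sum fun m hm => ?_
    obtain ⟨j, rfl⟩ : ∃ j, m = j + 1 := ⟨m - 1, by have := (mem_Icc.1 hm).1; omega⟩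
    exact (stirling_hasSum' hx j).mul_left _
  have h := hA.sub hV
  simp only [term_eq]
  refine ⟨h.summable.abs, ?_⟩
  rw [h.tsum_eq, V_eq hx]
  have : ∑ m ∈ Icc 1 a, bernPoly m (Int.fract x) / m * (1 / x ^ m) =
      ∑ k ∈ Icc 1 a, bernPoly k (Int.fract x) / (k * x ^ k) :=
    sum_congr rfl fun m _ => by rw [div_mul_div_comm, mul_one]
  rw [this]; ring
end

section
/- Stirling's convergent formula for the partial sums of ζ(2): For every natural number n ≥ 1, the series ∑_{k=1}^{∞} (k−1)! / ((k+1) · n(n+1)(n+2)⋯(n+k)) converges, and ∑_{k=1}^{n} 1/k² = ζ(2) − 1/n + ∑_{k=1}^{∞} (k−1)! / ((k+1) · n(n+1)(n+2)⋯(n+k)). -/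
open Filter Topology in
theorem aux_prod_lower (x : ℝ) (hx : 0 < x) (hx1 : 1 ≤ x) (k : ℕ) :
    x * ((k + 1).factorial : ℝ) ≤ ∏ i ∈ Finset.range (k + 2), (x + i) := by
  induction k with
  | zero => simp [Finset.prod_range_succ]; nlinarith
  | succ k ih =>
    rw [Finset.prod_range_succ, Nat.factorial_succ]
    have h : (0:ℝ) ≤ (k+1).factorial := by positivity
    push_cast at *
    have : x * (((k:ℝ) + 1 + 1) * ((k + 1).factorial : ℝ))
      = (x * ((k + 1).factorial : ℝ)) * ((k:ℝ)+2) := by ring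
    rw [this]
    exact mul_le_mul ih (by linarith) (by positivity) (le_trans (by positivity) ih)

theorem aux_prod_pos (x : ℝ) (hx : 0 < x) (k : ℕ) :
    0 < ∏ i ∈ Finset.range k, (x + i) :=
  Finset.prod_pos fun i _ => by positivity

noncomputable def auxT (x : ℝ) (k : ℕ) : ℝ :=
  (k.factorial : ℝ) / (((k : ℝ) + 2) * ∏ i ∈ Finset.range (k + 2), (x + i))

noncomputable def auxU (x : ℝ) (k : ℕ) : ℝ :=
  (k.factorial : ℝ) / ∏ i ∈ Finset.range (k + 2), (x + i)

theorem auxU_le (x : ℝ) (hx1 : 1 ≤ x) (k : ℕ) : auxU x k ≤ 1 / x * (1 / ((k : ℝ) + 1)) := by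
  have hx : 0 < x := by linarith
  have h := aux_prod_lower x hx hx1 k
  have hf : (0:ℝ) < k.factorial := by positivity
  unfold auxU
  rw [div_le_iff₀ (aux_prod_pos x hx _)]
  have : (k.factorial : ℝ) = 1 / x * (1 / ((k : ℝ) + 1)) * (x * ((k + 1).factorial : ℝ)) := by
    rw [Nat.factorial_succ]; push_cast; field_simp
  calc (k.factorial : ℝ) = _ := this
    _ ≤ _ := by gcongr

theorem auxU_nonneg (x : ℝ) (hx1 : 1 ≤ x) (k : ℕ) : 0 ≤ auxU x k := by
  have := aux_prod_pos x (by linarith) (k+2)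
  unfold auxU; positivity

theorem auxT_eq (x : ℝ) (k : ℕ) : auxT x k = auxU x k / ((k:ℝ) + 2) := by
  unfold auxT auxU; rw [div_div, mul_comm]

theorem auxT_nonneg (x : ℝ) (hx1 : 1 ≤ x) (k : ℕ) : 0 ≤ auxT x k := by
  rw [auxT_eq]; have := auxU_nonneg x hx1 k; positivity

theorem auxT_le (x : ℝ) (hx1 : 1 ≤ x) (k : ℕ) :
    auxT x k ≤ 1 / x * (1 / ((k : ℝ) + 1) ^ 2) := by
  have hx : 0 < x := by linarith
  rw [auxT_eq]
  calc auxU x k / ((k:ℝ) + 2) ≤ (1 / x * (1 / ((k : ℝ) + 1))) / ((k:ℝ) + 1) := by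
        gcongr
        · exact auxU_le x hx1 k
        · norm_num
    _ = _ := by field_simp

theorem aux_sq_summable : Summable (fun k : ℕ => 1 / ((k : ℝ) + 1) ^ 2) := by
  have := (summable_nat_add_iff 1).2 (hasSum_zeta_two.summable)
  simpa using this

theorem auxT_summable (x : ℝ) (hx1 : 1 ≤ x) : Summable (auxT x) :=
  Summable.of_nonneg_of_le (auxT_nonneg x hx1) (auxT_le x hx1) (aux_sq_summable.mul_left _)

theorem auxU_tendsto (x : ℝ) (hx1 : 1 ≤ x) : Filter.Tendsto (auxU x) Filter.atTop (nhds 0) := by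
  have h : Filter.Tendsto (fun k : ℕ => 1 / x * (1 / ((k : ℝ) + 1))) Filter.atTop (nhds 0) := by
    simpa using (tendsto_one_div_add_atTop_nhds_zero_nat (𝕜 := ℝ)).const_mul (1 / x)
  exact squeeze_zero (auxU_nonneg x hx1) (auxU_le x hx1) h

theorem aux_prod_shift (x : ℝ) (k : ℕ) :
    x * ∏ i ∈ Finset.range k, (x + 1 + i) = ∏ i ∈ Finset.range (k + 1), (x + i) := by
  rw [Finset.prod_range_succ', mul_comm]
  congr 1
  · apply Finset.prod_congr rfl; intro i _; push_cast; ring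
  · simp

theorem auxT_sub (x : ℝ) (hx1 : 1 ≤ x) (k : ℕ) :
    auxT x k - auxT (x + 1) k = (auxU x k - auxU x (k + 1)) / (x + 1) := by
  have hx : 0 < x := by linarith
  have h0 := aux_prod_pos x hx (k+2)
  have h1 := aux_prod_pos (x+1) (by linarith) (k+2)
  have h2 := aux_prod_shift x (k+2)
  rw [Finset.prod_range_succ _ (k+2)] at h2
  unfold auxT auxU
  rw [Finset.prod_range_succ _ (k+1+1), Nat.factorial_succ]
  have h3 : ∏ i ∈ Finset.range (k+2), (x + 1 + i)
    = (∏ i ∈ Finset.range (k+2), (x + i)) * (x + ((k:ℝ)+2)) / x := by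
    rw [eq_div_iff hx.ne', mul_comm, h2]; push_cast; ring
  rw [h3]
  rw [show k + 1 + 1 = k + 2 from rfl]
  generalize ∏ i ∈ Finset.range (k+2), (x + (i:ℝ)) = P at *
  push_cast
  have : x + ((k:ℝ)+2) ≠ 0 := by positivity
  have : x + ((k:ℝ)+1+1) ≠ 0 := by positivity
  field_simp
  ring

theorem auxT_tsum_sub (x : ℝ) (hx1 : 1 ≤ x) :
    (∑' k, auxT x k) - ∑' k, auxT (x + 1) k = 1 / (x * (x + 1) ^ 2) := by
  have hs := (auxT_summable x hx1).hasSum.sub (auxT_summable (x+1) (by linarith)).hasSum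
  have h1 := hs.tendsto_sum_nat
  refine tendsto_nhds_unique h1 ?_
  have : (fun N => ∑ i ∈ Finset.range N, (auxT x i - auxT (x+1) i))
      = fun N => (auxU x 0 - auxU x N) / (x + 1) := by
    funext N
    rw [← Finset.sum_range_sub', Finset.sum_div]
    exact Finset.sum_congr rfl fun k _ => auxT_sub x hx1 k
  rw [this]
  have h2 := ((auxU_tendsto x hx1).const_sub (auxU x 0)).div_const (x+1)
  convert h2 using 2
  have : x ≠ 0 := by linarith
  have : x + 1 ≠ 0 := by linarith
  simp [auxU, Finset.prod_range_succ]
  field_simp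

theorem auxS_tendsto :
    Filter.Tendsto (fun m : ℕ => ∑' k, auxT ((m:ℝ) + 1) k) Filter.atTop (nhds 0) := by
  have h : Filter.Tendsto (fun m : ℕ => 1 / ((m:ℝ) + 1) * ∑' k : ℕ, 1 / ((k : ℝ) + 1) ^ 2)
      Filter.atTop (nhds 0) := by
    have h0 := (tendsto_one_div_add_atTop_nhds_zero_nat (𝕜 := ℝ)).mul_const
      (∑' k : ℕ, 1 / ((k : ℝ) + 1) ^ 2)
    rwa [zero_mul] at h0
  refine squeeze_zero (fun m => tsum_nonneg (auxT_nonneg _ (by simp))) (fun m => ?_) h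
  rw [← tsum_mul_left]
  exact (auxT_summable _ (by simp)).tsum_le_tsum (auxT_le _ (by simp)) (aux_sq_summable.mul_left _)

noncomputable def auxF (m : ℕ) : ℝ :=
  ∑ k ∈ Finset.range (m + 1), 1 / ((k : ℝ) + 1) ^ 2 + 1 / ((m : ℝ) + 1)
    - ∑' k, auxT ((m:ℝ) + 1) k

theorem auxF_succ (m : ℕ) : auxF (m + 1) = auxF m := by
  have h := auxT_tsum_sub ((m:ℝ) + 1) (by simp)
  unfold auxF
  rw [Finset.sum_range_succ _ (m+1)]
  push_cast
  have h2 : ∑' k, auxT ((m:ℝ) + 1 + 1) k = ∑' k, auxT ((m:ℝ) + 1) k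
    - 1 / (((m:ℝ) + 1) * ((m:ℝ) + 1 + 1) ^ 2) := by linarith
  rw [h2]
  have : (m:ℝ) + 1 ≠ 0 := by positivity
  have : (m:ℝ) + 1 + 1 ≠ 0 := by positivity
  field_simp
  ring

theorem auxF_eq (m : ℕ) : auxF m = Real.pi ^ 2 / 6 := by
  have hc : ∀ j, auxF j = auxF 0 := fun j => by
    induction j with
    | zero => rfl
    | succ j ih => rw [auxF_succ, ih]
  rw [hc m]
  have ht : Filter.Tendsto auxF Filter.atTop (nhds (Real.pi ^ 2 / 6)) := by
    have h1 := (Filter.tendsto_add_atTop_iff_nat 2).2 hasSum_zeta_two.tendsto_sum_nat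
    have h2 := (h1.add (tendsto_one_div_add_atTop_nhds_zero_nat (𝕜 := ℝ))).sub auxS_tendsto
    simp only [add_zero, sub_zero] at h2
    refine h2.congr fun j => ?_
    unfold auxF
    rw [Finset.sum_range_succ']
    simp
  have h3 : auxF = fun _ => auxF 0 := funext hc
  rw [h3] at ht
  exact tendsto_nhds_unique tendsto_const_nhds ht

open Finset in
/-- Stirling's convergent formula for the partial sums of `ζ(2)`
(formula (47) of the paper). -/
theorem stirling_zeta_two_formula (n : ℕ) (hn : 1 ≤ n) :
    Summable (fun k : ℕ =>
      ((k.factorial : ℂ)) /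
        (((k : ℂ) + 2) * ∏ i ∈ Finset.range (k + 2), ((n : ℂ) + i))) ∧
    (∑ k ∈ Icc 1 n, (1 : ℂ) / (k : ℂ) ^ 2) =
      riemannZeta 2 - 1 / (n : ℂ) +
        ∑' k : ℕ,
          ((k.factorial : ℂ)) /
            (((k : ℂ) + 2) * ∏ i ∈ Finset.range (k + 2), ((n : ℂ) + i)) := by
  obtain ⟨m, rfl⟩ : ∃ m, n = m + 1 := ⟨n - 1, by omega⟩
  have hT : (fun k : ℕ => ((k.factorial : ℂ)) /
        (((k : ℂ) + 2) * ∏ i ∈ Finset.range (k + 2), (((m + 1 : ℕ) : ℂ) + i)))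
      = fun k => ((auxT ((m:ℝ) + 1) k : ℝ) : ℂ) := by
    funext k
    unfold auxT
    push_cast
    rfl
  rw [hT]
  refine ⟨Complex.ofRealCLM.summable (auxT_summable _ (by simp)), ?_⟩
  rw [← Complex.ofReal_tsum, riemannZeta_two]
  have hF := auxF_eq m
  unfold auxF at hF
  have hsum : (∑ k ∈ Icc 1 (m + 1), (1 : ℂ) / (k : ℂ) ^ 2)
      = ((∑ k ∈ Finset.range (m + 1), 1 / ((k : ℝ) + 1) ^ 2 : ℝ) : ℂ) := by
    rw [← Finset.Ico_add_one_right_eq_Icc, Finset.sum_Ico_eq_sum_range]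
    push_cast
    refine Finset.sum_congr (by simp) fun i _ => ?_
    rw [add_comm]
  rw [hsum]
  have h5 : ∑ k ∈ Finset.range (m + 1), 1 / ((k : ℝ) + 1) ^ 2
    = Real.pi ^ 2 / 6 - 1 / ((m : ℝ) + 1) + ∑' k, auxT ((m:ℝ) + 1) k := by linarith
  rw [h5]
  push_cast
  rfl
end

section
/- Extended generalized Faulhaber formula for the sum of square roots: Let x ∈ ℝ with x > 0. Then the series ∑_{k=1}^{∞} (−1)^k (∑_{l=1}^{k} C(3/2, l) S_k^{(1)}(l) B_l({x})) / ((x+1)(x+2)⋯(x+k)) converges absolutely, and ∑_{k=1}^{⌊x⌋} √k = (2/3) x^{3/2} − (1/(4π)) ζ(3/2) + (2/3) x^{3/2} ∑_{k=1}^{∞} (−1)^k (∑_{l=1}^{k} C(3/2, l) S_k^{(1)}(l) B_l({x})) / ((x+1)(x+2)⋯(x+k)). -/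
namespace FH
open Finset Filter Topology MeasureTheory

noncomputable def qq (z : ℂ) (k : ℕ) : ℂ := ∏ j ∈ range k, (1 + z / ((j : ℂ) + 1))

noncomputable def hh (k : ℕ) : ℝ := ∑ j ∈ range k, 1 / ((j : ℝ) + 1)

noncomputable def DD (k : ℕ) (z : ℂ) : ℂ := (k.factorial : ℂ) * z * (qq z k - 1)

lemma prod_le_exp (τ : ℝ) (n : ℕ) :
    ∏ j ∈ range n, (1 + τ ^ 2 / ((j : ℝ) + 1) ^ 2) ≤ Real.exp (Real.pi * |τ|) := by
  wlog hτ : 0 < τ generalizing τ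
  · rcases eq_or_lt_of_le (not_lt.mp hτ) with h | h
    · subst h; simp
    · have := this (-τ) (by linarith)
      simpa using this
  have hpi := Real.pi_pos
  have h1 := Complex.tendsto_euler_sin_prod (Complex.I * τ)
  have h2 : Tendsto (fun n : ℕ => Real.pi * τ * ∏ j ∈ range n, (1 + τ ^ 2 / ((j : ℝ) + 1) ^ 2)) atTop
      (𝓝 (Real.sinh (Real.pi * τ))) := by
    have h3 : Tendsto (fun n : ℕ => ((Real.pi * τ * ∏ j ∈ range n, (1 + τ ^ 2 / ((j : ℝ) + 1) ^ 2) : ℝ) : ℂ)) atTop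
      (𝓝 ((Real.sinh (Real.pi * τ) : ℝ) : ℂ)) := by
      have := h1.const_mul (-Complex.I)
      convert this using 2
      · push_cast
        have : ∀ j : ℕ, (1 - (Complex.I * τ) ^ 2 / ((j : ℂ) + 1) ^ 2) = 1 + (τ:ℂ) ^ 2 / ((j : ℂ) + 1) ^ 2 := by
          intro j; rw [mul_pow, Complex.I_sq]; ring
        simp only [this]
        linear_combination ((Real.pi : ℂ) * τ * ∏ j ∈ range _, (1 + (τ:ℂ) ^ 2 / ((j : ℂ) + 1) ^ 2)) * Complex.I_sq
      · rw [show (Real.pi : ℂ) * (Complex.I * τ) = (Real.pi * τ : ℂ) * Complex.I by ring, Complex.sin_mul_I]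
        push_cast
        linear_combination (Complex.sinh (Real.pi * τ)) * Complex.I_sq
    have := (Complex.continuous_re.tendsto _).comp h3
    simpa only [Function.comp_def, Complex.ofReal_re] using this
  have hmono : Monotone (fun n : ℕ => Real.pi * τ * ∏ j ∈ range n, (1 + τ ^ 2 / ((j : ℝ) + 1) ^ 2)) := by
    apply monotone_nat_of_le_succ
    intro n
    rw [prod_range_succ]
    have hp : 0 ≤ ∏ j ∈ range n, (1 + τ ^ 2 / ((j : ℝ) + 1) ^ 2) := prod_nonneg fun j _ => by positivity
    have : 0 ≤ τ ^ 2 / ((n : ℝ) + 1) ^ 2 := by positivity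
    gcongr
    nlinarith [mul_nonneg hp this]
  have h4 := hmono.ge_of_tendsto h2 n
  have h5 : Real.sinh (Real.pi * τ) ≤ Real.pi * τ * Real.exp (Real.pi * τ) := by
    set y := Real.pi * τ with hy
    have hy0 : 0 < y := by positivity
    rw [Real.sinh_eq]
    have e1 : Real.exp (-y) ≥ 1 - y := by linarith [Real.add_one_le_exp (-y)]
    have e3 := Real.add_one_le_exp (-(2*y))
    have e4 : Real.exp (-y) = Real.exp y * Real.exp (-(2*y)) := by rw [← Real.exp_add]; ring_nf
    rw [e4]
    have := Real.exp_pos y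
    nlinarith
  rw [abs_of_pos hτ]
  have := h4.trans h5
  exact le_of_mul_le_mul_left this (by positivity)

lemma norm_qq_le {z : ℂ} (hz : z.re = 0) (k : ℕ) : ‖qq z k‖ ≤ Real.exp (Real.pi * ‖z‖) := by
  have hzn : ‖z‖ = |z.im| := by
    rw [← Complex.re_add_im z, hz]; simp
  rw [hzn]
  refine le_trans ?_ (prod_le_exp z.im k)
  rw [qq, norm_prod]
  refine prod_le_prod (fun _ _ => norm_nonneg _) fun j _ => ?_
  have h0 : (0:ℝ) ≤ z.im ^ 2 / ((j : ℝ) + 1) ^ 2 := by positivity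
  have h1 : ‖1 + z / ((j : ℂ) + 1)‖ ^ 2 = 1 + z.im ^ 2 / ((j : ℝ) + 1) ^ 2 := by
    have : 1 + z / ((j : ℂ) + 1) = ((1 : ℝ) : ℂ) + ((z.im / ((j:ℝ) + 1) : ℝ) : ℂ) * Complex.I := by
      conv_lhs => rw [← Complex.re_add_im z, hz]
      push_cast; ring
    rw [this, ← Complex.normSq_eq_norm_sq, Complex.normSq_add_mul_I, div_pow]
    ring
  have h2 := norm_nonneg (1 + z / ((j : ℂ) + 1))
  nlinarith

lemma norm_qq_sub_le {z : ℂ} (hz : z.re = 0) (k : ℕ) :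
    ‖qq z k - 1‖ ≤ ‖z‖ * hh k * Real.exp (Real.pi * ‖z‖) := by
  induction k with
  | zero => simp [qq, hh]
  | succ k ih =>
    have e : qq z (k+1) - 1 = (qq z k - 1) + qq z k * (z / ((k : ℂ) + 1)) := by
      simp only [qq, prod_range_succ]; ring
    rw [e]
    refine (norm_add_le _ _).trans ?_
    have e2 : ‖qq z k * (z / ((k : ℂ) + 1))‖ ≤ Real.exp (Real.pi * ‖z‖) * (‖z‖ * (1 / ((k:ℝ) + 1))) := by
      rw [norm_mul, norm_div]
      have : ‖(k : ℂ) + 1‖ = (k : ℝ) + 1 := by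
        rw [show (k : ℂ) + 1 = ((k + 1 : ℕ) : ℂ) by push_cast; ring, Complex.norm_natCast]; push_cast; ring
      rw [this, div_eq_mul_one_div ‖z‖]
      gcongr
      exact norm_qq_le hz k
    have : hh (k+1) = hh k + 1 / ((k:ℝ)+1) := by simp only [hh, sum_range_succ]
    rw [this]
    nlinarith

lemma hh_nonneg (k : ℕ) : 0 ≤ hh k := sum_nonneg fun j _ => by positivity

lemma norm_DD_le {z : ℂ} (hz : z.re = 0) (k : ℕ) :
    ‖DD k z‖ ≤ k.factorial * hh k * (‖z‖ ^ 2 * Real.exp (Real.pi * ‖z‖)) := by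
  rw [DD, norm_mul, norm_mul, Complex.norm_natCast]
  have := norm_qq_sub_le hz k
  calc (k.factorial : ℝ) * ‖z‖ * ‖qq z k - 1‖ ≤ k.factorial * ‖z‖ * (‖z‖ * hh k * Real.exp (Real.pi * ‖z‖)) := by gcongr
    _ = _ := by ring

lemma rpR_pos {x : ℝ} (hx : 0 < x) (k : ℕ) : 0 < risingProdR x k :=
  prod_pos fun j _ => by positivity

lemma rp_eq (x : ℝ) (k : ℕ) : risingProd x k = (risingProdR x k : ℂ) := by
  simp [risingProd, risingProdR]

noncomputable def uu (x : ℝ) (k : ℕ) : ℝ := k.factorial / risingProdR x k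

lemma uu_sub {x : ℝ} (hx : 0 < x) (k : ℕ) :
    uu x k - uu x (k+1) = x * (k.factorial / risingProdR x (k+1)) := by
  have h := rpR_pos hx k
  have e : risingProdR x (k+1) = risingProdR x k * (x + k + 1) := by simp [risingProdR, prod_range_succ]
  simp only [uu, e, Nat.factorial_succ]
  have : x + k + 1 ≠ 0 := by positivity
  push_cast
  field_simp
  ring

lemma uu_pos {x : ℝ} (hx : 0 < x) (k : ℕ) : 0 < uu x k := by
  have := rpR_pos hx k
  unfold uu; positivity

lemma uu_succ {x : ℝ} (_ : 0 < x) (k : ℕ) :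
    uu x (k+1) = (k+1) * (k.factorial / risingProdR x (k+1)) := by
  simp only [uu, Nat.factorial_succ]; push_cast; ring

lemma uu_bound {x : ℝ} (hx : 0 < x) (k : ℕ) : uu x k * (1 + x * hh k) ≤ 1 := by
  induction k with
  | zero => simp [uu, hh, risingProdR]
  | succ k ih =>
    have h1 := uu_sub hx k
    have h2 := uu_succ hx k
    have : hh (k+1) = hh k + 1 / ((k:ℝ)+1) := by simp only [hh, sum_range_succ]
    rw [this]
    set a := (k.factorial / risingProdR x (k+1))
    have ha : 0 < a := by have := rpR_pos hx (k+1); positivity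
    have h3 := hh_nonneg k
    have e : uu x k = uu x (k+1) + x * a := by linarith
    rw [e] at ih
    have e2 : uu x (k+1) * (1 + x * (hh k + 1 / ((k:ℝ)+1))) = uu x (k+1) * (1 + x * hh k) + x * a := by
      rw [h2]; field_simp; ring
    rw [e2]
    have : 0 ≤ x * a * (x * hh k) := by positivity
    nlinarith

lemma tendsto_hh : Tendsto hh atTop atTop := by
  have := Real.tendsto_sum_range_one_div_nat_succ_atTop
  exact this

lemma tendsto_uu {x : ℝ} (hx : 0 < x) : Tendsto (uu x) atTop (𝓝 0) := by
  have h1 : Tendsto (fun k => 1 + x * hh k) atTop atTop :=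
    tendsto_atTop_add_const_left _ _ (tendsto_hh.const_mul_atTop hx)
  refine squeeze_zero (fun k => (uu_pos hx k).le) (fun k => ?_) h1.inv_tendsto_atTop
  have : 0 < 1 + x * hh k := by have := hh_nonneg k; positivity
  simp only [Pi.inv_apply]
  rw [← one_div, le_div_iff₀ this]
  exact uu_bound hx k

lemma hasSum_fac {x : ℝ} (hx : 0 < x) :
    HasSum (fun k : ℕ => (k.factorial : ℝ) / risingProdR x (k+1)) (1 / x) := by
  rw [hasSum_iff_tendsto_nat_of_nonneg (fun k => by have := rpR_pos hx (k+1); positivity)]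
  have e : ∀ n, ∑ k ∈ range n, (k.factorial : ℝ) / risingProdR x (k+1) = (1 - uu x n) / x := by
    intro n
    induction n with
    | zero => simp [uu, risingProdR]
    | succ n ih =>
      rw [sum_range_succ, ih]
      have := uu_sub hx n
      field_simp at this ⊢
      linarith
  simp only [e]
  simpa using (tendsto_uu hx).const_sub 1 |>.div_const x

lemma summable_fac_hh {x : ℝ} (hx : 0 < x) :
    Summable (fun k : ℕ => (k.factorial : ℝ) * hh k / risingProdR x (k+1)) := by
  have hpos : ∀ k : ℕ, 0 < (k.factorial : ℝ) / risingProdR x (k+1) := fun k => by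
    have := rpR_pos hx (k+1); positivity
  refine summable_of_sum_range_le (c := 1 / x / x) (fun k => ?_) (fun n => ?_)
  · have := rpR_pos hx (k+1); have := hh_nonneg k; positivity
  · have e : ∀ n, ∑ k ∈ range n, (k.factorial : ℝ) * hh k / risingProdR x (k+1)
        = (∑ k ∈ range n, (k.factorial : ℝ) / risingProdR x (k+1) - hh n * uu x n) / x := by
      intro n
      induction n with
      | zero => simp [hh]
      | succ n ih =>
        rw [sum_range_succ, sum_range_succ, ih]
        have h1 := uu_sub hx n
        have h2 := uu_succ hx n
        have h3 : hh (n+1) = hh n + 1 / ((n:ℝ)+1) := by simp only [hh, sum_range_succ]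
        rw [h3]
        rw [mul_div_right_comm]
        set a := (n.factorial / risingProdR x (n+1))
        have e : uu x n = uu x (n+1) + x * a := by linarith
        rw [e, h2]
        field_simp
        ring
    rw [e]
    gcongr
    have h1 := sum_le_hasSum (range n) (fun k _ => (hpos k).le) (hasSum_fac hx)
    have := mul_nonneg (hh_nonneg n) (uu_pos hx n).le
    linarith

lemma hasSum_DD {x : ℝ} (hx : 0 < x) {z : ℂ} (hz : z.re = 0) :
    HasSum (fun k : ℕ => DD k z / risingProd x (k+1)) (z ^ 2 / (x * (x - z))) := by
  have hxz : (x : ℂ) - z ≠ 0 := by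
    intro h
    have := congrArg Complex.re h
    simp [hz] at this; linarith
  have hx0 : (x : ℂ) ≠ 0 := by exact_mod_cast hx.ne'
  have hs : Summable (fun k : ℕ => DD k z / risingProd x (k+1)) := by
    refine Summable.of_norm_bounded ((summable_fac_hh hx).mul_right (‖z‖ ^ 2 * Real.exp (Real.pi * ‖z‖))) fun k => ?_
    rw [norm_div, rp_eq, Complex.norm_real, Real.norm_of_nonneg (rpR_pos hx _).le, div_mul_eq_mul_div]
    have := rpR_pos hx (k+1)
    gcongr
    exact norm_DD_le hz k
  have e : ∀ n, ∑ k ∈ range n, DD k z / risingProd x (k+1)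
      = z * (1 - qq z n * uu x n) / (x - z) - z * (1 - uu x n) / x := by
    intro n
    induction n with
    | zero => simp [qq, uu, risingProdR]
    | succ n ih =>
      rw [sum_range_succ, ih]
      have h1 := uu_sub hx n
      have h2 := uu_succ hx n
      have hq : qq z (n+1) = qq z n * (1 + z / ((n:ℂ) + 1)) := by simp [qq, prod_range_succ]
      have hD : DD n z / risingProd x (n+1) = z * (qq z n - 1) * ((n.factorial / risingProdR x (n+1) : ℝ) : ℂ) := by
        rw [DD, rp_eq]; push_cast; ring
      rw [hD, hq]
      set a := (n.factorial / risingProdR x (n+1))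
      have e : uu x n = uu x (n+1) + x * a := by linarith
      rw [e, h2]
      have : (n : ℂ) + 1 ≠ 0 := by exact_mod_cast n.succ_ne_zero
      push_cast
      field_simp
      ring
  have ht := hs.hasSum.tendsto_sum_nat
  simp only [e] at ht
  have hu : Tendsto (fun n => ((uu x n : ℝ) : ℂ)) atTop (𝓝 0) := by
    have := (Complex.continuous_ofReal.tendsto _).comp (tendsto_uu hx)
    simpa [Function.comp_def] using this
  have hqu : Tendsto (fun n => qq z n * uu x n) atTop (𝓝 0) := by
    refine squeeze_zero_norm (a := fun n => Real.exp (Real.pi * ‖z‖) * uu x n) (fun n => ?_) ?_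
    · rw [norm_mul, Complex.norm_real, Real.norm_of_nonneg (uu_pos hx n).le]
      gcongr
      · exact (uu_pos hx n).le
      · exact norm_qq_le hz n
    · simpa using (tendsto_uu hx).const_mul (Real.exp (Real.pi * ‖z‖))
  have ht2 := (((hqu.const_sub 1).const_mul z).div_const (x - z)).sub
    (((hu.const_sub 1).const_mul z).div_const (x:ℂ))
  have := tendsto_nhds_unique ht ht2
  convert hs.hasSum using 1
  rw [this]
  field_simp
  ring

end FH

namespace FH
open Finset Filter Topology MeasureTheory

lemma hs_congr {ι : Type*} {f f' : ι → ℂ} {a a' : ℂ} (h : HasSum f a) (hf : ∀ i, f' i = f i) (ha : a' = a) :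
    HasSum f' a' := by
  rw [ha, funext hf]; exact h

noncomputable def bb (n : ℤ) : ℂ := 2 * Real.pi * Complex.I * n

lemma bernPoly_eq (l : ℕ) (t : ℝ) : bernPoly l t = bernoulliFun l t := by
  rw [bernoulliFun, Polynomial.bernoulli_def, bernPoly, ← sum_range_reflect, Polynomial.eval_map, Polynomial.eval₂_finsetSum]
  refine sum_congr rfl fun k hk => ?_
  have hk' : k ≤ l := by simpa [Nat.lt_succ_iff] using hk
  rw [Polynomial.eval₂_monomial]
  have h1 : l + 1 - 1 - k = l - k := by omega
  have h2 : l - (l - k) = k := by omega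
  rw [h1, h2, Nat.choose_symm hk', map_mul]
  simp only [eq_ratCast, Rat.cast_natCast]
  ring

lemma hasSum_bern {l : ℕ} (hl : 2 ≤ l) {t : ℝ} (ht : t ∈ Set.Icc (0:ℝ) 1) :
    HasSum (fun n : ℤ => Complex.exp (bb n * t) / bb n ^ l) (-(bernPoly l t : ℂ) / l.factorial) := by
  have h := (hasSum_one_div_pow_mul_fourier_mul_bernoulliFun hl ht).mul_left (1 / (2 * Real.pi * Complex.I) ^ l)
  rw [bernPoly_eq]
  refine hs_congr h (fun n => ?_) ?_
  · rw [fourier_coe_apply, bb, mul_pow (2 * (Real.pi:ℂ) * Complex.I)]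
    simp only [Complex.ofReal_one, div_one]
    rw [mul_right_comm _ (n : ℂ) (t : ℂ)]
    simp only [div_eq_mul_inv, mul_inv]
    ring_nf
  · have : (2 * (Real.pi:ℂ) * Complex.I) ^ l ≠ 0 := by
      apply pow_ne_zero
      simp [Real.pi_ne_zero]
    field_simp

lemma stir_zero (k : ℕ) : stirling1Unsigned (k+1) 0 = 0 := by
  induction k with
  | zero => simp [stirling1Unsigned]
  | succ k ih => rw [stirling1Unsigned, ih]; simp

lemma stir_one (k : ℕ) : stirling1Unsigned (k+1) 1 = k.factorial := by
  induction k with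
  | zero => simp [stirling1Unsigned]
  | succ k ih => rw [stirling1Unsigned, ih, stir_zero, Nat.factorial_succ]; simp

lemma stir_gt (k l : ℕ) (h : k < l) : stirling1Unsigned k l = 0 := by
  induction k generalizing l with
  | zero => cases l with
    | zero => omega
    | succ l => simp [stirling1Unsigned]
  | succ k ih => cases l with
    | zero => omega
    | succ l => rw [stirling1Unsigned, ih l (by omega), ih (l+1) (by omega)]; simp

lemma poch_eq (z : ℂ) (k : ℕ) :
    ∏ i ∈ range k, (z + i) = ∑ l ∈ range (k+1), (stirling1Unsigned k l : ℂ) * z ^ l := by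
  induction k with
  | zero => simp [stirling1Unsigned]
  | succ k ih =>
    rw [prod_range_succ, ih, sum_range_succ' _ (k+1)]
    have e : ∀ l, (stirling1Unsigned (k+1) (l+1) : ℂ) * z ^ (l+1)
      = (stirling1Unsigned k l : ℂ) * z ^ l * z + k * ((stirling1Unsigned k (l+1) : ℂ) * z ^ (l+1)) := by
      intro l
      rw [stirling1Unsigned]; push_cast; ring
    simp only [e]
    rw [sum_add_distrib, ← sum_mul, ← mul_sum, mul_add]
    have h2 := sum_range_succ' (fun l => (stirling1Unsigned k l : ℂ) * z ^ l) (k+1)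
    rw [sum_range_succ, stir_gt k (k+1) (by omega)] at h2
    simp only [Nat.cast_zero, zero_mul, add_zero] at h2
    have h3 : (stirling1Unsigned (k+1) 0 : ℂ) = k * stirling1Unsigned k 0 := by
      rw [stirling1Unsigned]; push_cast; ring
    rw [h3, h2]
    ring

lemma DD_eq (k : ℕ) (z : ℂ) :
    DD k z = ∑ l ∈ Icc 2 (k+1), (stirling1Unsigned (k+1) l : ℂ) * z ^ l := by
  have h1 := poch_eq z (k+1)
  have h2 : ∏ i ∈ range (k+1), (z + i) = (k.factorial : ℂ) * z * qq z k := by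
    clear h1
    induction k with
    | zero => simp [qq]
    | succ k ih =>
      rw [prod_range_succ, ih, qq, qq, prod_range_succ, Nat.factorial_succ]
      have : (k : ℂ) + 1 ≠ 0 := by exact_mod_cast k.succ_ne_zero
      push_cast
      field_simp
      ring
  rw [h2, range_eq_Ico, sum_eq_sum_Ico_succ_bot (by omega), sum_eq_sum_Ico_succ_bot (by omega)] at h1
  rw [stir_zero, stir_one] at h1
  have e : Icc 2 (k+1) = Ico 2 (k+1+1) := by ext; simp
  rw [e, DD]
  simp only [Nat.cast_zero, zero_mul, zero_add, pow_one] at h1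
  linear_combination h1

lemma choose_one : cchoose ((3:ℂ)/2) 1 = 3/2 := by simp [cchoose]

lemma choose_gamma (l : ℕ) :
    cchoose ((3:ℂ)/2) (l+2) * (-1) ^ (l+2) * ((l+2).factorial : ℂ)
      = 3 / (4 * Real.sqrt Real.pi) * (Real.Gamma ((l:ℝ) + 2 - 3/2) : ℂ) := by
  have hf : ((l+2).factorial : ℂ) ≠ 0 := by exact_mod_cast (Nat.factorial_ne_zero _)
  rw [cchoose, mul_right_comm, div_mul_cancel₀ _ hf]
  clear hf
  have hs : ((Real.sqrt Real.pi : ℝ) : ℂ) ≠ 0 := by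
    exact_mod_cast (Real.sqrt_pos.mpr Real.pi_pos).ne'
  induction l with
  | zero =>
    rw [show ((0:ℕ):ℝ) + 2 - 3/2 = 1/2 by norm_num, Real.Gamma_one_half_eq]
    simp [prod_range_succ]
    field_simp
    norm_num
  | succ l ih =>
    rw [prod_range_succ, pow_succ]
    have : Real.Gamma (((l+1:ℕ):ℝ) + 2 - 3/2) = ((l:ℝ) + 2 - 3/2) * Real.Gamma ((l:ℝ) + 2 - 3/2) := by
      rw [← Real.Gamma_add_one]
      · congr 1; push_cast; ring
      · have : (0:ℝ) ≤ l := Nat.cast_nonneg l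
        linarith
    rw [this]
    push_cast at ih ⊢
    linear_combination ((l:ℂ) + 2 - 3/2) * ih

lemma int_pow {l : ℕ} (hl : 2 ≤ l) :
    IntegrableOn (fun y : ℝ => y ^ (-5/2 : ℝ) * Real.exp (-y) * y ^ l) (Set.Ioi 0) ∧
    ∫ y in Set.Ioi (0:ℝ), y ^ (-5/2 : ℝ) * Real.exp (-y) * y ^ l = Real.Gamma ((l:ℝ) - 3/2) := by
  have h2 : (2:ℝ) ≤ l := by exact_mod_cast hl
  have hp : (0:ℝ) < (l:ℝ) - 3/2 := by linarith
  have e : ∀ y ∈ Set.Ioi (0:ℝ), Real.exp (-y) * y ^ ((l:ℝ) - 3/2 - 1) = y ^ (-5/2 : ℝ) * Real.exp (-y) * y ^ l := by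
    intro y hy
    rw [show (l:ℝ) - 3/2 - 1 = -5/2 + (l:ℝ) by ring, Real.rpow_add hy, Real.rpow_natCast]
    ring
  constructor
  · exact (Real.GammaIntegral_convergent hp).congr_fun e measurableSet_Ioi
  · rw [Real.Gamma_eq_integral hp]
    exact (setIntegral_congr_fun measurableSet_Ioi e).symm

noncomputable def gk (k : ℕ) (b : ℂ) (y : ℝ) : ℂ :=
  ((y ^ (-5/2 : ℝ) * Real.exp (-y) : ℝ) : ℂ) * DD k (y / b)

lemma gk_eq (k : ℕ) (b : ℂ) (y : ℝ) : gk k b y =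
    ∑ l ∈ Icc 2 (k+1), ((stirling1Unsigned (k+1) l : ℂ) / b ^ l) * ((y ^ (-5/2 : ℝ) * Real.exp (-y) * y ^ l : ℝ) : ℂ) := by
  rw [gk, DD_eq, mul_sum]
  refine sum_congr rfl fun l _ => ?_
  push_cast
  rw [div_pow]; ring

lemma gk_int (k : ℕ) (b : ℂ) : IntegrableOn (gk k b) (Set.Ioi 0) ∧
    ∫ y in Set.Ioi (0:ℝ), gk k b y =
      ∑ l ∈ Icc 2 (k+1), ((stirling1Unsigned (k+1) l : ℂ) / b ^ l) * (Real.Gamma ((l:ℝ) - 3/2) : ℂ) := by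
  have hi : ∀ l ∈ Icc 2 (k+1), Integrable (fun y : ℝ => ((stirling1Unsigned (k+1) l : ℂ) / b ^ l) * ((y ^ (-5/2 : ℝ) * Real.exp (-y) * y ^ l : ℝ) : ℂ)) (volume.restrict (Set.Ioi 0)) := by
    intro l hl
    have := (int_pow (mem_Icc.mp hl).1).1
    exact (this.ofReal (𝕜 := ℂ)).const_mul _
  have e : gk k b = fun y => ∑ l ∈ Icc 2 (k+1), ((stirling1Unsigned (k+1) l : ℂ) / b ^ l) * ((y ^ (-5/2 : ℝ) * Real.exp (-y) * y ^ l : ℝ) : ℂ) := by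
    funext y; exact gk_eq k b y
  rw [e]
  constructor
  · exact integrable_finsetSum _ hi
  · rw [integral_finsetSum _ hi]
    refine sum_congr rfl fun l hl => ?_
    rw [integral_const_mul, integral_complex_ofReal, (int_pow (mem_Icc.mp hl).1).2]

lemma bb_re (n : ℤ) : (bb n).re = 0 := by simp [bb]

lemma bb_norm (n : ℤ) : ‖bb n‖ = 2 * Real.pi * |(n:ℝ)| := by
  simp [bb, abs_of_pos Real.pi_pos]

lemma div_bb_re (y : ℝ) (n : ℤ) : ((y:ℂ) / bb n).re = 0 := by
  rw [Complex.div_re, bb_re]; simp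

lemma pi_norm_le {y : ℝ} (hy : 0 ≤ y) (n : ℤ) : Real.pi * ‖(y:ℂ) / bb n‖ ≤ y / 2 := by
  rcases eq_or_ne n 0 with h | h
  · subst h; simp [bb]; positivity
  rw [norm_div, bb_norm, Complex.norm_real, Real.norm_of_nonneg hy]
  have h1 : (1:ℝ) ≤ |(n:ℝ)| := by exact_mod_cast Int.one_le_abs h
  have hpi := Real.pi_pos
  rw [mul_div_assoc', div_le_div_iff₀ (by positivity) (by norm_num)]
  have : 0 ≤ y * Real.pi * (|(n:ℝ)| - 1) := mul_nonneg (by positivity) (by linarith)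
  linarith

noncomputable def C0 : ℝ := ∫ y in Set.Ioi (0:ℝ), y ^ (-1/2 : ℝ) * Real.exp (-(1/2 * y))

lemma C0_int {r : ℝ} (hr : 0 < r) : IntegrableOn (fun y : ℝ => y ^ (-1/2 : ℝ) * Real.exp (-(r * y))) (Set.Ioi 0) := by
  have := integrableOn_rpow_mul_exp_neg_mul_rpow (p := 1) (s := -1/2) (b := r) (by norm_num) (by norm_num) hr
  simpa using this

lemma gk_norm_le (k : ℕ) (n : ℤ) {y : ℝ} (hy : 0 < y) :
    ‖gk k (bb n) y‖ ≤ (k.factorial * hh k * (1 / ‖bb n‖ ^ 2)) * (y ^ (-1/2 : ℝ) * Real.exp (-(1/2 * y))) := by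
  have h1 := norm_DD_le (div_bb_re y n) k
  have h2 := pi_norm_le hy.le n
  rw [gk, norm_mul, Complex.norm_real, Real.norm_of_nonneg (by positivity)]
  have h3 : ‖(y:ℂ) / bb n‖ ^ 2 = y ^ 2 * (1 / ‖bb n‖ ^ 2) := by
    rw [norm_div, Complex.norm_real, Real.norm_of_nonneg hy.le]; ring
  rw [h3] at h1
  have h4 : y ^ (-1/2 : ℝ) = y ^ (-5/2 : ℝ) * y ^ 2 := by
    rw [← Real.rpow_natCast, ← Real.rpow_add hy]; norm_num
  have h5 : Real.exp (-(1/2 * y)) = Real.exp (-y) * Real.exp (y / 2) := by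
    rw [← Real.exp_add]; ring_nf
  have := hh_nonneg k
  calc _ ≤ y ^ (-5/2 : ℝ) * Real.exp (-y) * (k.factorial * hh k * (y ^ 2 * (1 / ‖bb n‖ ^ 2) * Real.exp (y / 2))) := by
        gcongr
        refine h1.trans ?_
        gcongr
    _ = _ := by rw [h4, h5]; ring

lemma gk_int_norm_le (k : ℕ) (n : ℤ) :
    ∫ y in Set.Ioi (0:ℝ), ‖gk k (bb n) y‖ ≤ (k.factorial * hh k * (1 / ‖bb n‖ ^ 2)) * C0 := by
  rw [C0, ← integral_const_mul]
  refine setIntegral_mono_on (gk_int k (bb n)).1.norm ((C0_int (by norm_num)).const_mul _) measurableSet_Ioi ?_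
  intro y hy
  exact gk_norm_le k n hy

lemma summable_bb : Summable (fun n : ℤ => 1 / ‖bb n‖ ^ 2) := by
  have := (Real.summable_one_div_int_pow (p := 2)).mpr (by norm_num)
  refine (this.mul_left (1 / (2 * Real.pi) ^ 2)).congr fun n => ?_
  rw [bb_norm, mul_pow (2 * Real.pi), sq_abs]
  ring

lemma hasSum_num (k : ℕ) {t : ℝ} (ht : t ∈ Set.Icc (0:ℝ) 1) :
    HasSum (fun n : ℤ => Complex.exp (bb n * t) * ∫ y in Set.Ioi (0:ℝ), gk k (bb n) y)
      (∑ l ∈ Icc 2 (k+1), (stirling1Unsigned (k+1) l : ℂ) * (Real.Gamma ((l:ℝ) - 3/2) : ℂ) * (-(bernPoly l t : ℂ) / l.factorial)) := by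
  have h := hasSum_sum (s := Icc 2 (k+1)) (fun l hl => (hasSum_bern (mem_Icc.mp hl).1 ht).mul_left ((stirling1Unsigned (k+1) l : ℂ) * (Real.Gamma ((l:ℝ) - 3/2) : ℂ)))
  refine hs_congr h (fun n => ?_) rfl
  rw [(gk_int k (bb n)).2, mul_sum]
  refine sum_congr rfl fun l _ => ?_
  ring

noncomputable def tm (x t : ℝ) (k : ℕ) : ℂ := (-1 : ℂ) ^ (k + 1) *
          (∑ l ∈ Icc 1 (k + 1),
            cchoose ((3 : ℂ) / 2) l * (S1 (k + 1) l : ℂ) * (bernPoly l t : ℂ)) /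
        risingProd (x : ℂ) (k + 1)

lemma tm_eq (x : ℝ) {t : ℝ} (ht : t ∈ Set.Icc (0:ℝ) 1) (k : ℕ) :
    tm x t k = -(3/2) * (bernPoly 1 t : ℂ) * (((k.factorial : ℝ) / risingProdR x (k+1) : ℝ) : ℂ)
      - 3 / (4 * Real.sqrt Real.pi) * ∑' n : ℤ, Complex.exp (bb n * t) * (∫ y in Set.Ioi (0:ℝ), gk k (bb n) y) / risingProd x (k+1) := by
  rw [tsum_div_const, (hasSum_num k ht).tsum_eq, tm]
  have e0 : Icc 1 (k+1) = Ico 1 (k+1+1) := by ext; simp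
  have e : Icc 2 (k+1) = Ico 2 (k+1+1) := by ext; simp
  have hS : ∀ l, (-1:ℂ) ^ (k+1) * (S1 (k+1) l : ℂ) = (-1) ^ l * stirling1Unsigned (k+1) l := by
    intro l
    rw [S1]; push_cast
    rw [pow_add (-1:ℂ) (k+1) l, ← mul_assoc, ← mul_assoc, ← pow_add]
    rw [← two_mul, pow_mul]; simp
  have h2 : (-1:ℂ) ^ (k+1) * (∑ l ∈ Ico 1 (k+1+1), cchoose ((3 : ℂ) / 2) l * (S1 (k + 1) l : ℂ) * (bernPoly l t : ℂ))
     = ∑ l ∈ Ico 1 (k+1+1), cchoose ((3 : ℂ) / 2) l * (-1) ^ l * stirling1Unsigned (k+1) l * (bernPoly l t : ℂ) := by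
    rw [mul_sum]
    refine sum_congr rfl fun l _ => ?_
    linear_combination cchoose ((3 : ℂ) / 2) l * (bernPoly l t : ℂ) * hS l
  rw [e0, h2, sum_eq_sum_Ico_succ_bot (by omega), choose_one, stir_one, e]
  have h3 : ∑ l ∈ Ico (1+1) (k+1+1), cchoose ((3 : ℂ) / 2) l * (-1) ^ l * stirling1Unsigned (k+1) l * (bernPoly l t : ℂ)
     = -(3 / (4 * Real.sqrt Real.pi) * ∑ l ∈ Ico 2 (k+1+1), (stirling1Unsigned (k+1) l : ℂ) * (Real.Gamma ((l:ℝ) - 3/2) : ℂ) * (-(bernPoly l t : ℂ) / l.factorial)) := by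
    rw [mul_sum, ← sum_neg_distrib]
    refine sum_congr rfl fun l hl => ?_
    obtain ⟨m, rfl⟩ : ∃ m, l = m + 2 := ⟨l - 2, by have := (mem_Ico.mp hl).1; omega⟩
    have hf : ((m+2).factorial : ℂ) ≠ 0 := by exact_mod_cast (Nat.factorial_ne_zero _)
    have := choose_gamma m
    rw [← eq_div_iff hf] at this
    rw [this]
    push_cast
    ring
  rw [h3, rp_eq]
  push_cast
  ring

lemma hasSum_int {x : ℝ} (hx : 0 < x) (n : ℤ) :
    HasSum (fun k : ℕ => (∫ y in Set.Ioi (0:ℝ), gk k (bb n) y) / risingProd x (k+1))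
      (∫ y in Set.Ioi (0:ℝ), ((y ^ (-5/2 : ℝ) * Real.exp (-y) : ℝ) : ℂ) * (((y:ℂ) / bb n) ^ 2 / (x * (x - y / bb n)))) := by
  have h := hasSum_integral_of_summable_integral_norm (μ := volume.restrict (Set.Ioi (0:ℝ)))
    (F := fun k y => gk k (bb n) y / risingProd x (k+1)) (fun k => (gk_int k (bb n)).1.div_const _) ?_
  · refine hs_congr h (fun k => ?_) ?_
    · rw [integral_div]
    · refine setIntegral_congr_fun measurableSet_Ioi fun y hy => ?_
      have := (hasSum_DD hx (div_bb_re y n)).mul_left ((y ^ (-5/2 : ℝ) * Real.exp (-y) : ℝ) : ℂ)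
      rw [← this.tsum_eq]
      simp only [gk, mul_div_assoc]
  · refine Summable.of_nonneg_of_le (fun k => integral_nonneg fun _ => norm_nonneg _) (fun k => ?_)
      ((summable_fac_hh hx).mul_right ((1 / ‖bb n‖ ^ 2) * C0))
    simp only [norm_div]
    rw [integral_div, rp_eq, Complex.norm_real, Real.norm_of_nonneg (rpR_pos hx _).le, div_mul_eq_mul_div]
    have := rpR_pos hx (k+1)
    gcongr
    refine (gk_int_norm_le k n).trans (le_of_eq ?_)
    ring

lemma partB {x : ℝ} (hx : 0 < x) {t : ℝ} (ht : t ∈ Set.Icc (0:ℝ) 1) :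
    HasSum (tm x t) (-(3/2) * (bernPoly 1 t : ℂ) / x - 3 / (4 * Real.sqrt Real.pi) * ∑' n : ℤ, Complex.exp (bb n * t) *
      ∫ y in Set.Ioi (0:ℝ), ((y ^ (-5/2 : ℝ) * Real.exp (-y) : ℝ) : ℂ) * (((y:ℂ) / bb n) ^ 2 / (x * (x - y / bb n)))) := by
  set W : ℕ → ℤ → ℂ := fun k n => Complex.exp (bb n * t) * (∫ y in Set.Ioi (0:ℝ), gk k (bb n) y) / risingProd x (k+1) with hW
  have hsW : Summable (Function.uncurry W) := by
    refine Summable.of_norm_bounded ((((summable_fac_hh hx).mul_right C0).mul_of_nonneg summable_bb ?_ ?_)) ?_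
    · intro k
      have := rpR_pos hx (k+1); have := hh_nonneg k
      have : 0 ≤ C0 := setIntegral_nonneg measurableSet_Ioi fun y (hy : 0 < y) => by positivity
      simp only [Pi.zero_apply]
      positivity
    · intro n; simp only [Pi.zero_apply]; positivity
    · rintro ⟨k, n⟩
      simp only [Function.uncurry, hW]
      rw [norm_div, norm_mul, rp_eq, Complex.norm_real, Real.norm_of_nonneg (rpR_pos hx _).le, Complex.norm_exp]
      have : (bb n * t).re = 0 := by rw [Complex.mul_re, bb_re]; simp
      rw [this, Real.exp_zero, one_mul]
      have h1 := (norm_integral_le_integral_norm (μ := volume.restrict (Set.Ioi (0:ℝ))) (gk k (bb n))).trans (gk_int_norm_le k n)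
      have := rpR_pos hx (k+1)
      calc _ ≤ (k.factorial * hh k * (1 / ‖bb n‖ ^ 2)) * C0 / risingProdR x (k+1) := by gcongr
        _ = _ := by ring
  have h1 : HasSum (fun k => ∑' n, W k n) (∑' n : ℤ, Complex.exp (bb n * t) *
      ∫ y in Set.Ioi (0:ℝ), ((y ^ (-5/2 : ℝ) * Real.exp (-y) : ℝ) : ℂ) * (((y:ℂ) / bb n) ^ 2 / (x * (x - y / bb n)))) := by
    have h2 : ∑' k, ∑' n, W k n = _ := hsW.tsum_comm.symm
    have h3 : Summable (fun k => ∑' n, W k n) := hsW.prod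
    convert h3.hasSum using 1
    rw [h2]
    refine tsum_congr fun n => ?_
    rw [← (hasSum_int hx n).tsum_eq, ← tsum_mul_left]
    refine tsum_congr fun k => ?_
    simp only [hW]; ring
  have h4 := (Complex.hasSum_ofReal.mpr (hasSum_fac hx)).mul_left (-(3/2) * (bernPoly 1 t : ℂ))
  have h5 := h4.sub (h1.mul_left (3 / (4 * Real.sqrt Real.pi) : ℂ))
  refine hs_congr h5 (fun k => ?_) ?_
  · rw [tm_eq x ht k]
  · push_cast; ring

end FH

namespace FH
open Finset Filter Topology MeasureTheory

noncomputable def kf (n : ℤ) (x w : ℝ) : ℂ :=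
  ((w ^ (-1/2 : ℝ) : ℝ) : ℂ) * Complex.exp ((bb n - w) * x) / (bb n * (bb n - w))

noncomputable def KK (n : ℤ) (x : ℝ) : ℂ := ∫ w in Set.Ioi (0:ℝ), kf n x w

lemma bb_zero : bb 0 = 0 := by simp [bb]

lemma bb_ne {n : ℤ} (hn : n ≠ 0) : bb n ≠ 0 := by
  simp [bb, Real.pi_ne_zero, hn]

lemma bb_norm_ge {n : ℤ} (hn : n ≠ 0) : 1 ≤ ‖bb n‖ := by
  rw [bb_norm]
  have h1 : (1:ℝ) ≤ |(n:ℝ)| := by exact_mod_cast Int.one_le_abs hn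
  nlinarith [Real.pi_gt_three]

lemma bb_sub_ne {n : ℤ} (hn : n ≠ 0) (w : ℝ) : bb n - w ≠ 0 := by
  intro h
  have h1 := congrArg Complex.im h
  simp [bb, Real.pi_ne_zero, hn] at h1

lemma norm_bb_sub_ge1 (n : ℤ) (w : ℝ) : ‖bb n‖ ≤ ‖bb n - w‖ := by
  have h1 : |(bb n - w).im| = ‖bb n‖ := by
    rw [bb_norm]
    simp [bb, abs_mul, abs_of_pos Real.pi_pos]
  rw [← h1]; exact Complex.abs_im_le_norm _

lemma norm_bb_sub_ge2 (n : ℤ) {w : ℝ} (hw : 0 ≤ w) : w ≤ ‖bb n - w‖ := by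
  have h1 : |(bb n - w).re| = w := by
    simp [bb_re, abs_of_nonneg hw]
  rw [← h1]
  conv_rhs => rw [← h1]
  convert Complex.abs_re_le_norm (bb n - w) using 2
  simp [bb_re, abs_of_nonneg hw]

noncomputable def GG (w : ℝ) : ℝ := w ^ (-1/2 : ℝ) * (max 1 w) ^ (-3/4 : ℝ)

lemma kf_bound (n : ℤ) {x w : ℝ} (hx : 0 ≤ x) (hw : 0 < w) :
    ‖kf n x w‖ ≤ ‖bb n‖ ^ (-5/4 : ℝ) * GG w := by
  have hm : (0:ℝ) < max 1 w := lt_max_of_lt_left one_pos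
  rcases eq_or_ne n 0 with h | hn
  · subst h
    simp only [kf, bb_zero, zero_mul, div_zero, norm_zero, GG]
    positivity
  have hb := bb_norm_ge hn
  have hb0 : 0 < ‖bb n‖ := by linarith
  rw [kf, norm_div, norm_mul, norm_mul, Complex.norm_real, Real.norm_of_nonneg (by positivity), Complex.norm_exp]
  have e1 : ((bb n - w) * x).re = - (w * x) := by simp [bb_re]
  have e2 : Real.exp (((bb n - w) * x).re) ≤ 1 := by
    rw [e1]; apply Real.exp_le_one_iff.mpr; have := mul_nonneg hw.le hx; linarith
  set M := ‖bb n - w‖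
  have g1 : ‖bb n‖ ≤ M := norm_bb_sub_ge1 n w
  have g2 : max 1 w ≤ M := max_le (hb.trans g1) (norm_bb_sub_ge2 n hw.le)
  have hM : 0 < M := hb0.trans_le g1
  have e3 : ‖bb n‖ ^ (1/4:ℝ) * (max 1 w) ^ (3/4:ℝ) ≤ M := by
    calc _ ≤ M ^ (1/4:ℝ) * M ^ (3/4:ℝ) := by gcongr
      _ = M := by rw [← Real.rpow_add hM]; norm_num
  calc _ ≤ w ^ (-1/2 : ℝ) * 1 / (‖bb n‖ * (‖bb n‖ ^ (1/4:ℝ) * (max 1 w) ^ (3/4:ℝ))) := by gcongr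
    _ = _ := by
      rw [GG, show (-5/4:ℝ) = -(1 + 1/4) by norm_num, show (-3/4:ℝ) = -(3/4) by norm_num,
        Real.rpow_neg hb0.le, Real.rpow_neg hm.le, Real.rpow_add hb0, Real.rpow_one]
      field_simp

lemma GG_int : IntegrableOn GG (Set.Ioi 0) := by
  rw [← Set.Ioc_union_Ioi_eq_Ioi (zero_le_one' ℝ)]
  refine IntegrableOn.union ?_ ?_
  · have h : IntegrableOn (fun w : ℝ => w ^ (-1/2:ℝ)) (Set.Ioc 0 1) := by
      have := intervalIntegral.intervalIntegrable_rpow' (a := 0) (b := 1) (r := -1/2) (by norm_num)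
      rwa [intervalIntegrable_iff_integrableOn_Ioc_of_le zero_le_one] at this
    refine h.congr_fun (fun w hw => ?_) measurableSet_Ioc
    simp [GG, max_eq_left hw.2]
  · have h := integrableOn_Ioi_rpow_of_lt (a := -5/4) (c := 1) (by norm_num) one_pos
    refine h.congr_fun (fun w hw => ?_) measurableSet_Ioi
    have hw' : 1 < w := hw
    simp only [GG]
    rw [max_eq_right hw'.le, ← Real.rpow_add (by linarith)]
    norm_num

lemma kf_cont (n : ℤ) (x : ℝ) : ContinuousOn (kf n x) (Set.Ioi 0) := by
  rcases eq_or_ne n 0 with h | hn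
  · subst h
    have : kf 0 x = fun _ => 0 := by funext w; simp [kf, bb_zero]
    rw [this]; exact continuousOn_const
  unfold kf
  refine ContinuousOn.div ?_ (by fun_prop) (fun w _ => mul_ne_zero (bb_ne hn) (bb_sub_ne hn w))
  refine ContinuousOn.mul ?_ (by fun_prop)
  refine Complex.continuous_ofReal.comp_continuousOn ?_
  intro w hw
  exact (Real.continuousAt_rpow_const w _ (Or.inl (ne_of_gt hw))).continuousWithinAt

lemma kf_meas (n : ℤ) (x : ℝ) : AEStronglyMeasurable (kf n x) (volume.restrict (Set.Ioi 0)) :=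
  (kf_cont n x).aestronglyMeasurable measurableSet_Ioi

lemma kf_int (n : ℤ) {x : ℝ} (hx : 0 ≤ x) : IntegrableOn (kf n x) (Set.Ioi 0) := by
  refine Integrable.mono' (GG_int.const_mul (‖bb n‖ ^ (-5/4 : ℝ))) (kf_meas n x) ?_
  filter_upwards [ae_restrict_mem measurableSet_Ioi] with w hw
  exact kf_bound n hx hw

lemma KK_cont (n : ℤ) : ContinuousOn (KK n) (Set.Ici 0) := by
  refine continuousOn_of_dominated (bound := fun w => ‖bb n‖ ^ (-5/4 : ℝ) * GG w) (fun x _ => kf_meas n x)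
    (fun x hx => ?_) (GG_int.const_mul _) ?_
  · filter_upwards [ae_restrict_mem measurableSet_Ioi] with w hw
    exact kf_bound n hx hw
  · refine Eventually.of_forall fun w => ?_
    unfold kf
    fun_prop

lemma KK_bound (n : ℤ) {x : ℝ} (hx : 0 ≤ x) :
    ‖KK n x‖ ≤ ‖bb n‖ ^ (-5/4 : ℝ) * ∫ w in Set.Ioi (0:ℝ), GG w := by
  rw [← integral_const_mul]
  refine norm_integral_le_of_norm_le (GG_int.const_mul _) ?_
  filter_upwards [ae_restrict_mem measurableSet_Ioi] with w hw
  exact kf_bound n hx hw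

lemma summable_bb' : Summable (fun n : ℤ => ‖bb n‖ ^ (-5/4 : ℝ)) := by
  have := Real.summable_abs_int_rpow (b := 5/4) (by norm_num)
  refine (this.mul_left ((2 * Real.pi) ^ (-5/4:ℝ))).congr fun n => ?_
  rw [bb_norm, Real.mul_rpow (by positivity) (abs_nonneg _)]
  norm_num

noncomputable def SK (x : ℝ) : ℂ := ∑' n : ℤ, KK n x

lemma SK_summable {x : ℝ} (hx : 0 ≤ x) : Summable (fun n : ℤ => KK n x) :=
  Summable.of_norm_bounded (summable_bb'.mul_right _) fun n => KK_bound n hx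

lemma SK_cont : ContinuousOn SK (Set.Ici 0) :=
  continuousOn_tsum KK_cont (summable_bb'.mul_right _) fun n _ hx => KK_bound n hx

lemma KK_deriv {n : ℤ} {x : ℝ} (hx : 0 < x) :
    HasDerivAt (KK n) (Real.sqrt Real.pi * ((x ^ (-1/2:ℝ) : ℝ) : ℂ) * (Complex.exp (bb n * x) / bb n)) x := by
  rcases eq_or_ne n 0 with h | hn
  · subst h
    have : KK 0 = fun _ => 0 := by funext w; simp [KK, kf, bb_zero]
    rw [this, bb_zero]; simpa using hasDerivAt_const x (0:ℂ)
  have key := hasDerivAt_integral_of_dominated_loc_of_deriv_le (μ := volume.restrict (Set.Ioi (0:ℝ)))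
    (F := fun x w => kf n x w) (x₀ := x) (s := Set.Ioi (x/2))
    (F' := fun x w => ((w ^ (-1/2 : ℝ) : ℝ) : ℂ) * Complex.exp ((bb n - w) * x) / bb n)
    (bound := fun w => w ^ (-1/2:ℝ) * Real.exp (-(x/2 * w)) / ‖bb n‖)
    (Ioi_mem_nhds (by linarith)) (Eventually.of_forall fun y => kf_meas n y) (kf_int n hx.le) ?_ ?_
    ((C0_int (by linarith)).div_const _) ?_
  · have h := key.2
    have e : ∫ w in Set.Ioi (0:ℝ), ((w ^ (-1/2 : ℝ) : ℝ) : ℂ) * Complex.exp ((bb n - w) * x) / bb n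
        = Real.sqrt Real.pi * ((x ^ (-1/2:ℝ) : ℝ) : ℂ) * (Complex.exp (bb n * x) / bb n) := by
      have h1 := Real.integral_rpow_mul_exp_neg_mul_Ioi (a := 1/2) (r := x) (by norm_num) hx
      rw [Real.Gamma_one_half_eq] at h1
      have h2 : ∀ w : ℝ, ((w ^ (-1/2 : ℝ) : ℝ) : ℂ) * Complex.exp ((bb n - w) * x) / bb n
        = ((w ^ ((1/2:ℝ) - 1) * Real.exp (-(x * w)) : ℝ) : ℂ) * (Complex.exp (bb n * x) / bb n) := by
        intro w
        rw [show (bb n - w) * x = bb n * x + (-(x * w : ℝ) : ℝ) by push_cast; ring, Complex.exp_add,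
          ← Complex.ofReal_exp, show (1/2:ℝ) - 1 = -1/2 by norm_num]
        push_cast; ring
      simp only [h2]
      rw [integral_mul_const, integral_complex_ofReal, h1]
      rw [one_div x, Real.inv_rpow hx.le, ← Real.rpow_neg hx.le]
      push_cast
      rw [show (-(1/2):ℝ) = -1/2 by norm_num]
      ring
    rw [← e]
    exact h
  · refine ContinuousOn.aestronglyMeasurable ?_ measurableSet_Ioi
    refine ContinuousOn.div_const ?_ _
    refine ContinuousOn.mul ?_ (by fun_prop)
    refine Complex.continuous_ofReal.comp_continuousOn ?_
    intro w hw
    exact (Real.continuousAt_rpow_const w _ (Or.inl (ne_of_gt hw))).continuousWithinAt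
  · filter_upwards [ae_restrict_mem measurableSet_Ioi] with w hw y hy
    have hw' : 0 < w := hw
    have hy' : x/2 < y := hy
    rw [norm_div, norm_mul, Complex.norm_real, Real.norm_of_nonneg (by positivity), Complex.norm_exp]
    have e1 : ((bb n - w) * y).re = - (y * w) := by simp [bb_re, mul_comm]
    rw [e1]
    gcongr
  · filter_upwards [ae_restrict_mem measurableSet_Ioi] with w hw y hy
    have hne := bb_sub_ne hn w
    have hb := bb_ne hn
    have h1 : HasDerivAt (fun y : ℝ => Complex.exp ((bb n - w) * y)) (Complex.exp ((bb n - w) * y) * ((bb n - w) * 1)) y :=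
      ((hasDerivAt_id y).ofReal_comp.const_mul (bb n - w)).cexp
    have h2 := (h1.const_mul ((w ^ (-1/2 : ℝ) : ℝ) : ℂ)).div_const (bb n * (bb n - w))
    refine h2.congr_deriv ?_
    field_simp

end FH

namespace FH
open Finset Filter Topology MeasureTheory

lemma exp_bb_nat (n : ℤ) (x : ℝ) (m : ℕ) : Complex.exp (bb n * x) = Complex.exp (bb n * (x - m : ℝ)) := by
  have : bb n * x = bb n * (x - m : ℝ) + ((n * m : ℤ) : ℂ) * (2 * Real.pi * Complex.I) := by
    simp only [bb]; push_cast; ring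
  rw [this, Complex.exp_add, Complex.exp_int_mul_two_pi_mul_I, mul_one]

lemma norm_exp_bb (n : ℤ) (x : ℝ) : ‖Complex.exp (bb n * x)‖ = 1 := by
  have : (bb n * x).re = 0 := by rw [Complex.mul_re, bb_re]; simp
  rw [Complex.norm_exp, this, Real.exp_zero]

lemma hasSum_two {m : ℕ} {x : ℝ} (hx : x ∈ Set.Icc (m:ℝ) (m+1)) :
    HasSum (fun n : ℤ => Complex.exp (bb n * x) / bb n ^ 2)
      ((-((x - m) ^ 2 - (x - m) + 6⁻¹) / 2 : ℝ) : ℂ) := by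
  have h := hasSum_bern (l := 2) le_rfl (t := x - m) ⟨by linarith [hx.1], by linarith [hx.2]⟩
  refine hs_congr h (fun n => ?_) ?_
  · rw [exp_bb_nat n x m]
  · rw [bernPoly_eq, bernoulliFun_two]; push_cast; norm_num

noncomputable def MM (n : ℤ) (x : ℝ) : ℂ :=
  KK n x - Real.sqrt Real.pi * ((x ^ (-1/2:ℝ) : ℝ) : ℂ) * (Complex.exp (bb n * x) / bb n ^ 2)

lemma MM_deriv (n : ℤ) {x : ℝ} (hx : 0 < x) :
    HasDerivAt (MM n) (Real.sqrt Real.pi * ((1/2 * x ^ (-3/2:ℝ) : ℝ) : ℂ) * (Complex.exp (bb n * x) / bb n ^ 2)) x := by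
  have h1 := KK_deriv (n := n) hx
  have h2 : HasDerivAt (fun x : ℝ => x ^ (-1/2:ℝ)) (-1/2 * x ^ (-3/2:ℝ)) x := by
    have := Real.hasDerivAt_rpow_const (x := x) (p := -1/2) (Or.inl hx.ne')
    rw [show (-1/2 - 1 : ℝ) = -3/2 by norm_num] at this
    exact this
  have h3 : HasDerivAt (fun y : ℝ => Complex.exp (bb n * y)) (Complex.exp (bb n * x) * (bb n * 1)) x :=
      ((hasDerivAt_id x).ofReal_comp.const_mul (bb n)).cexp
  have h4 := h1.sub ((h2.ofReal_comp.const_mul (Real.sqrt Real.pi : ℂ)).mul (h3.div_const (bb n ^ 2)))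
  refine h4.congr_deriv ?_
  rcases eq_or_ne n 0 with h | hn
  · subst h; simp [bb_zero]
  · have := bb_ne hn
    push_cast
    field_simp
    ring

lemma SK_deriv {m : ℕ} {x : ℝ} (hx : x ∈ Set.Ioo (m:ℝ) (m+1)) :
    HasDerivAt SK ((-(Real.sqrt Real.pi * x ^ (-1/2:ℝ) * (x - m - 1/2)) : ℝ) : ℂ) x := by
  have hx0 : 0 < x := lt_of_le_of_lt (Nat.cast_nonneg m) hx.1
  have hsM : ∀ y : ℝ, y ∈ Set.Ioo (m:ℝ) (m+1) → HasSum (fun n => MM n y)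
     (SK y - Real.sqrt Real.pi * ((y ^ (-1/2:ℝ) : ℝ) : ℂ) * ((-((y - m) ^ 2 - (y - m) + 6⁻¹) / 2 : ℝ) : ℂ)) := by
    intro y hy
    have hy0 : 0 < y := lt_of_le_of_lt (Nat.cast_nonneg m) hy.1
    exact (SK_summable hy0.le).hasSum.sub ((hasSum_two (Set.Ioo_subset_Icc_self hy)).mul_left _)
  have hd := hasDerivAt_tsum_of_isPreconnected (𝕜 := ℝ) (g := MM) (t := Set.Ioi (x/2)) (y₀ := x) (y := x)
    (g' := fun n x => (Real.sqrt Real.pi * ((1/2 * x ^ (-3/2:ℝ) : ℝ) : ℂ) * (Complex.exp (bb n * x) / bb n ^ 2)))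
    (u := fun n => (Real.sqrt Real.pi * (1/2 * (x/2) ^ (-3/2:ℝ))) * (1 / ‖bb n‖ ^ 2))
    (summable_bb.mul_left _) isOpen_Ioi isPreconnected_Ioi
    (fun n y hy => MM_deriv n (lt_trans (by positivity) hy)) ?_ (show x/2 < x by linarith) (hsM x hx).summable
    (show x/2 < x by linarith)
  · rw [tsum_mul_left, (hasSum_two (Set.Ioo_subset_Icc_self hx)).tsum_eq] at hd
    have h2 : HasDerivAt (fun x : ℝ => x ^ (-1/2:ℝ)) (-1/2 * x ^ (-3/2:ℝ)) x := by
      have := Real.hasDerivAt_rpow_const (x := x) (p := -1/2) (Or.inl hx0.ne')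
      rw [show (-1/2 - 1 : ℝ) = -3/2 by norm_num] at this
      exact this
    have h3 : HasDerivAt (fun y : ℝ => -((y - m) ^ 2 - (y - m) + 6⁻¹) / 2) (-(2 * (x - m) - 1) / 2) x := by
      have h0 := (hasDerivAt_id x).sub_const (m:ℝ)
      have := ((((h0.pow 2).sub h0).add_const (6⁻¹:ℝ)).neg).div_const 2
      refine this.congr_deriv ?_
      simp
    have h4 := hd.add ((h2.mul h3).ofReal_comp.const_mul (Real.sqrt Real.pi : ℂ))
    refine (h4.congr_deriv ?_).congr_of_eventuallyEq ?_
    · push_cast; ring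
    · filter_upwards [Ioo_mem_nhds hx.1 hx.2] with y hy
      simp only [Pi.add_apply, Pi.mul_apply]
      rw [(hsM y hy).tsum_eq]
      push_cast; ring
  · intro n y hy
    have hy' : x/2 < y := hy
    have hy0 : 0 < y := by linarith
    rw [norm_mul, norm_mul, norm_div, norm_exp_bb, norm_pow, Complex.norm_real, Complex.norm_real,
      Real.norm_of_nonneg (by positivity), Real.norm_of_nonneg (by positivity)]
    have : y ^ (-3/2:ℝ) ≤ (x/2) ^ (-3/2:ℝ) :=
      Real.rpow_le_rpow_of_nonpos (by positivity) hy'.le (by norm_num)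
    gcongr

noncomputable def HH (m : ℕ) (x : ℝ) : ℂ :=
  ((∑ k ∈ Icc 1 m, Real.sqrt k - 2/3 * x ^ (3/2:ℝ) + (x - m - 1/2) * x ^ (1/2:ℝ) : ℝ) : ℂ)
    + SK x / (2 * Real.sqrt Real.pi)

lemma HH_cont (m : ℕ) : ContinuousOn (HH m) (Set.Icc m (m+1)) := by
  have h0 : Set.Icc (m:ℝ) (m+1) ⊆ Set.Ici 0 := fun y hy => (Nat.cast_nonneg m).trans hy.1
  have h1 := SK_cont.mono h0
  refine ContinuousOn.add ?_ (h1.div_const _)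
  refine Complex.continuous_ofReal.comp_continuousOn (Continuous.continuousOn ?_)
  have a1 : Continuous (fun x : ℝ => x ^ (3/2:ℝ)) := Real.continuous_rpow_const (by norm_num)
  have a2 : Continuous (fun x : ℝ => x ^ (1/2:ℝ)) := Real.continuous_rpow_const (by norm_num)
  fun_prop

lemma HH_deriv {m : ℕ} {x : ℝ} (hx : x ∈ Set.Ioo (m:ℝ) (m+1)) : HasDerivAt (HH m) 0 x := by
  have hx0 : 0 < x := lt_of_le_of_lt (Nat.cast_nonneg m) hx.1
  have a1 : HasDerivAt (fun x : ℝ => x ^ (3/2:ℝ)) (3/2 * x ^ (1/2:ℝ)) x := by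
    have := Real.hasDerivAt_rpow_const (x := x) (p := 3/2) (Or.inl hx0.ne')
    rw [show (3/2 - 1 : ℝ) = 1/2 by norm_num] at this
    exact this
  have a2 : HasDerivAt (fun x : ℝ => x ^ (1/2:ℝ)) (1/2 * x ^ (-1/2:ℝ)) x := by
    have := Real.hasDerivAt_rpow_const (x := x) (p := 1/2) (Or.inl hx0.ne')
    rw [show (1/2 - 1 : ℝ) = -1/2 by norm_num] at this
    exact this
  have a3 : HasDerivAt (fun x : ℝ => x - m - 1/2) 1 x := ((hasDerivAt_id x).sub_const _).sub_const _
  have a4 := ((a1.const_mul (2/3)).const_sub (∑ k ∈ Icc 1 m, Real.sqrt k)).add (a3.mul a2)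
  have a5 := a4.ofReal_comp.add ((SK_deriv hx).div_const (2 * Real.sqrt Real.pi : ℂ))
  refine a5.congr_deriv ?_
  have hs : ((Real.sqrt Real.pi : ℝ) : ℂ) ≠ 0 := by
    exact_mod_cast (Real.sqrt_pos.mpr Real.pi_pos).ne'
  push_cast
  field_simp
  ring

lemma HH_const {m : ℕ} {x : ℝ} (hx : x ∈ Set.Icc (m:ℝ) (m+1)) : HH m x = HH m m := by
  have := intervalIntegral.integral_eq_sub_of_hasDerivAt_of_le hx.1
    ((HH_cont m).mono (Set.Icc_subset_Icc_right hx.2)) (f' := fun _ => 0)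
    (fun y hy => HH_deriv ⟨hy.1, lt_of_lt_of_le hy.2 hx.2⟩) (by simp)
  simp at this
  exact (sub_eq_zero.mp this.symm)

lemma HH_step (m : ℕ) : HH (m+1) ((m+1 : ℕ) : ℝ) = HH m ((m+1 : ℕ) : ℝ) := by
  simp only [HH]
  rw [Finset.sum_Icc_succ_top (by omega), Real.sqrt_eq_rpow]
  push_cast
  ring

lemma HH_zero (m : ℕ) : HH m m = SK 0 / (2 * Real.sqrt Real.pi) := by
  induction m with
  | zero => simp [HH, Real.zero_rpow]
  | succ m ih =>
    rw [HH_step, HH_const, ih]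
    push_cast
    constructor <;> linarith

end FH

namespace FH
open Finset Filter Topology MeasureTheory

noncomputable def prim (r : ℝ) : ℝ :=
  (1 / Real.sqrt 2) * (Real.arctan (Real.sqrt 2 * r + 1) + Real.arctan (Real.sqrt 2 * r - 1))
   + (1 / (2 * Real.sqrt 2)) * (Real.log (r ^ 2 + Real.sqrt 2 * r + 1) - Real.log (r ^ 2 - Real.sqrt 2 * r + 1))

lemma sq2 : Real.sqrt 2 ^ 2 = 2 := Real.sq_sqrt (by norm_num)

lemma q1_pos (r : ℝ) : 0 < r ^ 2 + Real.sqrt 2 * r + 1 := by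
  nlinarith [sq_nonneg (Real.sqrt 2 * r + 1), sq2]

lemma q2_pos (r : ℝ) : 0 < r ^ 2 - Real.sqrt 2 * r + 1 := by
  nlinarith [sq_nonneg (Real.sqrt 2 * r - 1), sq2]

lemma prim_deriv (r : ℝ) : HasDerivAt prim (2 / (1 + r ^ 4)) r := by
  have h1 : HasDerivAt (fun r : ℝ => Real.sqrt 2 * r + 1) (Real.sqrt 2 * 1) r :=
    ((hasDerivAt_id r).const_mul _).add_const _
  have h2 : HasDerivAt (fun r : ℝ => Real.sqrt 2 * r - 1) (Real.sqrt 2 * 1) r :=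
    ((hasDerivAt_id r).const_mul _).sub_const _
  have h3 : HasDerivAt (fun r : ℝ => r ^ 2 + Real.sqrt 2 * r + 1) (2 * r + Real.sqrt 2 * 1) r := by
    have := ((hasDerivAt_pow 2 r).add ((hasDerivAt_id r).const_mul (Real.sqrt 2))).add_const (1:ℝ)
    simpa using this
  have h4 : HasDerivAt (fun r : ℝ => r ^ 2 - Real.sqrt 2 * r + 1) (2 * r - Real.sqrt 2 * 1) r := by
    have := ((hasDerivAt_pow 2 r).sub ((hasDerivAt_id r).const_mul (Real.sqrt 2))).add_const (1:ℝ)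
    simpa using this
  have p1 := q1_pos r
  have p2 := q2_pos r
  have h5 := ((h1.arctan.add h2.arctan).const_mul (1 / Real.sqrt 2)).add
    (((h3.log p1.ne').sub (h4.log p2.ne')).const_mul (1 / (2 * Real.sqrt 2)))
  refine h5.congr_deriv ?_
  have s0 : Real.sqrt 2 ≠ 0 := by positivity
  have e1 : 1 + (Real.sqrt 2 * r + 1) ^ 2 = 2 * (r ^ 2 + Real.sqrt 2 * r + 1) := by
    linear_combination r ^ 2 * sq2
  have e2 : 1 + (Real.sqrt 2 * r - 1) ^ 2 = 2 * (r ^ 2 - Real.sqrt 2 * r + 1) := by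
    linear_combination r ^ 2 * sq2
  have e3 : 1 + r ^ 4 = (r ^ 2 + Real.sqrt 2 * r + 1) * (r ^ 2 - Real.sqrt 2 * r + 1) := by
    linear_combination r ^ 2 * sq2
  rw [e1, e2, e3]
  have n1 := p1.ne'
  have n2 := p2.ne'
  set A := r ^ 2 + Real.sqrt 2 * r + 1 with hA
  set B := r ^ 2 - Real.sqrt 2 * r + 1 with hB
  field_simp
  rw [hA, hB]
  ring

lemma prim_tendsto : Tendsto prim atTop (𝓝 (Real.pi / Real.sqrt 2)) := by
  have s0 : 0 < Real.sqrt 2 := by positivity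
  have l0 : Tendsto (fun r : ℝ => Real.sqrt 2 * r) atTop atTop := tendsto_id.const_mul_atTop s0
  have l1 : Tendsto (fun r : ℝ => Real.arctan (Real.sqrt 2 * r + 1)) atTop (𝓝 (Real.pi / 2)) :=
    (tendsto_nhds_of_tendsto_nhdsWithin Real.tendsto_arctan_atTop).comp (tendsto_atTop_add_const_right _ _ l0)
  have l2 : Tendsto (fun r : ℝ => Real.arctan (Real.sqrt 2 * r - 1)) atTop (𝓝 (Real.pi / 2)) :=
    (tendsto_nhds_of_tendsto_nhdsWithin Real.tendsto_arctan_atTop).comp (tendsto_atTop_add_const_right _ (-1) l0)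
  have i0 : Tendsto (fun r : ℝ => r⁻¹) atTop (𝓝 0) := tendsto_inv_atTop_zero
  have l3 : Tendsto (fun r : ℝ => Real.log (1 + Real.sqrt 2 * r⁻¹ + r⁻¹ ^ 2) - Real.log (1 - Real.sqrt 2 * r⁻¹ + r⁻¹ ^ 2))
      atTop (𝓝 0) := by
    have c : ContinuousAt (fun y : ℝ => Real.log (1 + Real.sqrt 2 * y + y ^ 2) - Real.log (1 - Real.sqrt 2 * y + y ^ 2)) 0 := by
      apply ContinuousAt.sub
      · exact ContinuousAt.log (by fun_prop) (by simp)
      · exact ContinuousAt.log (by fun_prop) (by simp)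
    have := c.tendsto.comp i0
    simpa [Function.comp_def] using this
  have l4 : Tendsto (fun r : ℝ => Real.log (r ^ 2 + Real.sqrt 2 * r + 1) - Real.log (r ^ 2 - Real.sqrt 2 * r + 1)) atTop (𝓝 0) := by
    refine l3.congr' ?_
    filter_upwards [eventually_gt_atTop 0] with r hr
    have hr2 : r ^ 2 ≠ 0 := by positivity
    have e1 : r ^ 2 + Real.sqrt 2 * r + 1 = r ^ 2 * (1 + Real.sqrt 2 * r⁻¹ + r⁻¹ ^ 2) := by field_simp
    have e2 : r ^ 2 - Real.sqrt 2 * r + 1 = r ^ 2 * (1 - Real.sqrt 2 * r⁻¹ + r⁻¹ ^ 2) := by field_simp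
    have p1 := q1_pos r
    have p2 := q2_pos r
    rw [e1] at p1
    rw [e2] at p2
    rw [e1, e2, Real.log_mul hr2 (by intro h; rw [h] at p1; simp at p1), Real.log_mul hr2 (by intro h; rw [h] at p2; simp at p2)]
    ring
  have := ((l1.add l2).const_mul (1 / Real.sqrt 2)).add (l4.const_mul (1 / (2 * Real.sqrt 2)))
  refine this.trans_eq ?_
  congr 1; ring

lemma int_quartic : ∫ s in Set.Ioi (0:ℝ), s ^ (-1/2:ℝ) / (1 + s ^ 2) = Real.pi / Real.sqrt 2 := by
  rw [← integral_comp_rpow_Ioi_of_pos (g := fun s : ℝ => s ^ (-1/2:ℝ) / (1 + s ^ 2)) (p := 2) (by norm_num)]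
  have h := integral_Ioi_of_hasDerivAt_of_nonneg' (a := 0) (fun r _ => prim_deriv r) (fun r _ => by positivity) prim_tendsto
  have p0 : prim 0 = 0 := by simp [prim]
  rw [p0, sub_zero] at h
  rw [← h]
  refine setIntegral_congr_fun measurableSet_Ioi fun r hr => ?_
  have hr' : 0 < r := hr
  have e1 : (r ^ (2:ℝ)) ^ (-1/2:ℝ) = r⁻¹ := by
    rw [← Real.rpow_mul hr'.le, ← Real.rpow_neg_one]; norm_num
  have e2 : r ^ ((2:ℝ) - 1) = r := by norm_num
  have e3 : (r ^ (2:ℝ)) ^ 2 = r ^ 4 := by rw [Real.rpow_two]; ring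
  simp only [smul_eq_mul]
  rw [e1, e2, e3]
  field_simp

lemma int_c {c : ℝ} (hc : 0 < c) : ∫ w in Set.Ioi (0:ℝ), w ^ (-1/2:ℝ) / (c ^ 2 + w ^ 2) = c ^ (-3/2:ℝ) * (Real.pi / Real.sqrt 2) := by
  have h := integral_comp_mul_left_Ioi (fun w : ℝ => w ^ (-1/2:ℝ) / (c ^ 2 + w ^ 2)) 0 hc
  rw [mul_zero, smul_eq_mul, inv_mul_eq_div, eq_div_iff hc.ne'] at h
  rw [← h, ← int_quartic, ← integral_mul_const, ← integral_const_mul]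
  refine setIntegral_congr_fun measurableSet_Ioi fun s hs => ?_
  have hs' : 0 < s := hs
  beta_reduce
  rw [Real.mul_rpow hc.le hs'.le, show (-1/2:ℝ) = -3/2 + 1 by norm_num, Real.rpow_add hc, Real.rpow_one]
  field_simp

lemma KK_pair (n : ℕ) : KK n 0 + KK (-(n:ℤ)) 0 = -(1 / (2 * Real.sqrt Real.pi)) * (1 / (n:ℂ) ^ ((3:ℂ)/2)) := by
  rcases Nat.eq_zero_or_pos n with h | hn
  · subst h; simp [KK, kf, bb_zero]
  have hn0 : (n:ℤ) ≠ 0 := by exact_mod_cast hn.ne'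
  have hn0' : (-(n:ℤ)) ≠ 0 := by simpa using hn.ne'
  have hnr : (0:ℝ) < n := by exact_mod_cast hn
  rw [KK, KK, ← integral_add (kf_int _ le_rfl) (kf_int _ le_rfl)]
  have hc : 0 < 2 * Real.pi * n := by have := Real.pi_pos; positivity
  have e : ∀ w : ℝ, kf n 0 w + kf (-(n:ℤ)) 0 w = ((-2 * (w ^ (-1/2:ℝ) / ((2 * Real.pi * n) ^ 2 + w ^ 2)) : ℝ) : ℂ) := by
    intro w
    have b1 := bb_ne hn0
    have b2 := bb_sub_ne hn0 w
    have b3 := bb_sub_ne hn0' w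
    have b4 : bb (-(n:ℤ)) = - bb n := by simp [bb]
    have b5 : bb n ^ 2 = -((2 * Real.pi * n) ^ 2 : ℂ) := by
      simp only [bb]; push_cast; linear_combination (2 * Real.pi * n : ℂ) ^ 2 * Complex.I_sq
    have b6 : ((2 * Real.pi * n) ^ 2 + w ^ 2 : ℂ) = -((bb n - w) * (bb n + w)) := by
      linear_combination b5
    rw [b4] at b3
    have b7 : bb n + w ≠ 0 := by
      intro h; apply b3; linear_combination -h
    simp only [kf, b4]
    push_cast
    rw [b6]
    simp only [mul_zero, Complex.exp_zero, mul_one]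
    have b8 : -bb n - w = -(bb n + w) := by ring
    rw [b8]
    field_simp
    ring
  simp only [e]
  rw [integral_complex_ofReal, integral_const_mul, int_c hc]
  have hcp : ((n:ℂ)) ^ ((3:ℂ)/2) = (((n:ℝ) ^ (3/2:ℝ) : ℝ) : ℂ) := by
    rw [Complex.ofReal_cpow hnr.le]; push_cast; rfl
  have hreal : -2 * ((2 * Real.pi * n) ^ (-3/2:ℝ) * (Real.pi / Real.sqrt 2)) = -(1 / (2 * Real.sqrt Real.pi)) * (1 / (n:ℝ) ^ (3/2:ℝ)) := by
    rw [show (-3/2:ℝ) = -(3/2) by norm_num, Real.rpow_neg hc.le, Real.mul_rpow (by positivity) hnr.le,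
      Real.mul_rpow (by norm_num) Real.pi_pos.le]
    have t1 : ∀ y : ℝ, 0 < y → y ^ (3/2:ℝ) = y * Real.sqrt y := by
      intro y hy
      rw [Real.sqrt_eq_rpow, show (3/2:ℝ) = 1 + 1/2 by norm_num, Real.rpow_add hy, Real.rpow_one]
    rw [t1 2 (by norm_num), t1 _ Real.pi_pos]
    have hpi := Real.pi_pos
    have s1 := Real.sqrt_pos.mpr hpi
    have s2 : 0 < Real.sqrt 2 := by positivity
    have s3 : 0 < (n:ℝ) ^ (3/2:ℝ) := by positivity
    field_simp
    rw [sq2]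
    try norm_num
  rw [hcp, hreal]
  push_cast
  rfl

lemma SK_zero : SK 0 = -(1 / (2 * Real.sqrt Real.pi)) * riemannZeta (3/2) := by
  have h := (SK_summable le_rfl).hasSum.nat_add_neg
  have k0 : KK 0 0 = 0 := by simp [KK, kf, bb_zero]
  rw [k0, add_zero] at h
  rw [zeta_eq_tsum_one_div_nat_cpow (by norm_num), ← tsum_mul_left, SK, ← h.tsum_eq]
  exact tsum_congr KK_pair

lemma KK_subst (n : ℤ) {x : ℝ} (hx : 0 < x) :
    ((x ^ (3/2:ℝ) : ℝ) : ℂ) * (Complex.exp (bb n * x) *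
      ∫ y in Set.Ioi (0:ℝ), ((y ^ (-5/2 : ℝ) * Real.exp (-y) : ℝ) : ℂ) * (((y:ℂ) / bb n) ^ 2 / (x * (x - y / bb n))))
      = KK n x := by
  rcases eq_or_ne n 0 with h | hn
  · subst h; simp [KK, kf, bb_zero]
  have h := integral_comp_mul_left_Ioi (fun y : ℝ => ((y ^ (-5/2 : ℝ) * Real.exp (-y) : ℝ) : ℂ) * (((y:ℂ) / bb n) ^ 2 / (x * (x - y / bb n)))) 0 hx
  have hxc : (x:ℂ) ≠ 0 := by exact_mod_cast hx.ne'
  rw [mul_zero, Complex.real_smul, Complex.ofReal_inv, inv_mul_eq_div, eq_div_iff hxc] at h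
  rw [← h, KK, ← integral_mul_const, ← integral_const_mul, ← integral_const_mul]
  refine setIntegral_congr_fun measurableSet_Ioi fun w hw => ?_
  have hw' : 0 < w := hw
  have hwc : (w:ℂ) ≠ 0 := by exact_mod_cast hw'.ne'
  have b1 := bb_ne hn
  have b2 := bb_sub_ne hn w
  simp only [kf]
  have e1 : (x * w) ^ (-5/2:ℝ) = (x ^ (3/2:ℝ))⁻¹ * x⁻¹ * (w ^ (-1/2:ℝ) / w ^ 2) := by
    rw [Real.mul_rpow hx.le hw'.le, show (-5/2:ℝ) = -(3/2) + -1 by norm_num, Real.rpow_add hx, Real.rpow_neg hx.le,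
      Real.rpow_neg_one, ← Real.rpow_natCast w 2, ← Real.rpow_sub hw']
    norm_num
  have e2 : Complex.exp ((bb n - w) * x) = Complex.exp (bb n * x) * ((Real.exp (-(x * w)) : ℝ) : ℂ) := by
    rw [Complex.ofReal_exp, ← Complex.exp_add]; congr 1; push_cast; ring
  rw [e1, e2]
  have e3 : ((x ^ (3/2:ℝ) : ℝ) : ℂ) ≠ 0 := by
    have : 0 < x ^ (3/2:ℝ) := by positivity
    exact_mod_cast this.ne'
  have e4 : (x:ℂ) - (x * w : ℝ) / bb n = x * (bb n - w) / bb n := by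
    push_cast; field_simp
  rw [e4]
  push_cast
  field_simp

end FH

open Finset Real in
/-- Extended generalized Faulhaber summation formula for the sum of square roots
(summation formula 3, formula (49) of the paper). -/
theorem extended_faulhaber_sqrt (x : ℝ) (hx : 0 < x) :
    Summable (fun k : ℕ =>
      ‖(-1 : ℂ) ^ (k + 1) *
          (∑ l ∈ Icc 1 (k + 1),
            cchoose ((3 : ℂ) / 2) l * (S1 (k + 1) l : ℂ) * (bernPoly l (Int.fract x) : ℂ)) /
        risingProd (x : ℂ) (k + 1)‖) ∧
    ((∑ k ∈ Icc 1 ⌊x⌋₊, Real.sqrt k : ℝ) : ℂ) =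
      2 / 3 * (x : ℂ) ^ ((3 : ℂ) / 2) - 1 / (4 * (π : ℂ)) * riemannZeta (3 / 2) +
        2 / 3 * (x : ℂ) ^ ((3 : ℂ) / 2) *
          ∑' k : ℕ,
            (-1 : ℂ) ^ (k + 1) *
                (∑ l ∈ Icc 1 (k + 1),
                  cchoose ((3 : ℂ) / 2) l * (S1 (k + 1) l : ℂ) *
                    (bernPoly l (Int.fract x) : ℂ)) /
              risingProd (x : ℂ) (k + 1) := by
  have ht : Int.fract x ∈ Set.Icc (0:ℝ) 1 := ⟨Int.fract_nonneg x, (Int.fract_lt_one x).le⟩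
  have hB := FH.partB hx ht
  refine ⟨hB.summable.norm, ?_⟩
  have hT := hB.tsum_eq
  simp only [FH.tm] at hT
  rw [hT]
  set m := ⌊x⌋₊ with hm
  have hfr : Int.fract x = x - m := by
    rw [hm, Int.fract, natCast_floor_eq_intCast_floor hx.le]
  have hmx : x ∈ Set.Icc (m:ℝ) (m+1) := ⟨Nat.floor_le hx.le, (Nat.lt_floor_add_one x).le⟩
  have hH := (FH.HH_const hmx).trans (FH.HH_zero m)
  rw [FH.SK_zero, FH.HH] at hH
  have hcp : ((x:ℂ)) ^ ((3:ℂ)/2) = ((x ^ (3/2:ℝ) : ℝ) : ℂ) := by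
    rw [Complex.ofReal_cpow hx.le]; push_cast; rfl
  have hS : ((x ^ (3/2:ℝ) : ℝ) : ℂ) * ∑' n : ℤ, Complex.exp (FH.bb n * (Int.fract x : ℝ)) *
      ∫ y in Set.Ioi (0:ℝ), ((y ^ (-5/2 : ℝ) * Real.exp (-y) : ℝ) : ℂ) * (((y:ℂ) / FH.bb n) ^ 2 / (x * (x - y / FH.bb n)))
      = FH.SK x := by
    rw [← tsum_mul_left, FH.SK]
    refine tsum_congr fun n => ?_
    rw [hfr, ← FH.exp_bb_nat, FH.KK_subst n hx]
  have hb1 : bernPoly 1 (Int.fract x) = x - m - 1/2 := by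
    rw [FH.bernPoly_eq, bernoulliFun_one, hfr]
  rw [hcp, hb1]
  have hxc : (x:ℂ) ≠ 0 := by exact_mod_cast hx.ne'
  have h32 : x ^ (3/2:ℝ) = x * x ^ (1/2:ℝ) := by
    rw [show (3/2:ℝ) = 1 + 1/2 by norm_num, Real.rpow_add hx, Real.rpow_one]
  have hs : ((Real.sqrt Real.pi : ℝ) : ℂ) ≠ 0 := by
    exact_mod_cast (Real.sqrt_pos.mpr Real.pi_pos).ne'
  have hpis : ((Real.sqrt Real.pi : ℝ) : ℂ) ^ 2 = (π:ℂ) := by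
    exact_mod_cast Real.sq_sqrt Real.pi_pos.le
  rw [← hpis]
  set T := ∑' n : ℤ, Complex.exp (FH.bb n * (Int.fract x : ℝ)) *
      ∫ y in Set.Ioi (0:ℝ), ((y ^ (-5/2 : ℝ) * Real.exp (-y) : ℝ) : ℂ) * (((y:ℂ) / FH.bb n) ^ 2 / (x * (x - y / FH.bb n)))
  rw [← hS] at hH
  have h32c : ((x ^ (3/2:ℝ) : ℝ) : ℂ) = x * ((x ^ (1/2:ℝ) : ℝ) : ℂ) := by rw [h32]; push_cast; rfl
  rw [Complex.ofReal_add, Complex.ofReal_sub, Complex.ofReal_mul, Complex.ofReal_mul, h32c] at hH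
  rw [h32c]
  generalize ((∑ k ∈ Icc 1 m, Real.sqrt k : ℝ) : ℂ) = S at hH ⊢
  generalize ((x ^ (1/2:ℝ) : ℝ) : ℂ) = R at hH ⊢
  push_cast at hH ⊢
  generalize riemannZeta (3/2) = Z at hH ⊢
  generalize ((Real.sqrt Real.pi : ℝ) : ℂ) = P at *
  have hh : S = -(1 / (2 * P)) * Z / (2 * P) + 2/3 * (x * R) - (x - m - 1/2) * R - x * R * T / (2 * P) := by
    linear_combination hH
  rw [hh]
  field_simp
  ring
end
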